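/- arXiv:2205.02145 — 2 statements merged into one kernel-verified Lean document; each statement's English description precedes it below -/
import Mathlib

section
/- Let f(z) = ∑_{n≥0} a_n z^n ∈ ℚ[[z]] be a D-finite power series whose associated complex series converges on the open unit disk, and suppose that for every nonzero polynomial P ∈ ℚ[z] the series ∑_{n≥0} P(n) a_n z^n is not a rational function (i.e. there do not exist u, v ∈ ℚ[z] with v ≠ 0 and v·(∑ P(n)a_n z^n) = u). Put d_n = den(a_n). Then there exists β > 1 such that for every set S ⊆ ℕ of zero density, lcm{d_i : i ≤ n, i ∉ S} > β^n for all sufficiently large n. -/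
/-!
The bound is proved by contradiction: a bound `L ≤ β ^ N` on the least common multiple
`L = lcmOutside _ S N`, for a single large `N`, produces a nonzero polynomial `P` for which
`∑ P(n) aₙ zⁿ` is rational.

*Analytic part.* Let `F` be the sum of `∑ aₙ zⁿ` in the unit disk. Its differential equation allows
it to be continued across the unit circle, except near the finitely many zeros of the leading
coefficient `A₀` (`exists_extension_ball`, `exists_extension_boundary`). By Dirichlet's theorem there
is an `m ≥ 1` such that `ζ ^ m` is close to `1` at the directions `ζ` of all these zeros
(`exists_near`). In Cauchy's formula for `∑ R.coeff n * a n`, where `R` is a polynomial, the contour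
can be pushed outside the unit circle on the arcs away from the zeros; hence this linear
functional is bounded by the supremum of `|R(w)|` over a disc `|w| ≤ exp (-τ / 32)` together with the
points `w` in a slightly larger disc than the unit disc such that `w ^ m` is close to `1`
(`linear_bound`). A polynomial `∑ yₙ wⁿ (1 - w ^ m) ^ k` with all `n ≥ ℓ k` is exponentially small in
`k` on both regions, and so is every coefficient in `x` of its image under `w ↦ w (1 + x)`. Therefore
all short integer combinations of the `k`-th differences, of step `m`, of the sequences
`binom(n, d) aₙ` are exponentially small (`diffSeq_bound`).

*Arithmetic part.* Let `S' = S ∩ [0, N]`, which has `o(N)` elements, and use `d ≤ 2 |S'|`. Among the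
vectors formed by these `k`-th differences, a set of `2 |S'| + 1` independent ones would yield, by
the pigeonhole principle, a nontrivial short integer combination in which no `aₛ` with `s ∈ S'`
occurs. Its entries have denominators dividing `L` and are smaller than `1 / L`, hence they vanish,
a contradiction. So the vectors lie in a hyperplane (`exists_relation`), which means that there is a
nonzero polynomial `P` of degree at most `2 |S'|` such that the `k`-th difference of `P(n) aₙ` vanishes
on a long interval: there, `P(n) aₙ` is a quasi-polynomial of period `m` and degree at most `k`
(`quasiPolynomial_of_diff`).

*Algebraic part.* The `aₙ` satisfy a linear recurrence with polynomial coefficients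
(`exists_recurrence`). As the interval is longer than the degrees involved, this recurrence holds
identically for the quasi-polynomial divided by `P`, so that the identity propagates to all large
`n`, after division by the factors of `P` with large integer roots (`rational_of_agree`). Generating
series of quasi-polynomials are rational, which contradicts the hypothesis.

The constants are chosen before `S` is given: the zeros of `A₀` determine `m` and `τ`, these determine
`ℓ`, then the ratio `K` of `N` to `k`, and finally a small `ρ`, which serves both as the radius `|x| = ρ`
in the Cauchy estimates and through `β = 1 + ρ`.
-/

open Filter Polynomial PowerSeries

/-- The upper density of a set of natural numbers. -/
noncomputable def upperDensity (S : Set ℕ) : ℝ :=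
  Filter.limsup (fun n => ((S ∩ Set.Icc 1 n).ncard : ℝ) / n) Filter.atTop

/-- `S ⊆ ℕ` has positive upper density. -/
def HasPosUpperDensity (S : Set ℕ) : Prop := 0 < upperDensity S

/-- `S ⊆ ℕ` has zero density. -/
def HasZeroDensity (S : Set ℕ) : Prop := upperDensity S = 0
/-- The formal derivative of a power series. -/
noncomputable def psDeriv {k : Type*} [Field k] : PowerSeries k → PowerSeries k :=
  PowerSeries.derivativeFun

/-- A power series is D-finite if it satisfies a nontrivial linear homogeneous
differential equation `A₀ f⁽ᵖ⁾ + A₁ f⁽ᵖ⁻¹⁾ + ⋯ + A_p f = 0` with polynomial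
coefficients and `A₀ ≠ 0`. -/
def IsDFinite {k : Type*} [Field k] (f : PowerSeries k) : Prop :=
  ∃ (p : ℕ) (A : Fin (p + 1) → Polynomial k), A 0 ≠ 0 ∧
    ∑ i : Fin (p + 1), (A i : PowerSeries k) * (psDeriv^[p - i.val] f) = 0
/-- The radius of convergence of the complex power series `∑ a_n z^n`. -/
noncomputable def seriesRadius (a : ℕ → ℂ) : ENNReal :=
  ⨆ (r : NNReal) (_ : ∃ C : ℝ, ∀ n, ‖a n‖ * (r : ℝ) ^ n ≤ C), (r : ENNReal)
open Classical in
/-- `lcm { d i : i ≤ n, i ∉ S }`. -/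
noncomputable def lcmOutside (d : ℕ → ℕ) (S : Set ℕ) (n : ℕ) : ℕ :=
  (Finset.range (n + 1)).lcm (fun i => if i ∈ S then 1 else d i)

/-! ### The recurrence for the coefficients -/

lemma coeff_psDeriv_iterate {k : Type*} [Field k] (f : PowerSeries k) (j n : ℕ) :
    PowerSeries.coeff n (psDeriv^[j] f)
      = ((n + j).descFactorial j : k) * PowerSeries.coeff (n + j) f := by
  induction j generalizing n with
  | zero => simp
  | succ j ih =>
    rw [Function.iterate_succ_apply']
    have : PowerSeries.coeff n (psDeriv (psDeriv^[j] f))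
        = PowerSeries.coeff (n + 1) (psDeriv^[j] f) * (n + 1) :=
      PowerSeries.coeff_derivative _ _
    rw [this, ih, Nat.descFactorial_succ]
    have h1 : n + 1 + j = n + (j + 1) := by ring
    have h2 : n + (j + 1) - j = n + 1 := by omega
    rw [h1, h2]
    push_cast
    ring

/-- The coefficients of a D-finite series are P-recursive, with nonzero extreme coefficients. -/
lemma exists_recurrence (a : ℕ → ℚ) (hDF : IsDFinite (PowerSeries.mk a)) :
    ∃ (r n₀ : ℕ) (Q : ℕ → ℚ[X]), Q 0 ≠ 0 ∧ Q r ≠ 0 ∧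
      ∀ n ≥ n₀, ∑ j ∈ Finset.range (r + 1), (Q j).eval (n : ℚ) * a (n + j) = 0 := by
  obtain ⟨p, A, hA0, hA⟩ := hDF
  obtain ⟨E, hE⟩ : ∃ E : ℕ, ∀ i, (A i).natDegree ≤ E :=
    ⟨Finset.univ.sup fun i => (A i).natDegree,
      fun i => Finset.le_sup (f := fun i => (A i).natDegree) (Finset.mem_univ i)⟩
  -- `q j` is the coefficient of `a (n + j)` in the coefficient of `z ^ (n + E)` of the equation.
  let q : ℕ → ℚ[X] := fun j => ∑ i : Fin (p + 1),
    if j ≤ E + (p - i.val) then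
      Polynomial.C ((A i).coeff (E + (p - i.val) - j)) *
        (descPochhammer ℚ (p - i.val)).comp (Polynomial.X + Polynomial.C (j : ℚ)) else 0
  have hq : ∀ n : ℕ, ∑ j ∈ Finset.range (E + p + 1), (q j).eval (n : ℚ) * a (n + j) = 0 := by
    intro n
    have h := congrArg (PowerSeries.coeff (n + E)) hA
    rw [map_sum, map_zero] at h
    rw [← h]
    simp only [q, eval_finsetSum, Finset.sum_mul]
    rw [Finset.sum_comm]
    refine Finset.sum_congr rfl fun i _ => ?_
    rw [PowerSeries.coeff_mul]
    have hp : p - i.val ≤ p := Nat.sub_le _ _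
    generalize p - i.val = s at hp
    have hterm : ∀ e ∈ Finset.range (n + E + 1),
        PowerSeries.coeff e (A i : PowerSeries ℚ) *
          PowerSeries.coeff (n + E - e) (psDeriv^[s] (PowerSeries.mk a))
        = (A i).coeff e * ((n + E - e + s).descFactorial s * a (n + E - e + s)) := by
      intro e _
      rw [coeff_psDeriv_iterate, Polynomial.coeff_coe, PowerSeries.coeff_mk]
    rw [Finset.Nat.sum_antidiagonal_eq_sum_range_succ
      (fun x y => PowerSeries.coeff x (A i : PowerSeries ℚ) *
        PowerSeries.coeff y (psDeriv^[s] (PowerSeries.mk a))), Finset.sum_congr rfl hterm]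
    -- both sides are supported on `e ≤ E`, with `j = E + s - e`
    have hR : ∑ e ∈ Finset.range (n + E + 1),
          (A i).coeff e * (((n + E - e + s).descFactorial s : ℚ) * a (n + E - e + s))
        = ∑ e ∈ Finset.range (E + 1),
          (A i).coeff e * (((n + E - e + s).descFactorial s : ℚ) * a (n + E - e + s)) := by
      symm
      apply Finset.sum_subset
      · intro x hx
        simp only [Finset.mem_range] at *
        omega
      · intro x _ hx
        simp only [Finset.mem_range, not_lt] at hx
        rw [Polynomial.coeff_eq_zero_of_natDegree_lt (by have := hE i; omega), zero_mul]
    rw [hR]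
    have hL : ∑ x ∈ Finset.range (E + p + 1), (eval (n : ℚ) (if x ≤ E + s then
          Polynomial.C ((A i).coeff (E + s - x)) *
            (descPochhammer ℚ s).comp (Polynomial.X + Polynomial.C (x : ℚ)) else 0)) * a (n + x)
        = ∑ x ∈ Finset.range (E + s + 1),
          (A i).coeff (E + s - x) * (((n + x).descFactorial s : ℚ) * a (n + x)) := by
      have h1 : Finset.range (E + s + 1) ⊆ Finset.range (E + p + 1) := by
        intro x hx
        simp only [Finset.mem_range] at *
        omega
      rw [← Finset.sum_subset h1]
      · refine Finset.sum_congr rfl fun x hx => ?_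
        simp only [Finset.mem_range] at hx
        rw [if_pos (by omega)]
        simp only [eval_mul, eval_C, eval_comp, eval_add, eval_X]
        rw [← Nat.cast_add, descPochhammer_eval_eq_descFactorial]
        ring
      · intro x _ hx
        simp only [Finset.mem_range, not_lt] at hx
        rw [if_neg (by omega)]
        simp
    rw [hL, ← Finset.sum_range_reflect]
    rw [← Finset.sum_subset (s₁ := Finset.range (E + 1))]
    · refine Finset.sum_congr rfl fun x hx => ?_
      simp only [Finset.mem_range] at hx
      have e1 : E + s - (E + s + 1 - 1 - x) = x := by omega
      have e2 : n + (E + s + 1 - 1 - x) = n + E - x + s := by omega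
      rw [e1, e2]
    · intro x hx
      simp only [Finset.mem_range] at *
      omega
    · intro x hx1 hx
      simp only [Finset.mem_range, not_lt] at hx hx1
      rw [Polynomial.coeff_eq_zero_of_natDegree_lt (by have := hE i; omega), zero_mul]
  have hne : ∃ j ∈ Finset.range (E + p + 1), q j ≠ 0 := by
    set e := (A 0).natDegree with he
    have heE : e ≤ E := hE 0
    refine ⟨E + p - e, Finset.mem_range.mpr (by omega), fun h0 => ?_⟩
    have hc := congrArg (fun P => Polynomial.coeff P p) h0
    simp only [q, finsetSum_coeff, Polynomial.coeff_zero] at hc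
    rw [Fin.sum_univ_succ] at hc
    have hrest : ∀ i : Fin p, Polynomial.coeff (if E + p - e ≤ E + (p - (i.succ : Fin (p+1)).val) then
      Polynomial.C ((A i.succ).coeff (E + (p - (i.succ : Fin (p+1)).val) - (E + p - e))) *
        (descPochhammer ℚ (p - (i.succ : Fin (p+1)).val)).comp
          (Polynomial.X + Polynomial.C ((E + p - e : ℕ) : ℚ)) else 0) p = 0 := by
      intro i
      split_ifs
      · rw [Polynomial.coeff_C_mul]
        refine mul_eq_zero_of_right _ (Polynomial.coeff_eq_zero_of_natDegree_lt ?_)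
        rw [natDegree_comp, natDegree_X_add_C, descPochhammer_natDegree]
        simp only [Fin.val_succ]
        have := i.2
        omega
      · simp
    rw [Finset.sum_eq_zero (fun i _ => hrest i)] at hc
    have e1 : E + p - (E + p - e) = e := by omega
    rw [add_zero, if_pos (by simp only [Fin.val_zero]; omega)] at hc
    simp only [Fin.val_zero, Nat.sub_zero] at hc
    rw [e1, Polynomial.coeff_C_mul] at hc
    have hm : ((descPochhammer ℚ p).comp
        (Polynomial.X + Polynomial.C ((E + p - e : ℕ) : ℚ))).Monic :=
      (monic_descPochhammer ℚ p).comp_X_add_C _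
    have hd : ((descPochhammer ℚ p).comp
        (Polynomial.X + Polynomial.C ((E + p - e : ℕ) : ℚ))).natDegree = p := by
      rw [natDegree_comp, natDegree_X_add_C, descPochhammer_natDegree, mul_one]
    have := hm.coeff_natDegree
    rw [hd] at this
    rw [this, mul_one, he] at hc
    exact hA0 (leadingCoeff_eq_zero.mp hc)
  -- trim the zero coefficients at both ends
  classical
  set J := (Finset.range (E + p + 1)).filter fun j => q j ≠ 0 with hJ
  have hJne : J.Nonempty := by
    obtain ⟨j, hj, hj'⟩ := hne
    exact ⟨j, Finset.mem_filter.mpr ⟨hj, hj'⟩⟩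
  set j₀ := J.min' hJne
  set j₁ := J.max' hJne
  have h01 : j₀ ≤ j₁ := Finset.min'_le_max' _ _
  have m0 := (Finset.mem_filter.mp (J.min'_mem hJne)).2
  have m1 := Finset.mem_filter.mp (J.max'_mem hJne)
  have hcomp : ∀ P : ℚ[X], P ≠ 0 → P.comp (Polynomial.X - Polynomial.C (j₀ : ℚ)) ≠ 0 := by
    intro P hP h
    exact hP (by
      have := congrArg (fun R => R.comp (Polynomial.X + Polynomial.C (j₀ : ℚ))) h
      simpa [Polynomial.comp_assoc] using this)
  refine ⟨j₁ - j₀, j₀, fun j => (q (j₀ + j)).comp (Polynomial.X - Polynomial.C (j₀ : ℚ)),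
    hcomp _ m0, ?_, ?_⟩
  · refine hcomp _ ?_
    rw [Nat.add_sub_cancel' h01]
    exact m1.2
  · intro n hn
    obtain ⟨n, rfl⟩ := Nat.exists_eq_add_of_le hn
    rw [← hq n]
    have hlt : j₁ < E + p + 1 := Finset.mem_range.mp m1.1
    have : ∑ j ∈ Finset.range (E + p + 1), eval (n : ℚ) (q j) * a (n + j)
        = ∑ j ∈ Finset.Ico j₀ (j₁ + 1), eval (n : ℚ) (q j) * a (n + j) := by
      symm
      apply Finset.sum_subset
      · intro x hx
        simp only [Finset.mem_Ico, Finset.mem_range] at *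
        omega
      · intro x hx hx'
        by_cases h : q x = 0
        · simp [h]
        · exfalso
          apply hx'
          have hxJ : x ∈ J := Finset.mem_filter.mpr ⟨hx, h⟩
          have h1 := J.min'_le x hxJ
          have h2 := J.le_max' x hxJ
          simp only [Finset.mem_Ico]
          omega
    rw [this, Finset.sum_Ico_eq_sum_range]
    have e1 : j₁ + 1 - j₀ = j₁ - j₀ + 1 := by omega
    rw [e1]
    refine Finset.sum_congr rfl fun j _ => ?_
    simp only [eval_comp, eval_sub, eval_X, eval_C]
    push_cast
    rw [add_sub_cancel_left]
    congr 2
    ring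

/-! ### Rationality from a long quasi-polynomial window -/

/-- If `u n` is eventually given by polynomials depending on `n % m`, its generating series is
rational: multiplying by `1 - z ^ m` lowers the degrees of these polynomials. -/
lemma rational_of_quasiPolynomial (m : ℕ) (hm : 0 < m) (K : ℕ) :
    ∀ (u : ℕ → ℚ) (p : ℕ → ℚ[X]) (s : ℕ), (∀ i, (p i).natDegree < K ∨ p i = 0) →
      (∀ n ≥ s, u n = (p (n % m)).eval (n : ℚ)) →
      ∃ g v : ℚ[X], v ≠ 0 ∧ (v : PowerSeries ℚ) * PowerSeries.mk u = (g : PowerSeries ℚ) := by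
  induction K with
  | zero =>
    intro u p s hp hu
    refine ⟨PowerSeries.trunc s (PowerSeries.mk u), 1, one_ne_zero, ?_⟩
    rw [Polynomial.coe_one, one_mul]
    ext n
    rw [Polynomial.coeff_coe, PowerSeries.coeff_trunc, PowerSeries.coeff_mk]
    split_ifs with h
    · rfl
    · rw [hu n (by omega), (hp (n % m)).resolve_left (by omega), eval_zero]
  | succ K ih =>
    intro u p s hp hu
    let w : ℕ → ℚ := fun n => u n - if m ≤ n then u (n - m) else 0
    let p' : ℕ → ℚ[X] := fun i => p i - (p i).comp (Polynomial.X - Polynomial.C (m : ℚ))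
    obtain ⟨g, v, hv, hg⟩ := ih w p' (s + m) (by
      intro i
      by_cases h0 : (p i).natDegree = 0
      · right
        rw [natDegree_eq_zero] at h0
        obtain ⟨x, hx⟩ := h0
        simp [p', ← hx]
      · left
        have hpi : p i ≠ 0 := by
          rintro h
          exact h0 (by simp [h])
        have h1 : (p i).natDegree < K + 1 := (hp i).resolve_right hpi
        have hd : (p' i).degree < (p i).degree := by
          apply degree_sub_lt_left
          · rw [degree_eq_natDegree hpi, degree_eq_natDegree]
            · rw [natDegree_comp, natDegree_X_sub_C, mul_one]
            · intro h
              have h2 := congrArg natDegree h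
              rw [natDegree_comp, natDegree_X_sub_C, mul_one, natDegree_zero] at h2
              exact h0 h2
          · exact hpi
          · rw [leadingCoeff_comp (by rw [natDegree_X_sub_C]; exact one_ne_zero),
              leadingCoeff_X_sub_C, one_pow, mul_one]
        by_cases hp0 : p' i = 0
        · rw [hp0, natDegree_zero]
          omega
        have := natDegree_lt_natDegree hp0 hd
        omega) (by
      intro n hn
      obtain ⟨n, rfl⟩ : ∃ l, n = l + m := ⟨n - m, by omega⟩
      simp only [w, p']
      rw [if_pos (by omega), Nat.add_sub_cancel, hu _ (by omega), hu n (by omega),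
        Nat.add_mod_right]
      simp)
    refine ⟨g, v * (1 - Polynomial.X ^ m), mul_ne_zero hv ?_, ?_⟩
    · intro h
      have := congrArg (Polynomial.eval (2 : ℚ)) h
      simp only [eval_sub, eval_one, eval_pow, eval_X, eval_zero] at this
      have h2 : (1 : ℚ) < 2 ^ m := one_lt_pow₀ (by norm_num) (by omega)
      linarith
    · rw [← hg, Polynomial.coe_mul, mul_assoc]
      congr 1
      ext n
      simp only [Polynomial.coe_sub, Polynomial.coe_one, Polynomial.coe_pow, Polynomial.coe_X,
        sub_mul, one_mul, map_sub, PowerSeries.coeff_X_pow_mul', PowerSeries.coeff_mk, w]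

/-- The residue-class components of `∑ j, Q j (n) * (p / C)(n + j)`, cleared of denominators:
here `p` is the family of polynomials of a quasi-polynomial of period `m`, and the component is
taken in the class of `b`. It vanishes for all `b` iff `p / C` satisfies the recurrence formally. -/
noncomputable def defect (r m : ℕ) (Q : ℕ → ℚ[X]) (C : ℚ[X]) (p : ℕ → ℚ[X]) (b : ℕ) : ℚ[X] :=
  ∑ j ∈ Finset.range (r + 1), Q j * (p ((b + j) % m)).comp (Polynomial.X + Polynomial.C (j : ℚ)) *
    ∏ l ∈ (Finset.range (r + 1)).erase j, C.comp (Polynomial.X + Polynomial.C (l : ℚ))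

lemma eval_defect (r m : ℕ) (Q : ℕ → ℚ[X]) (C : ℚ[X]) (p : ℕ → ℚ[X]) (b : ℕ) (x : ℚ) :
    (defect r m Q C p b).eval x = ∑ j ∈ Finset.range (r + 1),
      (Q j).eval x * (p ((b + j) % m)).eval (x + j) *
        ∏ l ∈ (Finset.range (r + 1)).erase j, C.eval (x + l) := by
  simp [defect, eval_finsetSum, eval_prod]

/-- If `C * a` agrees with a quasi-polynomial on a sufficiently long interval, then that
quasi-polynomial satisfies, formally, the recurrence of `a`. -/
lemma defect_eq_zero {a : ℕ → ℚ} {r n₀ : ℕ} {Q : ℕ → ℚ[X]}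
    (hrec : ∀ n ≥ n₀, ∑ j ∈ Finset.range (r + 1), (Q j).eval (n : ℚ) * a (n + j) = 0)
    {m d k D n₁ N : ℕ} (hm : 0 < m) (hd : ∀ j ≤ r, (Q j).natDegree ≤ d) {C : ℚ[X]} {p : ℕ → ℚ[X]}
    (hp : ∀ i, (p i).natDegree ≤ k) (hC : C.natDegree ≤ D) (hn : n₀ ≤ n₁)
    (hag : ∀ n, n₁ ≤ n → n ≤ N → C.eval (n : ℚ) * a n = (p (n % m)).eval (n : ℚ))
    (hN : n₁ + r + m * (k + r * D + d + 1) ≤ N) (b : ℕ) :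
    defect r m Q C p b = 0 := by
  set b' := n₁ + (b + (m - 1) * n₁) % m with hb'
  have hbb : ∀ j, (b + j) % m = (b' + j) % m := by
    intro j
    have h1 : b' ≡ b [MOD m] := by
      have h2 : b' ≡ n₁ + (b + (m - 1) * n₁) [MOD m] := (Nat.mod_modEq _ _).add_left _
      have h3 : n₁ + (b + (m - 1) * n₁) = b + m * n₁ := by
        obtain ⟨m, rfl⟩ : ∃ l, m = l + 1 := ⟨m - 1, by omega⟩
        simp only [Nat.add_sub_cancel]
        ring
      rw [h3] at h2
      exact h2.trans (by simp [Nat.ModEq])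
    exact (h1.add_right j).symm
  have hbd : defect r m Q C p b = defect r m Q C p b' := by
    unfold defect
    exact Finset.sum_congr rfl fun j _ => by rw [hbb]
  rw [hbd]
  have hb1 : n₁ ≤ b' := Nat.le_add_right _ _
  have hb2 : b' < n₁ + m := Nat.add_lt_add_left (Nat.mod_lt _ hm) _
  set K := k + r * D + d + 1 with hK
  apply eq_zero_of_natDegree_lt_card_of_eval_eq_zero' _
    ((Finset.range K).image fun t => ((b' + m * t : ℕ) : ℚ))
  · intro x hx
    obtain ⟨t, ht, rfl⟩ := Finset.mem_image.mp hx
    have ht' : t + 1 ≤ K := Finset.mem_range.mp ht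
    have h4 : m * t + m ≤ m * K := by
      calc m * t + m = m * (t + 1) := by ring
        _ ≤ m * K := Nat.mul_le_mul_left _ ht'
    rw [eval_defect]
    set n := b' + m * t with hn'
    have hR := hrec n (by omega)
    have : ∀ j ∈ Finset.range (r + 1), (Q j).eval (n : ℚ) *
        (p ((b' + j) % m)).eval ((n : ℚ) + j) *
          ∏ l ∈ (Finset.range (r + 1)).erase j, C.eval ((n : ℚ) + l)
        = (∏ l ∈ Finset.range (r + 1), C.eval ((n : ℚ) + l)) *
          ((Q j).eval (n : ℚ) * a (n + j)) := by
      intro j hj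
      have hj' : j < r + 1 := Finset.mem_range.mp hj
      have h5 := hag (n + j) (by omega) (by omega)
      have h6 : (n + j) % m = (b' + j) % m := by
        rw [hn', show b' + m * t + j = b' + j + m * t by ring, Nat.add_mul_mod_self_left]
      rw [h6] at h5
      push_cast at h5
      rw [← h5, ← Finset.mul_prod_erase _ _ hj]
      ring
    rw [Finset.sum_congr rfl this, ← Finset.mul_sum, hR, mul_zero]
  · rw [Finset.card_image_of_injective, Finset.card_range]
    · refine lt_of_le_of_lt (natDegree_sum_le_of_forall_le (n := k + r * D + d) _ _ ?_) (by omega)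
      intro j hj
      have hj' : j < r + 1 := Finset.mem_range.mp hj
      have hx : ∀ (P : ℚ[X]) (c : ℚ),
          (P.comp (Polynomial.X + Polynomial.C c)).natDegree = P.natDegree := by
        intro P c
        rw [natDegree_comp, natDegree_X_add_C, mul_one]
      have h7 : (∏ l ∈ (Finset.range (r + 1)).erase j,
          C.comp (Polynomial.X + Polynomial.C (l : ℚ))).natDegree ≤ r * D := by
        refine (natDegree_prod_le _ _).trans ?_
        refine (Finset.sum_le_card_nsmul _ _ D fun l _ => by rw [hx]; exact hC).trans ?_
        rw [Finset.card_erase_of_mem hj, Finset.card_range, smul_eq_mul, Nat.add_sub_cancel]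
      refine natDegree_mul_le.trans ?_
      have h8 := natDegree_mul_le (p := Q j)
        (q := (p ((b' + j) % m)).comp (Polynomial.X + Polynomial.C (j : ℚ)))
      rw [hx] at h8
      have h9 := hp ((b' + j) % m)
      have h10 := hd j (by omega)
      omega
    · intro t₁ t₂ h
      have h' : b' + m * t₁ = b' + m * t₂ := Nat.cast_injective (R := ℚ) h
      exact Nat.eq_of_mul_eq_mul_left hm (by omega)

/-- A polynomial of degree at most `D` has no root in one of `D + 1` consecutive blocks. -/
lemma exists_window {C : ℚ[X]} (hC0 : C ≠ 0) {D : ℕ} (hC : C.natDegree ≤ D) (r s₀ : ℕ) :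
    ∃ s, s₀ ≤ s ∧ s + r ≤ s₀ + r * (D + 1) ∧ ∀ i < r, C.eval ((s + i : ℕ) : ℚ) ≠ 0 := by
  by_contra! hcon
  have hc : ∀ t : ℕ, ∃ i, t ≤ D → i < r ∧ C.eval ((s₀ + r * t + i : ℕ) : ℚ) = 0 := by
    intro t
    by_cases ht : t ≤ D
    · obtain ⟨i, hi, hi'⟩ := hcon (s₀ + r * t) (by omega) (by
        have : r * t + r ≤ r * (D + 1) := by
          calc r * t + r = r * (t + 1) := by ring
            _ ≤ _ := Nat.mul_le_mul_left _ (by omega)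
        omega)
      exact ⟨i, fun _ => ⟨hi, hi'⟩⟩
    · exact ⟨0, fun h => absurd h ht⟩
  choose e he using hc
  apply hC0
  apply eq_zero_of_natDegree_lt_card_of_eval_eq_zero' _
    ((Finset.range (D + 1)).image fun t => ((s₀ + r * t + e t : ℕ) : ℚ))
  · intro x hx
    obtain ⟨t, ht, rfl⟩ := Finset.mem_image.mp hx
    exact (he t (by have := Finset.mem_range.mp ht; omega)).2
  · rw [Finset.card_image_of_injOn, Finset.card_range]
    · omega
    · intro t₁ h₁ t₂ h₂ h
      have h' : s₀ + r * t₁ + e t₁ = s₀ + r * t₂ + e t₂ := Nat.cast_injective (R := ℚ) h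
      have l1 := (he t₁ (by have := Finset.mem_range.mp h₁; omega)).1
      have l2 := (he t₂ (by have := Finset.mem_range.mp h₂; omega)).1
      have h'' : e t₁ + r * t₁ = e t₂ + r * t₂ := by omega
      have h3 := congrArg (· / r) h''
      simp only [Nat.add_mul_div_left _ _ (show 0 < r by omega), Nat.div_eq_of_lt l1,
        Nat.div_eq_of_lt l2] at h3
      omega

/-- Once `p / C` formally satisfies the recurrence of `a` and agrees with `a` on a window of `r`
non-roots of `C` beyond the roots of `Q 0` and `Q r`, some nonzero multiple `C' * a` has a rational
generating series. Integer roots of `C` beyond the window would obstruct propagation; such a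
root, if largest, is also a root of every component of `p` and can be divided out. -/
lemma rational_of_defect {a : ℕ → ℚ} {r n₀ m s : ℕ} {Q : ℕ → ℚ[X]} (hm : 0 < m)
    (hrec : ∀ n ≥ n₀, ∑ j ∈ Finset.range (r + 1), (Q j).eval (n : ℚ) * a (n + j) = 0)
    (hQ0 : ∀ n : ℕ, s ≤ n → (Q 0).eval (n : ℚ) ≠ 0) (hQr : ∀ n : ℕ, s ≤ n → (Q r).eval (n : ℚ) ≠ 0)
    (hs : n₀ ≤ s) (D : ℕ) :
    ∀ (C : ℚ[X]) (p : ℕ → ℚ[X]), C ≠ 0 → C.natDegree ≤ D → (∀ b, defect r m Q C p b = 0) →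
      (∀ i < r, C.eval ((s + i : ℕ) : ℚ) ≠ 0) →
      (∀ i < r, C.eval ((s + i : ℕ) : ℚ) * a (s + i)
        = (p ((s + i) % m)).eval ((s + i : ℕ) : ℚ)) →
      ∃ C' : ℚ[X], C' ≠ 0 ∧ ∃ g v : ℚ[X], v ≠ 0 ∧
        (v : PowerSeries ℚ) * PowerSeries.mk (fun n => C'.eval (n : ℚ) * a n)
          = (g : PowerSeries ℚ) := by
  induction D with
  | zero => ?_
  | succ D ih => ?_
  all_goals
    intro C p hC0 hCD hdef hnz hag
    by_cases hroot : ∃ x : ℕ, s + r ≤ x ∧ C.eval (x : ℚ) = 0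
  · -- a nonzero constant has no roots
    obtain ⟨x, -, hx⟩ := hroot
    rw [eq_C_of_natDegree_eq_zero (Nat.le_zero.mp hCD)] at hx hC0
    simp only [eval_C] at hx
    simp [hx] at hC0
  rotate_left
  · have hfin : {x : ℕ | C.eval (x : ℚ) = 0}.Finite := by
      refine Set.Finite.of_injOn (f := fun x : ℕ => (x : ℚ)) (t := {x | C.IsRoot x}) ?_ ?_ ?_
      · intro x hx
        exact hx
      · exact fun _ _ _ _ h => Nat.cast_injective (R := ℚ) h
      · exact finite_setOfPred_isRoot hC0
    obtain ⟨μ, ⟨hμs, hμ⟩, hmax⟩ :=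
      Set.exists_max_image {x : ℕ | s + r ≤ x ∧ C.eval (x : ℚ) = 0} id
        (hfin.subset fun x hx => hx.2) hroot
    -- At the largest root `μ`, only the term `j = 0` of the defect survives.
    have hpμ : ∀ i, (p (i % m)).IsRoot (μ : ℚ) := by
      intro b
      have h1 := congrArg (Polynomial.eval (μ : ℚ)) (hdef b)
      rw [eval_defect, eval_zero, Finset.sum_eq_single_of_mem 0 (by simp)] at h1
      · simp only [Nat.cast_zero, add_zero] at h1
        have h2 : ∏ l ∈ (Finset.range (r + 1)).erase 0, C.eval ((μ : ℚ) + l) ≠ 0 := by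
          rw [Finset.prod_ne_zero_iff]
          intro l hl h0
          have h3 := hmax (μ + l) ⟨by omega, by push_cast; exact h0⟩
          have h4 := (Finset.mem_erase.mp hl).1
          simp only [id] at h3
          omega
        have h5 := hQ0 μ (by omega)
        simpa [h2, h5] using h1
      · intro j hj hj0
        refine mul_eq_zero_of_right _ (Finset.prod_eq_zero (i := 0) ?_ ?_)
        · simp [hj0.symm]
        · simpa using hμ
    set C' := C /ₘ (Polynomial.X - Polynomial.C (μ : ℚ)) with hC'
    set p' : ℕ → ℚ[X] := fun i => p i /ₘ (Polynomial.X - Polynomial.C (μ : ℚ)) with hp'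
    have hCC : (Polynomial.X - Polynomial.C (μ : ℚ)) * C' = C := mul_divByMonic_eq_iff_isRoot.mpr hμ
    have hpp : ∀ i, (Polynomial.X - Polynomial.C (μ : ℚ)) * p' (i % m) = p (i % m) :=
      fun i => mul_divByMonic_eq_iff_isRoot.mpr (hpμ i)
    have hC'0 : C' ≠ 0 := by
      intro h
      rw [h, mul_zero] at hCC
      exact hC0 hCC.symm
    have hwin : ∀ i < r, ((s + i : ℕ) : ℚ) - μ ≠ 0 := by
      intro i hi h
      have : ((s + i : ℕ) : ℚ) = (μ : ℕ) := by linarith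
      have : s + i = μ := by exact_mod_cast this
      omega
    refine ih C' p' hC'0 ?_ ?_ ?_ ?_
    · rw [hC', natDegree_divByMonic _ (monic_X_sub_C _), natDegree_X_sub_C]
      omega
    · intro b
      have h1 : defect r m Q C p b
          = (∏ l ∈ Finset.range (r + 1), (Polynomial.X + Polynomial.C (l : ℚ) -
              Polynomial.C (μ : ℚ))) * defect r m Q C' p' b := by
        unfold defect
        rw [Finset.mul_sum]
        refine Finset.sum_congr rfl fun j hj => ?_
        rw [← Finset.mul_prod_erase _ _ hj, ← hpp, ← hCC]
        simp only [mul_comp, sub_comp, X_comp, C_comp, Finset.prod_mul_distrib]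
        ring
      rw [hdef b] at h1
      refine (mul_eq_zero.mp h1.symm).resolve_left (Finset.prod_ne_zero_iff.mpr fun l _ => ?_)
      rw [add_sub_assoc, ← Polynomial.C_sub]
      exact X_add_C_ne_zero _
    · intro i hi h
      apply hnz i hi
      rw [← hCC, eval_mul, h, mul_zero]
    · intro i hi
      have h1 := hag i hi
      rw [← hCC, ← hpp] at h1
      simp only [eval_mul, eval_sub, eval_X, eval_C] at h1
      rw [mul_assoc] at h1
      exact mul_left_cancel₀ (hwin i hi) h1
  all_goals
    push Not at hroot
    refine ⟨C, hC0, rational_of_quasiPolynomial m hm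
      ((Finset.range m).sup (fun i => (p i).natDegree) + 1) _ (fun i => p (i % m)) s ?_ ?_⟩
    · intro i
      left
      exact Nat.lt_succ_of_le (Finset.le_sup (f := fun i => (p i).natDegree)
        (Finset.mem_range.mpr (Nat.mod_lt i hm)))
    · intro n
      induction n using Nat.strong_induction_on with
      | _ n IH =>
      intro hn
      simp only [Nat.mod_mod]
      by_cases hnr : n < s + r
      · obtain ⟨i, rfl⟩ := Nat.exists_eq_add_of_le hn
        exact hag i (by omega)
      · obtain ⟨l, rfl⟩ : ∃ l, n = l + r := ⟨n - r, by omega⟩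
        have h1 := congrArg (Polynomial.eval (l : ℚ)) (hdef l)
        rw [eval_defect, eval_zero] at h1
        have h2 := congrArg (fun y => (∏ i ∈ Finset.range (r + 1), C.eval ((l : ℚ) + i)) * y)
          (hrec l (by omega))
        simp only [mul_zero, Finset.mul_sum] at h2
        have h3 : ∀ j ∈ Finset.range (r + 1), (∏ i ∈ Finset.range (r + 1), C.eval ((l : ℚ) + i)) *
            ((Q j).eval (l : ℚ) * a (l + j)) - (Q j).eval (l : ℚ) *
            (p ((l + j) % m)).eval ((l : ℚ) + j) *
              ∏ i ∈ (Finset.range (r + 1)).erase j, C.eval ((l : ℚ) + i)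
            = (Q j).eval (l : ℚ) * (∏ i ∈ (Finset.range (r + 1)).erase j, C.eval ((l : ℚ) + i)) *
              (C.eval ((l : ℚ) + j) * a (l + j) - (p ((l + j) % m)).eval ((l : ℚ) + j)) := by
          intro j hj
          rw [← Finset.mul_prod_erase _ _ hj]
          ring
        have h4 := sub_eq_zero.mpr (h2.trans h1.symm)
        rw [← Finset.sum_sub_distrib, Finset.sum_congr rfl h3, Finset.sum_range_succ,
          Finset.sum_eq_zero, zero_add] at h4
        · have h5 : (∏ i ∈ (Finset.range (r + 1)).erase r, C.eval ((l : ℚ) + i)) ≠ 0 := by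
            rw [Finset.prod_ne_zero_iff]
            intro i hi
            have hi1 := Finset.mem_range.mp (Finset.mem_erase.mp hi).2
            have hi2 := (Finset.mem_erase.mp hi).1
            have := if h : l + i < s + r then
                (by
                  obtain ⟨e, he⟩ := Nat.exists_eq_add_of_le (show s ≤ l + i by omega)
                  rw [he]
                  exact hnz e (by omega) : C.eval ((l + i : ℕ) : ℚ) ≠ 0)
              else hroot (l + i) (by omega)
            push_cast at this
            exact this
          have h6 := hQr l (by omega)
          have h7 := (mul_eq_zero.mp h4).resolve_left (mul_ne_zero h6 h5)
          push_cast
          linarith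
        · intro j hj
          have hj' := Finset.mem_range.mp hj
          have h8 := IH (l + j) (by omega) (by omega)
          simp only [Nat.mod_mod] at h8
          push_cast at h8
          rw [h8, sub_self, mul_zero]

/-- If `C * a` agrees with a quasi-polynomial on an interval that is long compared with all the
degrees involved, then a nonzero polynomial multiple of `a` has a rational generating series. -/
lemma rational_of_agree {a : ℕ → ℚ} {r n₀ : ℕ} {Q : ℕ → ℚ[X]}
    (hrec : ∀ n ≥ n₀, ∑ j ∈ Finset.range (r + 1), (Q j).eval (n : ℚ) * a (n + j) = 0)
    {ν : ℕ} (hν : ∀ n : ℕ, ν ≤ n → (Q 0).eval (n : ℚ) ≠ 0 ∧ (Q r).eval (n : ℚ) ≠ 0)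
    {m d k D n₁ N : ℕ} (hm : 0 < m) (hd : ∀ j ≤ r, (Q j).natDegree ≤ d) {C : ℚ[X]} {p : ℕ → ℚ[X]}
    (hp : ∀ i, (p i).natDegree ≤ k) (hC0 : C ≠ 0) (hC : C.natDegree ≤ D) (hn : n₀ ≤ n₁)
    (hag : ∀ n, n₁ ≤ n → n ≤ N → C.eval (n : ℚ) * a n = (p (n % m)).eval (n : ℚ))
    (hN : n₁ + ν + r + m * (k + r * D + d + 1) ≤ N) :
    ∃ C' : ℚ[X], C' ≠ 0 ∧ ∃ g v : ℚ[X], v ≠ 0 ∧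
        (v : PowerSeries ℚ) * PowerSeries.mk (fun n => C'.eval (n : ℚ) * a n)
          = (g : PowerSeries ℚ) := by
  obtain ⟨s, hs, hsr, hnz⟩ := exists_window hC0 hC r (n₁ + ν)
  have h1 : r * (D + 1) ≤ r + m * (k + r * D + d + 1) := by
    have : 1 * (k + r * D + d + 1) ≤ m * (k + r * D + d + 1) := Nat.mul_le_mul_right _ hm
    rw [Nat.mul_add]
    omega
  exact rational_of_defect hm hrec (fun n h => (hν n (by omega)).1) (fun n h => (hν n (by omega)).2)
    (by omega) D C p hC0 hC
    (defect_eq_zero hrec hm hd hp hC hn hag (by omega)) hnz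
    (fun i hi => hag _ (by omega) (by omega))

/-! ### Quasi-polynomials and finite differences -/

/-- The coefficient of `x ^ i` in `(1 - x) ^ k`. -/
def altChoose (k i : ℕ) : ℤ := (-1) ^ i * (k.choose i : ℤ)

/-- The `k`-th difference of a polynomial of degree less than `k` vanishes. -/
lemma sum_altChoose_eval {k : ℕ} {P : ℚ[X]} (hP : P.degree < k) (x : ℚ) (h : ℚ) :
    ∑ i ∈ Finset.range (k + 1), (altChoose k i : ℚ) * P.eval (x + i * h) = 0 := by
  rcases eq_or_ne P 0 with rfl | hP0
  · simp
  set R : ℚ[X] := P.comp (Polynomial.C h * Polynomial.X + Polynomial.C x) with hR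
  have hdeg : R.natDegree < k := by
    refine lt_of_le_of_lt (natDegree_comp_le.trans ?_) ((natDegree_lt_iff_degree_lt hP0).mpr hP)
    calc P.natDegree * (Polynomial.C h * Polynomial.X + Polynomial.C x).natDegree
        ≤ P.natDegree * 1 := Nat.mul_le_mul_left _ natDegree_linear_le
      _ = _ := mul_one _
  have h1 := congrFun (Polynomial.fwdDiff_iter_eq_zero_of_degree_lt hdeg) 0
  rw [fwdDiff_iter_eq_sum_shift] at h1
  have h2 := congrArg (fun y => (-1 : ℚ) ^ k * y) h1
  simp only [Pi.zero_apply, mul_zero, Finset.mul_sum] at h2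
  rw [← h2]
  refine Finset.sum_congr rfl fun i hi => ?_
  have hi' : i ≤ k := Nat.lt_succ_iff.mp (Finset.mem_range.mp hi)
  obtain ⟨l, rfl⟩ := Nat.exists_eq_add_of_le hi'
  simp only [altChoose, hR, eval_comp, eval_add, eval_mul, eval_C, eval_X, Nat.add_sub_cancel_left,
    zsmul_eq_mul]
  push_cast
  have h3 : (-1 : ℚ) ^ (i + l) * (-1) ^ l = (-1) ^ i := by
    rw [pow_add, mul_assoc, ← pow_add, ← two_mul, pow_mul]
    simp
  rw [← mul_assoc, ← mul_assoc, h3]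
  congr 2
  simp
  ring

/-- A sequence whose `k`-th difference of step `m` vanishes on an interval is a quasi-polynomial of
period `m` there. -/
lemma quasiPolynomial_of_diff {u : ℕ → ℚ} {m k n₁ N : ℕ} (hm : 0 < m)
    (hu : ∀ n, n₁ ≤ n → n + m * k ≤ N →
      ∑ i ∈ Finset.range (k + 1), (altChoose k i : ℚ) * u (n + i * m) = 0) :
    ∃ p : ℕ → ℚ[X], (∀ i, (p i).natDegree ≤ k) ∧
      ∀ n, n₁ ≤ n → n ≤ N → u n = (p (n % m)).eval (n : ℚ) := by
  have hb : ∀ ρ : ℕ, ∃ b, n₁ ≤ b ∧ b < n₁ + m ∧ b % m = ρ % m := by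
    intro ρ
    refine ⟨n₁ + (ρ + (m - 1) * n₁) % m, Nat.le_add_right _ _,
      Nat.add_lt_add_left (Nat.mod_lt _ hm) _, ?_⟩
    rw [Nat.add_mod_mod, show n₁ + (ρ + (m - 1) * n₁) = ρ + (m - 1 + 1) * n₁ by ring,
      Nat.sub_add_cancel hm, Nat.add_mul_mod_self_left]
  choose b hb1 hb2 hb3 using hb
  -- In each residue class, interpolate `u` at its first `k` elements from `n₁` on.
  let p : ℕ → ℚ[X] := fun ρ =>
    Lagrange.interpolate (Finset.range k) (fun t : ℕ => ((b ρ + m * t : ℕ) : ℚ))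
      (fun t => u (b ρ + m * t))
  have hinj : ∀ ρ, Set.InjOn (fun t : ℕ => ((b ρ + m * t : ℕ) : ℚ)) (Finset.range k) := by
    intro ρ t₁ _ t₂ _ h
    have h' : b ρ + m * t₁ = b ρ + m * t₂ := Nat.cast_injective (R := ℚ) h
    exact Nat.eq_of_mul_eq_mul_left hm (by omega)
  have hdeg : ∀ ρ, (p ρ).degree < k := by
    intro ρ
    have := Lagrange.degree_interpolate_lt (r := fun t => u (b ρ + m * t)) (hinj ρ)
    rwa [Finset.card_range] at this
  refine ⟨p, fun i => natDegree_le_of_degree_le (hdeg i).le, ?_⟩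
  intro n
  induction n using Nat.strong_induction_on with
  | _ n IH =>
  intro hn1 hnN
  by_cases hlt : n < n₁ + m * k
  · set β := b (n % m) with hβ
    have hβ1 := hb1 (n % m)
    have hβ2 := hb2 (n % m)
    have hβ3 := hb3 (n % m)
    rw [Nat.mod_mod, ← hβ] at hβ3
    rw [← hβ] at hβ1 hβ2
    have hle : β ≤ n := by
      by_contra! hc
      have h1 := (Nat.modEq_iff_dvd' (show n ≤ β by omega)).mp (show n ≡ β [MOD m] from hβ3.symm)
      exact absurd (Nat.le_of_dvd (by omega) h1) (by omega)
    obtain ⟨t, ht⟩ := (Nat.modEq_iff_dvd' hle).mp (show β ≡ n [MOD m] from hβ3)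
    have hnt : n = β + m * t := by omega
    have htk : t ∈ Finset.range k := by
      rw [Finset.mem_range]
      exact Nat.lt_of_mul_lt_mul_left (a := m) (by omega)
    have h2 := Lagrange.eval_interpolate_at_node (fun t => u (b (n % m) + m * t)) (hinj (n % m)) htk
    rw [← hβ, ← hnt] at h2
    exact h2.symm
  · obtain ⟨l, rfl⟩ : ∃ l, n = l + m * k := ⟨n - m * k, by omega⟩
    have h1 := hu l (by omega) hnN
    have h2 := sum_altChoose_eval (hdeg ((l + m * k) % m)) (l : ℚ) m
    have h3 := h1.trans h2.symm
    rw [Finset.sum_range_succ, Finset.sum_range_succ] at h3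
    have hmod : ∀ i, (l + i * m) % m = (l + m * k) % m := by
      intro i
      rw [Nat.add_mul_mod_self_right, Nat.add_mul_mod_self_left]
    have h4 : ∑ i ∈ Finset.range k, (altChoose k i : ℚ) * u (l + i * m) =
        ∑ i ∈ Finset.range k, (altChoose k i : ℚ) *
          (p ((l + m * k) % m)).eval ((l : ℚ) + i * m) := by
      refine Finset.sum_congr rfl fun i hi => ?_
      have hi' : i < k := Finset.mem_range.mp hi
      have h5 : i * m < m * k := by
        rw [mul_comm]
        exact Nat.mul_lt_mul_of_pos_left hi' hm
      rw [IH (l + i * m) (by omega) (by omega) (by omega), hmod]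
      push_cast
      rfl
    rw [h4] at h3
    have h6 := mul_left_cancel₀ (by simp [altChoose]) (add_left_cancel h3)
    rw [mul_comm m k]
    rw [mul_comm m k] at h6
    rw [h6]
    push_cast
    rfl

/-! ### Pigeonhole on integer combinations -/

/-- The `k`-th difference, of step `m`, of the sequence `n ↦ binom(n, d) * a n`. -/
noncomputable def diffSeq (a : ℕ → ℚ) (m k d n : ℕ) : ℚ :=
  ∑ i ∈ Finset.range (k + 1), (altChoose k i : ℚ) * (((n + i * m).choose d : ℚ) * a (n + i * m))

/-- The multiplicity of `a s` in the combination `∑ j, y j * diffSeq a m k d (e j)`, up to the factor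
`binom(s, d)`. -/
def pullCoeff {κ : Type*} [Fintype κ] (e : κ → ℕ) (m k : ℕ) (y : κ → ℤ) (s : ℕ) : ℤ :=
  ∑ j, ∑ i ∈ Finset.range (k + 1), if s = e j + i * m then y j * altChoose k i else 0

lemma pullCoeff_sub {κ : Type*} [Fintype κ] (e : κ → ℕ) (m k : ℕ) (y z : κ → ℤ) (s : ℕ) :
    pullCoeff e m k (y - z) s = pullCoeff e m k y s - pullCoeff e m k z s := by
  unfold pullCoeff
  rw [← Finset.sum_sub_distrib]
  refine Finset.sum_congr rfl fun j _ => ?_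
  rw [← Finset.sum_sub_distrib]
  refine Finset.sum_congr rfl fun i _ => ?_
  split_ifs
  · simp [sub_mul]
  · simp

lemma sum_altChoose_abs (k : ℕ) : ∑ i ∈ Finset.range (k + 1), |altChoose k i| = 2 ^ k := by
  have : ∀ i ∈ Finset.range (k + 1), |altChoose k i| = ((k.choose i : ℕ) : ℤ) := by
    intro i _
    rw [altChoose, abs_mul, abs_pow, abs_neg, abs_one, one_pow, one_mul, Nat.abs_cast]
  rw [Finset.sum_congr rfl this, ← Nat.cast_sum, Nat.sum_range_choose]
  simp

lemma abs_pullCoeff_le {κ : Type*} [Fintype κ] {e : κ → ℕ} (he : Function.Injective e) (m k : ℕ)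
    {y : κ → ℤ} {H : ℤ} (hH : 0 ≤ H) (hy : ∀ j, |y j| ≤ H) (s : ℕ) :
    |pullCoeff e m k y s| ≤ 2 ^ k * H := by
  classical
  unfold pullCoeff
  rw [Finset.sum_comm, ← sum_altChoose_abs, Finset.sum_mul]
  refine (Finset.abs_sum_le_sum_abs _ _).trans (Finset.sum_le_sum fun i _ => ?_)
  by_cases h : ∃ j, s = e j + i * m
  · obtain ⟨j, hj⟩ := h
    rw [Finset.sum_eq_single_of_mem j (Finset.mem_univ _), if_pos hj, abs_mul, mul_comm]
    · exact mul_le_mul_of_nonneg_left (hy j) (abs_nonneg _)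
    · intro j' _ hj'
      exact if_neg fun h => hj' (he (by omega))
  · push Not at h
    rw [Finset.sum_eq_zero fun j _ => if_neg (h j), abs_zero]
    exact mul_nonneg (abs_nonneg _) hH

lemma sum_diffSeq_eq {κ : Type*} [Fintype κ] {e : κ → ℕ} {m k N : ℕ} (he : ∀ j, e j + m * k ≤ N)
    (a : ℕ → ℚ) (d : ℕ) (y : κ → ℤ) :
    ∑ j, (y j : ℚ) * diffSeq a m k d (e j) =
      ∑ s ∈ Finset.range (N + 1), (pullCoeff e m k y s : ℚ) * ((s.choose d : ℚ) * a s) := by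
  unfold pullCoeff diffSeq
  push_cast
  simp only [Finset.sum_mul, Finset.mul_sum]
  symm
  rw [Finset.sum_comm]
  refine Finset.sum_congr rfl fun j _ => ?_
  rw [Finset.sum_comm]
  refine Finset.sum_congr rfl fun i hi => ?_
  have hi' : i ≤ k := Nat.lt_succ_iff.mp (Finset.mem_range.mp hi)
  have h1 : i * m ≤ m * k := by
    rw [mul_comm]
    exact Nat.mul_le_mul_left _ hi'
  rw [Finset.sum_eq_single_of_mem (e j + i * m)]
  · rw [if_pos rfl]
    ring
  · have := he j
    simp only [Finset.mem_range]
    omega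
  · intro s _ hs
    rw [if_neg hs, zero_mul]

/-- A rational number of denominator dividing `L` and absolute value less than `1 / L` is zero. -/
lemma eq_zero_of_small {L : ℕ} (hL : 0 < L) {x : ℚ} (hx : ∃ z : ℤ, (L : ℚ) * x = z)
    (h : (L : ℚ) * |x| < 1) : x = 0 := by
  obtain ⟨z, hz⟩ := hx
  have h1 : |(z : ℚ)| < 1 := by
    rw [← hz, abs_mul, Nat.abs_cast]
    exact h
  have h2 : z = 0 := by
    rw [← Int.cast_abs] at h1
    have : |z| < 1 := by exact_mod_cast h1
    exact Int.abs_lt_one_iff.mp this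
  rw [h2, Int.cast_zero] at hz
  exact (mul_eq_zero.mp hz).resolve_left (by positivity)

/-- If all short integer combinations of the vectors `(diffSeq a m k d n)_d` are smaller than `1 / L`,
where `L` clears the denominators of `a` outside of the set `S`, then these vectors lie in a common
hyperplane. Otherwise, `2 |S| + 1` of them are independent; by the pigeonhole principle some
nontrivial short combination of them does not involve `a` on `S`, hence has denominator dividing `L`
and vanishes. -/
lemma exists_relation {a : ℕ → ℚ} {m k N L : ℕ} (hL : 0 < L) (I S : Finset ℕ)
    (hI : ∀ n ∈ I, n + m * k ≤ N)
    (hLa : ∀ n ≤ N, n ∉ S → ∃ z : ℤ, (L : ℚ) * a n = z)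
    (hsmall : ∀ Y : ℕ → ℤ, (∀ n, |Y n| ≤ 2 ^ (k + 1)) → ∀ d ≤ 2 * S.card,
      (L : ℚ) * |∑ n ∈ I, (Y n : ℚ) * diffSeq a m k d n| < 1) :
    ∃ γ : Fin (2 * S.card + 1) → ℚ, γ ≠ 0 ∧ ∀ n ∈ I, ∑ d, γ d * diffSeq a m k d n = 0 := by
  classical
  by_contra! hcon
  let A : Matrix (Fin (2 * S.card + 1)) I ℚ := fun d n => diffSeq a m k d n
  have hli : LinearIndependent ℚ A.row := by
    rw [Fintype.linearIndependent_iff]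
    intro γ hγ
    by_contra! hne
    obtain ⟨i, hi⟩ := hne
    obtain ⟨n, hn, hn'⟩ := hcon γ (fun h => hi (by rw [h]; rfl))
    apply hn'
    have := congrFun hγ ⟨n, hn⟩
    simpa [A, Matrix.row, Finset.sum_apply] using this
  have hrank := hli.rank_matrix
  rw [Matrix.rank_eq_finrank_span_cols] at hrank
  obtain ⟨κ, e, he, hspan, hind⟩ := exists_linearIndependent' ℚ A.col
  have : Fintype κ := Fintype.ofInjective e he
  have hcard : Fintype.card κ = 2 * S.card + 1 := by
    rw [← hspan, finrank_span_eq_card hind] at hrank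
    simpa using hrank
  let e' : κ → ℕ := fun j => (e j : ℕ)
  have he' : Function.Injective e' := Subtype.val_injective.comp he
  -- There are `2 ^ ((k + 1) * (2 * |S| + 1))` vectors with entries in `[0, 2 ^ (k + 1))`, and only
  -- `2 ^ ((2 * k + 2) * |S|)` candidates for the multiplicities on `S` of the corresponding combinations.
  obtain ⟨u, hu, v, hv, huv, hpull⟩ := Finset.exists_ne_map_eq_of_card_lt_of_maps_to
    (s := Fintype.piFinset (fun _ : κ => Finset.Ico (0 : ℤ) (2 ^ (k + 1))))
    (t := Fintype.piFinset (fun _ : S => Finset.Ico (-2 ^ (2 * k + 1) : ℤ) (2 ^ (2 * k + 1))))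
    (f := fun y s => pullCoeff e' m k y s) (by
      rw [Fintype.card_piFinset, Fintype.card_piFinset, Finset.prod_const, Finset.prod_const,
        Finset.card_univ, Finset.card_univ, hcard, Int.card_Ico, Int.card_Ico, Fintype.card_coe]
      have h1 : ((2 : ℤ) ^ (2 * k + 1) - -2 ^ (2 * k + 1)).toNat = 2 ^ (2 * k + 2) := by
        have : ((2 : ℤ) ^ (2 * k + 1) - -2 ^ (2 * k + 1)) = ((2 ^ (2 * k + 2) : ℕ) : ℤ) := by
          push_cast
          ring
        rw [this, Int.toNat_natCast]
      have h2 : ((2 : ℤ) ^ (k + 1) - 0).toNat = 2 ^ (k + 1) := by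
        have : ((2 : ℤ) ^ (k + 1) - 0) = ((2 ^ (k + 1) : ℕ) : ℤ) := by
          push_cast
          ring
        rw [this, Int.toNat_natCast]
      rw [h1, h2, ← pow_mul, ← pow_mul]
      apply Nat.pow_lt_pow_right (by norm_num)
      nlinarith) (by
      intro y hy
      simp only [Finset.mem_coe, Fintype.mem_piFinset, Finset.mem_Ico] at hy ⊢
      intro s
      have h1 := abs_pullCoeff_le he' m k (y := y) (H := 2 ^ (k + 1) - 1)
        (by have : (1 : ℤ) ≤ 2 ^ (k + 1) := one_le_pow₀ (by norm_num)
            linarith)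
        (by intro j
            rw [abs_of_nonneg (hy j).1]
            have := (hy j).2
            omega) s
      have h2 : (2 : ℤ) ^ k * (2 ^ (k + 1) - 1) < 2 ^ (2 * k + 1) := by
        have : (2 : ℤ) ^ (2 * k + 1) = 2 ^ k * 2 ^ (k + 1) := by ring
        rw [this]
        exact mul_lt_mul_of_pos_left (by linarith) (by positivity)
      have h3 := abs_le.mp h1
      constructor <;> linarith)
  simp only [Fintype.mem_piFinset, Finset.mem_Ico] at hu hv
  set y : κ → ℤ := u - v with hy
  have hyb : ∀ j, |y j| ≤ 2 ^ (k + 1) := by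
    intro j
    rw [hy, Pi.sub_apply, abs_le]
    have := hu j
    have := hv j
    constructor <;> linarith
  have hy0 : ∀ s ∈ S, pullCoeff e' m k y s = 0 := by
    intro s hs
    rw [hy, pullCoeff_sub, sub_eq_zero]
    exact congrFun hpull ⟨s, hs⟩
  have heN : ∀ j, e' j + m * k ≤ N := fun j => hI _ (e j).2
  have hzero : ∀ d ≤ 2 * S.card, ∑ j, (y j : ℚ) * diffSeq a m k d (e' j) = 0 := by
    intro d hd
    apply eq_zero_of_small hL
    · rw [sum_diffSeq_eq heN]
      have : ∀ s : ℕ, ∃ z : ℤ, s ∈ Finset.range (N + 1) →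
          (L : ℚ) * ((pullCoeff e' m k y s : ℚ) * ((s.choose d : ℚ) * a s)) = z := by
        intro s
        by_cases hs : s ≤ N
        · by_cases hsS : s ∈ S
          · exact ⟨0, fun _ => by simp [hy0 s hsS]⟩
          · obtain ⟨z, hz⟩ := hLa s hs hsS
            refine ⟨pullCoeff e' m k y s * ((s.choose d : ℕ) * z), fun _ => ?_⟩
            push_cast
            rw [← hz]
            ring
        · exact ⟨0, fun h => absurd (Finset.mem_range.mp h) (by omega)⟩
      choose z hz using this
      refine ⟨∑ s ∈ Finset.range (N + 1), z s, ?_⟩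
      rw [Finset.mul_sum, Int.cast_sum]
      exact Finset.sum_congr rfl fun s hs => hz s hs
    · have h1 := hsmall (Function.extend e' y 0) (by
        intro n
        by_cases hn : ∃ j, e' j = n
        · obtain ⟨j, rfl⟩ := hn
          rw [he'.extend_apply]
          exact hyb j
        · rw [Function.extend_apply' _ _ _ hn]
          simp) d hd
      have h2 : ∑ n ∈ I, ((Function.extend e' y 0 n : ℤ) : ℚ) * diffSeq a m k d n
          = ∑ j, (y j : ℚ) * diffSeq a m k d (e' j) := by
        rw [← Finset.sum_subset (s₁ := Finset.univ.image e'), Finset.sum_image he'.injOn]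
        · exact Finset.sum_congr rfl fun j _ => by rw [he'.extend_apply]
        · intro n hn
          obtain ⟨j, -, rfl⟩ := Finset.mem_image.mp hn
          exact (e j).2
        · intro n _ hn
          rw [Function.extend_apply' _ _ _ (by simpa using hn)]
          simp
      rwa [h2] at h1
  have hfin : ∀ j, (y j : ℚ) = 0 := by
    refine Fintype.linearIndependent_iff.mp hind (fun j => (y j : ℚ)) ?_
    ext d
    have := hzero d (by have := d.2; omega)
    rw [Finset.sum_apply]
    exact this
  apply huv
  ext j
  have := hfin j
  simp only [hy, Pi.sub_apply, Int.cast_eq_zero] at this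
  linarith

/-- A nontrivial rational combination of the `binom(n, d)`, `d ≤ D`, is a nonzero polynomial in `n`
of degree at most `D`. -/
lemma exists_polynomial_of_choose {D : ℕ} {γ : Fin (D + 1) → ℚ} (hγ : γ ≠ 0) :
    ∃ C : ℚ[X], C ≠ 0 ∧ C.natDegree ≤ D ∧
      ∀ n : ℕ, C.eval (n : ℚ) = ∑ d, γ d * (n.choose d : ℚ) := by
  set C : ℚ[X] := ∑ d : Fin (D + 1), Polynomial.C (γ d / (d : ℕ).factorial) * descPochhammer ℚ d
    with hC
  have hev : ∀ n : ℕ, C.eval (n : ℚ) = ∑ d, γ d * (n.choose d : ℚ) := by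
    intro n
    rw [hC, eval_finsetSum]
    refine Finset.sum_congr rfl fun d _ => ?_
    rw [eval_mul, eval_C, descPochhammer_eval_eq_descFactorial, Nat.descFactorial_eq_factorial_mul_choose]
    have : ((d : ℕ).factorial : ℚ) ≠ 0 := by positivity
    push_cast
    field_simp
  refine ⟨C, ?_, ?_, hev⟩
  · rintro h0
    apply hγ
    have hall : ∀ l : ℕ, ∀ d : Fin (D + 1), (d : ℕ) = l → γ d = 0 := by
      intro l
      induction l using Nat.strong_induction_on with
      | _ l IH =>
      intro d hd
      have h1 := hev l
      rw [h0, eval_zero, Finset.sum_eq_single_of_mem d (Finset.mem_univ _), hd] at h1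
      · simpa using h1.symm
      · intro d' _ hne
        rcases lt_trichotomy (d' : ℕ) l with h | h | h
        · rw [IH _ h d' rfl, zero_mul]
        · exact absurd (Fin.ext (h.trans hd.symm)) hne
        · rw [Nat.choose_eq_zero_of_lt h]
          simp
    ext d
    exact hall d d rfl
  · refine natDegree_sum_le_of_forall_le _ _ fun d _ => ?_
    refine (natDegree_C_mul_le _ _).trans ?_
    rw [descPochhammer_natDegree]
    have := d.2
    omega

/-! ### The holomorphic function and its differential equation -/

/-- The sum of a series of radius of convergence at least `1`, characterized by its derivatives at
the origin. -/
lemma exists_holomorphic {a : ℕ → ℂ} (hconv : 1 ≤ seriesRadius a) :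
    ∃ F : ℂ → ℂ, DifferentiableOn ℂ F (Metric.ball 0 1) ∧
      ∀ n, iteratedDeriv n F 0 = n.factorial * a n := by
  set P := FormalMultilinearSeries.ofScalars ℂ a with hP
  have hnorm : ∀ n, ‖P n‖ = ‖a n‖ := by
    intro n
    rw [FormalMultilinearSeries.norm_apply_eq_norm_coef, FormalMultilinearSeries.coeff_ofScalars]
  have hr : 1 ≤ P.radius := by
    refine le_trans hconv (iSup₂_le ?_)
    rintro r ⟨C, hC⟩
    exact P.le_radius_of_bound C fun n => by rw [hnorm]; exact hC n
  have hF : HasFPowerSeriesOnBall P.sum P 0 1 :=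
    (P.hasFPowerSeriesOnBall (lt_of_lt_of_le one_pos hr)).mono one_pos hr
  refine ⟨P.sum, ?_, ?_⟩
  · have := hF.differentiableOn
    rwa [← ENNReal.ofReal_one, Metric.eball_ofReal] at this
  · intro n
    have h1 := hF.factorial_smul 1 n
    rw [iteratedDeriv_eq_iteratedFDeriv, ← h1]
    have h2 : (P n fun _ => (1 : ℂ)) = a n := by
      have : P.coeff n = a n := FormalMultilinearSeries.coeff_ofScalars
      rw [← this]
      rfl
    rw [h2, nsmul_eq_mul]

lemma analyticOnNhd_iteratedDeriv {F : ℂ → ℂ} {U : Set ℂ} (hU : IsOpen U)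
    (hF : DifferentiableOn ℂ F U) (n : ℕ) : AnalyticOnNhd ℂ (iteratedDeriv n F) U := by
  rw [iteratedDeriv_eq_iterate]
  exact (hF.analyticOnNhd hU).iterated_deriv n

lemma iteratedDeriv_iteratedDeriv' (F : ℂ → ℂ) (n k : ℕ) :
    iteratedDeriv n (iteratedDeriv k F) = iteratedDeriv (n + k) F := by
  simp only [iteratedDeriv_eq_iterate, ← Function.iterate_add_apply]

lemma iteratedDeriv_polynomial_zero (P : ℂ[X]) (l : ℕ) :
    iteratedDeriv l (fun z => P.eval z) 0 = l.factorial * P.coeff l := by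
  have h : ∀ l, iteratedDeriv l (fun z => P.eval z) = fun z => (derivative^[l] P).eval z := by
    intro l
    induction l with
    | zero => simp
    | succ l ih =>
      rw [iteratedDeriv_succ, ih]
      ext z
      rw [Polynomial.deriv, Function.iterate_succ_apply']
  rw [h]
  simp only
  rw [← coeff_zero_eq_eval_zero, Polynomial.coeff_iterate_derivative, zero_add, Nat.descFactorial_self,
    nsmul_eq_mul]

/-- The formal differential equation holds for the sum of the series in the unit disk, because all
Taylor coefficients of the left-hand side at `0` vanish. -/
lemma exists_ode {a : ℕ → ℚ} (hDF : IsDFinite (PowerSeries.mk a)) {F : ℂ → ℂ}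
    (hF : DifferentiableOn ℂ F (Metric.ball 0 1))
    (hFa : ∀ n, iteratedDeriv n F 0 = n.factorial * (a n : ℂ)) :
    ∃ (p : ℕ) (A : Fin (p + 1) → ℂ[X]), A 0 ≠ 0 ∧ ∀ z ∈ Metric.ball (0 : ℂ) 1,
      ∑ i : Fin (p + 1), (A i).eval z * iteratedDeriv (p - i) F z = 0 := by
  obtain ⟨p, A, hA0, hA⟩ := hDF
  refine ⟨p, fun i => (A i).map (algebraMap ℚ ℂ), (Polynomial.map_ne_zero_iff
    (algebraMap ℚ ℂ).injective).mpr hA0, ?_⟩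
  set g : ℂ → ℂ := fun z => ∑ i : Fin (p + 1),
    ((A i).map (algebraMap ℚ ℂ)).eval z * iteratedDeriv (p - i) F z with hg
  have hFan : ∀ k, AnalyticOnNhd ℂ (iteratedDeriv k F) (Metric.ball 0 1) :=
    analyticOnNhd_iteratedDeriv Metric.isOpen_ball hF
  have hpoly : ∀ i : Fin (p + 1), Differentiable ℂ
      (fun z => ((A i).map (algebraMap ℚ ℂ)).eval z) := fun i => Polynomial.differentiable _
  have hgd : DifferentiableOn ℂ g (Metric.ball 0 1) := by
    refine DifferentiableOn.fun_sum fun i _ => ?_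
    exact (hpoly i).differentiableOn.mul (hFan _).differentiableOn
  have h0 : (0 : ℂ) ∈ Metric.ball (0 : ℂ) 1 := Metric.mem_ball_self one_pos
  have hpc : ∀ (i : Fin (p + 1)) (n : ℕ), ContDiffAt ℂ n
      (fun z => ((A i).map (algebraMap ℚ ℂ)).eval z) 0 := fun i n =>
    (((hpoly i).differentiableOn (s := Metric.ball 0 1)).analyticOnNhd
      Metric.isOpen_ball 0 h0).contDiffAt
  have hFc : ∀ k n : ℕ, ContDiffAt ℂ n (iteratedDeriv k F) 0 := fun k n =>
    (hFan k 0 h0).contDiffAt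
  have hcoef : ∀ n, iteratedDeriv n g 0 = 0 := by
    intro n
    have h1 : iteratedDeriv n g 0 = ∑ i : Fin (p + 1), ∑ l ∈ Finset.range (n + 1),
        (n.factorial : ℂ) * (((A i).coeff l * ((n - l + (p - i)).descFactorial (p - i) *
          a (n - l + (p - i))) : ℚ) : ℂ) := by
      rw [hg, iteratedDeriv_fun_sum fun i _ => (hpc i n).mul (hFc _ n)]
      refine Finset.sum_congr rfl fun i _ => ?_
      rw [iteratedDeriv_fun_mul (hpc i n) (hFc _ n)]
      refine Finset.sum_congr rfl fun l hl => ?_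
      have hl' : l ≤ n := Nat.lt_succ_iff.mp (Finset.mem_range.mp hl)
      rw [iteratedDeriv_iteratedDeriv', iteratedDeriv_polynomial_zero, hFa, Polynomial.coeff_map]
      have h2 : (n.factorial : ℂ) = n.choose l * l.factorial * (n - l).factorial := by
        exact_mod_cast (Nat.choose_mul_factorial_mul_factorial hl').symm
      have h3 : ((n - l + (p - i)).factorial : ℂ) =
          (n - l).factorial * (n - l + (p - i)).descFactorial (p - i) := by
        have := Nat.factorial_mul_descFactorial (n := n - l + (p - i)) (k := p - i) (by omega)
        rw [Nat.add_sub_cancel] at this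
        exact_mod_cast this.symm
      rw [h2, h3]
      simp only [eq_ratCast]
      push_cast
      ring
    have h4 := congrArg (PowerSeries.coeff n) hA
    rw [map_sum, map_zero] at h4
    have h5 : ∀ i : Fin (p + 1), PowerSeries.coeff n
        ((A i : PowerSeries ℚ) * (psDeriv^[p - i.val] (PowerSeries.mk a))) =
        ∑ l ∈ Finset.range (n + 1), (A i).coeff l *
          ((n - l + (p - i)).descFactorial (p - i) * a (n - l + (p - i))) := by
      intro i
      rw [PowerSeries.coeff_mul, Finset.Nat.sum_antidiagonal_eq_sum_range_succ_mk]
      refine Finset.sum_congr rfl fun l _ => ?_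
      rw [Polynomial.coeff_coe, coeff_psDeriv_iterate, PowerSeries.coeff_mk]
    rw [Finset.sum_congr rfl fun i _ => h5 i] at h4
    have h7 := congrArg (fun x : ℚ => (x : ℂ)) h4
    rw [h1]
    simp only [← Finset.mul_sum, ← Rat.cast_sum]
    simp only [Rat.cast_zero] at h7
    rw [h7, mul_zero]
  intro z hz
  have h6 := Complex.hasSum_taylorSeries_on_ball hgd hz
  simp only [hcoef, smul_zero] at h6
  exact h6.unique hasSum_zero

/-! ### Analytic continuation to discs free of singularities -/

/-- The majorant estimate for the derivatives of a solution of a linear differential equation whose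
normalized coefficients have Taylor coefficients at most `K * R ^ (-l)`. -/
lemma growth_bound {p : ℕ} {s : ℕ → ℝ} (hs : ∀ n, 0 ≤ s n) {K R q : ℝ} (hK : 0 ≤ K) (hR : 0 < R)
    (hq : 1 ≤ q) (hqR : 1 < q * R)
    (h : ∀ n, s (n + p) ≤ ∑ i : Fin p, ∑ l ∈ Finset.range (n + 1),
      (n.choose l : ℝ) * (l.factorial * K / R ^ l) * s (n - l + (p - 1 - i))) :
    ∃ C, 0 ≤ C ∧ ∀ n, s n ≤ n.factorial * (C * q ^ n) := by
  set x := 1 / (q * R) with hx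
  have hx0 : 0 ≤ x := by positivity
  have hx1 : x < 1 := by
    rw [hx, div_lt_one (by positivity)]
    exact hqR
  set G := (1 - x)⁻¹ with hG
  have hG0 : 0 ≤ G := inv_nonneg.mpr (by linarith)
  -- For `n + p ≥ M`, the quotient of `(n + p)!` by `(n + p - 1)!` absorbs the factor `p * K * G`.
  obtain ⟨M, hM⟩ := exists_nat_ge (p * K * G)
  set C := ∑ n ∈ Finset.range (M + p), s n with hC
  have hC0 : 0 ≤ C := Finset.sum_nonneg fun n _ => hs n
  refine ⟨C, hC0, ?_⟩
  intro n
  induction n using Nat.strong_induction_on with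
  | _ n IH =>
  by_cases hn : n < M + p
  · have h1 : s n ≤ C := Finset.single_le_sum (fun i _ => hs i) (Finset.mem_range.mpr hn)
    have h2 : (1 : ℝ) ≤ n.factorial := by exact_mod_cast Nat.one_le_iff_ne_zero.mpr n.factorial_ne_zero
    have h3 : (1 : ℝ) ≤ q ^ n := one_le_pow₀ hq
    calc s n ≤ 1 * (C * 1) := by linarith
      _ ≤ n.factorial * (C * q ^ n) := by gcongr
  · obtain ⟨n, rfl⟩ : ∃ l, n = l + p := ⟨n - p, by omega⟩
    have hterm : ∀ i : Fin p, ∀ l ∈ Finset.range (n + 1),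
        (n.choose l : ℝ) * (l.factorial * K / R ^ l) * s (n - l + (p - 1 - i))
          ≤ (K * C * (n + p - 1).factorial * q ^ (n + p)) * x ^ l := by
      intro i l hl
      have hi := i.2
      have hl' : l ≤ n := Nat.lt_succ_iff.mp (Finset.mem_range.mp hl)
      have h1 := IH (n - l + (p - 1 - i)) (by omega)
      have h2 : n.choose l * l.factorial * (n - l + (p - 1 - i)).factorial
          ≤ (n + p - 1).factorial := by
        rw [mul_comm (n.choose l), ← Nat.descFactorial_eq_factorial_mul_choose]
        have h3 := Nat.factorial_mul_descFactorial (n := n + (p - 1 - i)) (k := l) (by omega)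
        have h4 : n + (p - 1 - i) - l = n - l + (p - 1 - i) := by omega
        rw [h4] at h3
        calc _ ≤ (n + (p - 1 - i)).descFactorial l * (n - l + (p - 1 - i)).factorial :=
              Nat.mul_le_mul_right _ (Nat.descFactorial_le l (by omega))
          _ = (n + (p - 1 - i)).factorial := by rw [mul_comm, h3]
          _ ≤ _ := Nat.factorial_le (by omega)
      have h2' : (n.choose l : ℝ) * l.factorial * (n - l + (p - 1 - i)).factorial
          ≤ (n + p - 1).factorial := by exact_mod_cast h2
      have h5 : q ^ (n - l + (p - 1 - i)) * q ^ l ≤ q ^ (n + p) := by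
        rw [← pow_add]
        exact pow_le_pow_right₀ hq (by omega)
      have h6 : x ^ l = 1 / (q ^ l * R ^ l) := by
        rw [hx, div_pow, one_pow, mul_pow]
      have h7 : q ^ (n - l + (p - 1 - i)) / R ^ l ≤ q ^ (n + p) * x ^ l := by
        rw [h6, mul_one_div, div_le_div_iff₀ (by positivity) (by positivity)]
        calc _ = (q ^ (n - l + (p - 1 - i)) * q ^ l) * R ^ l := by ring
          _ ≤ _ := by gcongr
      calc _ ≤ (n.choose l : ℝ) * (l.factorial * K / R ^ l) *
            ((n - l + (p - 1 - i)).factorial * (C * q ^ (n - l + (p - 1 - i)))) := by gcongr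
        _ = ((n.choose l : ℝ) * l.factorial * (n - l + (p - 1 - i)).factorial) * (K * C) *
            (q ^ (n - l + (p - 1 - i)) / R ^ l) := by ring
        _ ≤ ((n + p - 1).factorial) * (K * C) * (q ^ (n + p) * x ^ l) := by
            gcongr
        _ = _ := by ring
    have hgeo : ∀ n, ∑ l ∈ Finset.range n, x ^ l ≤ G := by
      intro n
      rw [hG, ← tsum_geometric_of_lt_one hx0 hx1]
      exact (summable_geometric_of_lt_one hx0 hx1).sum_le_tsum _ fun _ _ => by positivity
    rcases Nat.eq_zero_or_pos p with rfl | hp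
    · refine (h n).trans ?_
      simp only [Finset.univ_eq_empty, Finset.sum_empty]
      positivity
    calc s (n + p) ≤ ∑ i : Fin p, ∑ l ∈ Finset.range (n + 1),
          (K * C * (n + p - 1).factorial * q ^ (n + p)) * x ^ l :=
          (h n).trans (Finset.sum_le_sum fun i _ => Finset.sum_le_sum (hterm i))
      _ = p * (K * C * (n + p - 1).factorial * q ^ (n + p)) *
          ∑ l ∈ Finset.range (n + 1), x ^ l := by
          simp only [← Finset.mul_sum, Finset.sum_const, Finset.card_univ, Fintype.card_fin,
            nsmul_eq_mul]
          ring
      _ ≤ p * (K * C * (n + p - 1).factorial * q ^ (n + p)) * G := by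
          gcongr
          exact hgeo _
      _ = (p * K * G) * ((n + p - 1).factorial * (C * q ^ (n + p))) := by ring
      _ ≤ ((n + p : ℕ) : ℝ) * ((n + p - 1).factorial * (C * q ^ (n + p))) := by
          gcongr
          refine hM.trans ?_
          exact_mod_cast (by omega : M ≤ n + p)
      _ = _ := by
          rw [← Nat.mul_factorial_pred (show n + p ≠ 0 by omega)]
          push_cast
          ring

/-- If the disk of radius `R` about a point `c` of the unit disk contains no zero of the leading
coefficient, a solution in the unit disk extends to the disk of radius `q⁻¹` about `c`, for
`q⁻¹ < R₀ < R` and `q⁻¹ ≤ 1`: by `growth_bound`, the Taylor series at `c` converges there. -/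
lemma exists_extension_ball {F : ℂ → ℂ} (hF : DifferentiableOn ℂ F (Metric.ball 0 1))
    {p : ℕ} {A : Fin (p + 1) → ℂ[X]} (hode : ∀ z ∈ Metric.ball (0 : ℂ) 1,
      ∑ i : Fin (p + 1), (A i).eval z * iteratedDeriv (p - i) F z = 0)
    {c : ℂ} (hc : c ∈ Metric.ball (0 : ℂ) 1) {R R₀ q : ℝ} (hR₀ : 0 < R₀) (hR : R₀ < R) (hq : 1 ≤ q)
    (hqR : 1 < q * R₀) (hA : ∀ z ∈ Metric.ball c R, (A 0).eval z ≠ 0) :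
    ∃ φ : ℂ → ℂ, DifferentiableOn ℂ φ (Metric.ball c q⁻¹) ∧
      Set.EqOn φ F (Metric.ball c q⁻¹ ∩ Metric.ball 0 1) := by
  have hq0 : 0 < q := lt_of_lt_of_le one_pos hq
  let B : Fin p → ℂ → ℂ := fun i z => -(A i.succ).eval z / (A 0).eval z
  have hBd : ∀ i, DifferentiableOn ℂ (B i) (Metric.ball c R) := fun i =>
    (Polynomial.differentiable (A i.succ)).neg.differentiableOn.div
      (Polynomial.differentiable (A 0)).differentiableOn hA
  have hsub : Metric.closedBall c R₀ ⊆ Metric.ball c R := Metric.closedBall_subset_ball hR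
  have hBK : ∃ K, 0 ≤ K ∧ ∀ i, ∀ z ∈ Metric.sphere c R₀, ‖B i z‖ ≤ K := by
    have : ∀ i, ∃ K, ∀ z ∈ Metric.sphere c R₀, ‖B i z‖ ≤ K := fun i =>
      (isCompact_sphere c R₀).exists_bound_of_continuousOn
        ((hBd i).continuousOn.mono (Metric.sphere_subset_closedBall.trans hsub))
    choose K hK using this
    refine ⟨∑ i, |K i|, Finset.sum_nonneg fun _ _ => abs_nonneg _, fun i z hz => ?_⟩
    exact ((hK i z hz).trans (le_abs_self _)).trans
      (Finset.single_le_sum (f := fun i => |K i|) (fun _ _ => abs_nonneg _) (Finset.mem_univ i))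
  obtain ⟨K, hK0, hK⟩ := hBK
  have hBder : ∀ i l, ‖iteratedDeriv l (B i) c‖ ≤ l.factorial * K / R₀ ^ l := fun i l =>
    Complex.norm_iteratedDeriv_le_of_forall_mem_sphere_norm_le l hR₀
      ((hBd i).mono hsub |>.diffContOnCl_ball subset_rfl) (hK i)
  have hcR : c ∈ Metric.ball c R := Metric.mem_ball_self (hR₀.trans hR)
  have hev : iteratedDeriv p F =ᶠ[nhds c]
      fun z => ∑ i : Fin p, B i z * iteratedDeriv (p - 1 - i) F z := by
    filter_upwards [Metric.isOpen_ball.mem_nhds hc, Metric.isOpen_ball.mem_nhds hcR] with z hz hzR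
    have h1 := hode z hz
    rw [Fin.sum_univ_succ] at h1
    have h2 := hA z hzR
    simp only [Fin.val_zero, Nat.sub_zero, Fin.val_succ] at h1
    have h3 : ∀ i : Fin p, B i z * iteratedDeriv (p - 1 - i) F z =
        - ((A i.succ).eval z * iteratedDeriv (p - (i + 1)) F z) / (A 0).eval z := by
      intro i
      simp only [B]
      rw [show p - 1 - (i : ℕ) = p - (i + 1) by omega]
      ring
    rw [Finset.sum_congr rfl fun i _ => h3 i, ← Finset.sum_div, eq_div_iff h2,
      Finset.sum_neg_distrib]
    linear_combination h1
  have hFan : ∀ k, AnalyticAt ℂ (iteratedDeriv k F) c := fun k =>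
    analyticOnNhd_iteratedDeriv Metric.isOpen_ball hF k c hc
  have hBan : ∀ i, AnalyticAt ℂ (B i) c := fun i =>
    (hBd i).analyticOnNhd Metric.isOpen_ball c hcR
  obtain ⟨C, hC0, hC⟩ := growth_bound (p := p) (s := fun n => ‖iteratedDeriv n F c‖)
    (fun _ => norm_nonneg _) hK0 hR₀ hq hqR (by
      intro n
      have h1 := hev.iteratedDeriv_eq n
      rw [iteratedDeriv_iteratedDeriv', iteratedDeriv_fun_sum
        (f := fun i z => B i z * iteratedDeriv (p - 1 - i) F z) fun i _ =>
        ((hBan i).mul (hFan _)).contDiffAt] at h1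
      rw [h1]
      refine (norm_sum_le _ _).trans (Finset.sum_le_sum fun i _ => ?_)
      rw [iteratedDeriv_fun_mul (hBan i).contDiffAt (hFan _).contDiffAt]
      refine (norm_sum_le _ _).trans (Finset.sum_le_sum fun l _ => ?_)
      rw [iteratedDeriv_iteratedDeriv', norm_mul, norm_mul, Complex.norm_natCast]
      gcongr
      exact hBder i l)
  set P := FormalMultilinearSeries.ofScalars ℂ
    (fun n => (n.factorial : ℂ)⁻¹ * iteratedDeriv n F c) with hP
  have hrad : ENNReal.ofReal q⁻¹ ≤ P.radius := by
    refine P.le_radius_of_bound C fun n => ?_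
    rw [FormalMultilinearSeries.norm_apply_eq_norm_coef, FormalMultilinearSeries.coeff_ofScalars,
      norm_mul, norm_inv, Complex.norm_natCast, Real.coe_toNNReal _ (by positivity), inv_pow]
    have h1 : (0 : ℝ) < n.factorial := by positivity
    calc _ ≤ (n.factorial : ℝ)⁻¹ * (n.factorial * (C * q ^ n)) * (q ^ n)⁻¹ := by
          gcongr
          exact hC n
      _ = C := by field_simp
      _ ≤ C := le_rfl
  have hpos : 0 < ENNReal.ofReal q⁻¹ := by
    rw [ENNReal.ofReal_pos]
    positivity
  have hPs := (P.hasFPowerSeriesOnBall (hpos.trans_le hrad)).mono hpos hrad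
  have hPd : DifferentiableOn ℂ P.sum (Metric.ball 0 q⁻¹) := by
    have := hPs.differentiableOn
    rwa [Metric.eball_ofReal] at this
  have hφd : DifferentiableOn ℂ (fun z => P.sum (z - c)) (Metric.ball c q⁻¹) := by
    refine hPd.comp (differentiableOn_id.sub_const c) fun z hz => ?_
    simpa [dist_eq_norm] using hz
  refine ⟨_, hφd, ?_⟩
  have hopen : IsOpen (Metric.ball c q⁻¹ ∩ Metric.ball (0 : ℂ) 1) :=
    Metric.isOpen_ball.inter Metric.isOpen_ball
  refine AnalyticOnNhd.eqOn_of_preconnected_of_eventuallyEq (z₀ := c)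
    ((hφd.mono Set.inter_subset_left).analyticOnNhd hopen)
    ((hF.mono Set.inter_subset_right).analyticOnNhd hopen)
    ((convex_ball _ _).inter (convex_ball _ _)).isPreconnected
    ⟨Metric.mem_ball_self (by positivity), hc⟩ ?_
  obtain ⟨ε, hε, hεb⟩ := Metric.isOpen_ball.mem_nhds hc |> Metric.mem_nhds_iff.mp
  filter_upwards [Metric.ball_mem_nhds c hε, Metric.ball_mem_nhds c (inv_pos.mpr hq0)] with z hz hz'
  have h1 := Complex.hasSum_taylorSeries_on_ball (hF.mono hεb) hz
  have h2 := hPs.hasSum (y := z - c) (by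
    rw [Metric.eball_ofReal]
    simpa [dist_eq_norm] using hz')
  rw [zero_add] at h2
  have h3 : ∀ n, P n (fun _ => z - c) =
      (n.factorial : ℂ)⁻¹ • (z - c) ^ n • iteratedDeriv n F c := by
    intro n
    rw [hP, FormalMultilinearSeries.ofScalars_apply_eq]
    simp only [smul_eq_mul]
    ring
  simp only [h3] at h2
  exact h2.unique h1

/-! ### Continuation across the unit circle and Cauchy's formula -/

/-- Near a point of the unit circle away from the zeros of the leading coefficient, the solution
extends across the circle. -/
lemma exists_extension_boundary {F : ℂ → ℂ} (hF : DifferentiableOn ℂ F (Metric.ball 0 1))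
    {p : ℕ} {A : Fin (p + 1) → ℂ[X]} (hode : ∀ z ∈ Metric.ball (0 : ℂ) 1,
      ∑ i : Fin (p + 1), (A i).eval z * iteratedDeriv (p - i) F z = 0)
    {τ : ℝ} (hτ : 0 < τ) (hτ1 : τ ≤ 1) {u : ℂ} (hu : ‖u‖ = 1)
    (hA : ∀ ζ, (A 0).eval ζ = 0 → τ ≤ ‖u - ζ‖) :
    ∃ φ : ℂ → ℂ, DifferentiableOn ℂ φ (Metric.ball u (τ / 4)) ∧
      Set.EqOn φ F (Metric.ball u (τ / 4) ∩ Metric.ball 0 1) := by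
  -- The disk of radius `τ / 2` about `c` contains the one of radius `τ / 4` about `u`.
  set c : ℂ := ((1 - τ / 4 : ℝ) : ℂ) * u with hc
  have hcn : ‖c‖ = 1 - τ / 4 := by
    rw [hc, norm_mul, hu, mul_one, Complex.norm_real, Real.norm_eq_abs, abs_of_nonneg (by linarith)]
  have hcu : ‖u - c‖ = τ / 4 := by
    have : u - c = ((τ / 4 : ℝ) : ℂ) * u := by
      rw [hc]
      push_cast
      ring
    rw [this, norm_mul, hu, mul_one, Complex.norm_real, Real.norm_eq_abs, abs_of_nonneg (by linarith)]
  obtain ⟨φ, hφ, hφF⟩ := exists_extension_ball hF hode (c := c) (R := 3 * τ / 4) (R₀ := 5 * τ / 8)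
    (q := (τ / 2)⁻¹) (by rw [mem_ball_zero_iff, hcn]; linarith) (by linarith) (by linarith)
    (by rw [one_le_inv₀ (by linarith)]; linarith)
    (by rw [inv_mul_eq_div, lt_div_iff₀ (by linarith)]; linarith) (by
      intro z hz h0
      have h1 := hA z h0
      rw [mem_ball_iff_norm, norm_sub_rev] at hz
      have h2 := norm_sub_le_norm_sub_add_norm_sub u c z
      linarith)
  rw [inv_inv] at hφ hφF
  have hsub : Metric.ball u (τ / 4) ⊆ Metric.ball c (τ / 2) := by
    refine Metric.ball_subset_ball' ?_
    rw [dist_eq_norm, hcu]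
    linarith
  exact ⟨φ, hφ.mono hsub, fun z hz => hφF ⟨hsub hz.1, hz.2⟩⟩

/-- Extensions across nearby points of the unit circle agree on their common domain. -/
lemma extension_agree {F φ ψ : ℂ → ℂ} {δ : ℝ} {u v : ℂ} (hv : ‖v‖ = 1)
    (hφ : DifferentiableOn ℂ φ (Metric.ball u δ)) (hψ : DifferentiableOn ℂ ψ (Metric.ball v δ))
    (hφF : Set.EqOn φ F (Metric.ball u δ ∩ Metric.ball 0 1))
    (hψF : Set.EqOn ψ F (Metric.ball v δ ∩ Metric.ball 0 1)) (huv : ‖v - u‖ < δ) (hδ : δ ≤ 1) :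
    Set.EqOn φ ψ (Metric.ball u δ ∩ Metric.ball v δ) := by
  set ε := (δ - ‖v - u‖) / 2 with hε
  have hε0 : 0 < ε := by linarith
  have hε1 : ε ≤ 1 / 2 := by
    have := norm_nonneg (v - u)
    linarith
  set w : ℂ := ((1 - ε : ℝ) : ℂ) * v with hw
  have hwn : ‖w‖ = 1 - ε := by
    rw [hw, norm_mul, hv, mul_one, Complex.norm_real, Real.norm_eq_abs, abs_of_nonneg (by linarith)]
  have hwv : ‖w - v‖ = ε := by
    have : w - v = -(((ε : ℝ) : ℂ) * v) := by
      rw [hw]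
      push_cast
      ring
    rw [this, norm_neg, norm_mul, hv, mul_one, Complex.norm_real, Real.norm_eq_abs,
      abs_of_nonneg (by linarith)]
  have hwu : ‖w - u‖ < δ := by
    have := norm_sub_le_norm_sub_add_norm_sub w v u
    linarith
  have hopen : IsOpen (Metric.ball u δ ∩ Metric.ball v δ) :=
    Metric.isOpen_ball.inter Metric.isOpen_ball
  have hw1 : w ∈ Metric.ball u δ := mem_ball_iff_norm.mpr hwu
  have hw2 : w ∈ Metric.ball v δ := mem_ball_iff_norm.mpr (by
    have := norm_nonneg (v - u)
    linarith)
  have hw3 : w ∈ Metric.ball (0 : ℂ) 1 := mem_ball_zero_iff.mpr (by linarith)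
  refine AnalyticOnNhd.eqOn_of_preconnected_of_eventuallyEq (z₀ := w)
    ((hφ.mono Set.inter_subset_left).analyticOnNhd hopen)
    ((hψ.mono Set.inter_subset_right).analyticOnNhd hopen)
    ((convex_ball _ _).inter (convex_ball _ _)).isPreconnected ⟨hw1, hw2⟩ ?_
  filter_upwards [Metric.isOpen_ball.mem_nhds hw1, Metric.isOpen_ball.mem_nhds hw2,
    Metric.isOpen_ball.mem_nhds hw3] with z h1 h2 h3
  rw [hφF ⟨h1, h3⟩, hψF ⟨h2, h3⟩]

/-- Dirichlet's simultaneous approximation, for finitely many points of the unit circle. -/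
lemma exists_pow_near_one (V : Finset ℂ) (hV : ∀ v ∈ V, ‖v‖ = 1) {ε : ℝ} (hε : 0 < ε) :
    ∃ m : ℕ, 0 < m ∧ ∀ v ∈ V, ‖v ^ m - 1‖ < ε := by
  let x : V → Circle := fun v => ⟨v, by simp [Submonoid.unitSphere, hV v v.2]⟩
  have h1 := mapClusterPt_one_atTop_pow x
  have hU : {y : V → Circle | ∀ v, ‖(y v : ℂ) - 1‖ < ε} ∈ nhds (1 : V → Circle) := by
    apply IsOpen.mem_nhds
    · rw [Set.ofPred_forall]
      refine isOpen_iInter_of_finite fun v => ?_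
      exact isOpen_lt (by fun_prop) continuous_const
    · intro v
      simpa using hε
  obtain ⟨m, hm, hm'⟩ := ((h1.frequently hU).and_eventually (eventually_gt_atTop 0)).exists
  refine ⟨m, hm', fun v hv => ?_⟩
  have h2 : ‖(((x ^ m) ⟨v, hv⟩ : Circle) : ℂ) - 1‖ < ε := hm ⟨v, hv⟩
  rwa [Pi.pow_apply, Circle.coe_pow] at h2

/-- Cauchy's formula for the Taylor coefficients at the origin, applied to a linear combination of
them. -/
lemma sum_coeff_eq_integral {a : ℕ → ℂ} {F : ℂ → ℂ} (hF : DifferentiableOn ℂ F (Metric.ball 0 1))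
    (hFa : ∀ n, iteratedDeriv n F 0 = n.factorial * a n) {x : ℝ} (hx : 0 < x) (R : ℂ[X]) :
    2 * Real.pi * ∑ n ∈ R.support, R.coeff n * a n =
      ∫ θ in (0 : ℝ)..2 * Real.pi, F (Complex.exp (-x + θ * Complex.I)) *
        R.eval (Complex.exp (-(-x + θ * Complex.I))) := by
  have hcirc : ∀ n : ℕ, ∫ θ in (0 : ℝ)..2 * Real.pi, F (Complex.exp (-x + θ * Complex.I)) *
        Complex.exp (-(-x + θ * Complex.I)) ^ n = 2 * Real.pi * a n := by
    intro n
    have hR : (0 : ℝ) < Real.exp (-x) := Real.exp_pos _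
    have hR1 : Real.exp (-x) < 1 := Real.exp_lt_one_iff.mpr (by linarith)
    have h1 := DifferentiableOn.circleIntegral_one_div_sub_center_pow_smul hR n
      (hF.mono (Metric.closedBall_subset_ball hR1))
    rw [hFa, circleIntegral] at h1
    have hmap : ∀ θ : ℝ, circleMap 0 (Real.exp (-x)) θ = Complex.exp (-x + θ * Complex.I) := by
      intro θ
      rw [circleMap_zero, Complex.exp_add]
      push_cast
      rfl
    have h2 : ∀ θ : ℝ, deriv (circleMap 0 (Real.exp (-x))) θ •
        ((1 / (circleMap 0 (Real.exp (-x)) θ - 0) ^ (n + 1)) • F (circleMap 0 (Real.exp (-x)) θ)) =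
        Complex.I * (F (Complex.exp (-x + θ * Complex.I)) *
        Complex.exp (-(-x + θ * Complex.I)) ^ n) := by
      intro θ
      rw [deriv_circleMap, hmap, Complex.exp_neg, sub_zero]
      have := Complex.exp_ne_zero (-x + θ * Complex.I)
      simp only [smul_eq_mul, inv_pow]
      rw [pow_succ]
      field_simp
    simp only [h2] at h1
    rw [intervalIntegral.integral_const_mul] at h1
    have hf : (n.factorial : ℂ) ≠ 0 := Nat.cast_ne_zero.mpr n.factorial_ne_zero
    refine mul_left_cancel₀ Complex.I_ne_zero (h1.trans ?_)
    simp only [smul_eq_mul]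
    field_simp
  have hexp : ∀ θ : ℝ, Complex.exp (-x + θ * Complex.I) ∈ Metric.ball (0 : ℂ) 1 := by
    intro θ
    rw [mem_ball_zero_iff, Complex.norm_exp]
    simpa using hx
  have hcont : Continuous fun θ : ℝ => F (Complex.exp (-x + θ * Complex.I)) :=
    hF.continuousOn.comp_continuous (by fun_prop) hexp
  simp only [Polynomial.eval_eq_sum, Polynomial.sum_def, Finset.mul_sum]
  rw [intervalIntegral.integral_finsetSum]
  · refine Finset.sum_congr rfl fun n _ => ?_
    have h3 := hcirc n
    have h4 : ∀ θ : ℝ, F (Complex.exp (-x + θ * Complex.I)) *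
        (R.coeff n * Complex.exp (-(-x + θ * Complex.I)) ^ n) = R.coeff n *
        (F (Complex.exp (-x + θ * Complex.I)) * Complex.exp (-(-x + θ * Complex.I)) ^ n) := by
      intro θ
      ring
    simp only [h4]
    rw [intervalIntegral.integral_const_mul, h3]
    ring
  · intro n _
    exact (hcont.mul (by fun_prop)).intervalIntegrable _ _

/-! ### Geometry near the unit circle -/

/-- The points of the unit circle close to a zero of `A` can be brought simultaneously close to
`1` by taking an `m`-th power. -/
lemma exists_near {A : ℂ[X]} (hA : A ≠ 0) :
    ∃ m : ℕ, 0 < m ∧ ∃ τ : ℝ, 0 < τ ∧ τ ≤ 1 ∧ ∀ u : ℂ, ‖u‖ = 1 →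
      (¬ ∀ ζ, A.eval ζ = 0 → 2 * τ ≤ ‖u - ζ‖) → ∀ z, ‖z - u‖ ≤ τ / 8 →
        ‖(z⁻¹) ^ m - 1‖ ≤ 1 / 100 := by
  classical
  set V : Finset ℂ := (A.roots.toFinset.filter (· ≠ 0)).image fun ζ => ζ / ‖ζ‖ with hV
  have hV1 : ∀ v ∈ V, ‖v‖ = 1 := by
    intro v hv
    obtain ⟨ζ, hζ, rfl⟩ := Finset.mem_image.mp hv
    have h0 := (Finset.mem_filter.mp hζ).2
    simp [h0]
  obtain ⟨m, hm, hmV⟩ := exists_pow_near_one V hV1 (ε := 1 / 100) (by norm_num)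
  refine ⟨m, hm, ?_⟩
  have hloc : ∀ᶠ δ : ℝ in nhdsWithin 0 (Set.Ioi 0), ∀ v ∈ V, ∀ z, ‖z - v‖ < δ →
      ‖(z⁻¹) ^ m - 1‖ < 1 / 100 := by
    rw [Filter.eventually_all_finset]
    intro v hv
    have hv0 : v ≠ 0 := by
      rintro rfl
      simpa using hV1 0 hv
    have hcont : ContinuousAt (fun z : ℂ => ‖(z⁻¹) ^ m - 1‖) v :=
      ((continuousAt_inv₀ hv0).pow m |>.sub continuousAt_const).norm
    have hval : ‖(v⁻¹) ^ m - 1‖ < 1 / 100 := by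
      have h1 : (v⁻¹) ^ m - 1 = -((v⁻¹) ^ m * (v ^ m - 1)) := by
        have : (v⁻¹) ^ m * v ^ m = 1 := by rw [← mul_pow, inv_mul_cancel₀ hv0, one_pow]
        linear_combination this
      rw [h1, norm_neg, norm_mul, norm_pow, norm_inv, hV1 v hv]
      simpa using hmV v hv
    obtain ⟨ε, hε, h2⟩ := Metric.eventually_nhds_iff.mp (hcont.eventually_lt_const hval)
    filter_upwards [Ioo_mem_nhdsGT hε] with δ hδ z hz
    exact h2 (by rw [dist_eq_norm]; exact hz.trans hδ.2)
  obtain ⟨δ, hδ, hδ0⟩ := (hloc.and self_mem_nhdsWithin).exists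
  have hδ0 : (0 : ℝ) < δ := hδ0
  refine ⟨min (δ / 5) (1 / 4), by positivity, (min_le_right _ _).trans (by norm_num), ?_⟩
  set τ := min (δ / 5) (1 / 4) with hτ
  have hτ1 : τ ≤ δ / 5 := min_le_left _ _
  have hτ2 : τ ≤ 1 / 4 := min_le_right _ _
  have hτ0 : 0 < τ := by positivity
  intro u hu hex z hz
  push Not at hex
  obtain ⟨ζ, hζ, hζu⟩ := hex
  have h3 : |‖ζ‖ - 1| < 2 * τ := by
    have := abs_norm_sub_norm_le ζ u
    rw [hu, norm_sub_rev] at this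
    linarith
  have hζ0 : ζ ≠ 0 := by
    rintro rfl
    rw [norm_zero, zero_sub, abs_neg, abs_one] at h3
    linarith
  have hmem : ζ / ‖ζ‖ ∈ V := Finset.mem_image.mpr ⟨ζ, Finset.mem_filter.mpr
    ⟨by rw [Multiset.mem_toFinset, Polynomial.mem_roots hA]; exact hζ, hζ0⟩, rfl⟩
  refine (hδ _ hmem z ?_).le
  have hn : (‖ζ‖ : ℂ) ≠ 0 := by simpa using hζ0
  have h4 : ‖ζ - ζ / ‖ζ‖‖ = |‖ζ‖ - 1| := by
    have : ζ - ζ / ‖ζ‖ = (ζ / ‖ζ‖) * ((‖ζ‖ - 1 : ℝ) : ℂ) := by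
      push_cast
      field_simp
    rw [this, norm_mul, hV1 _ hmem, one_mul, Complex.norm_real, Real.norm_eq_abs]
  have h5 := norm_sub_le_norm_sub_add_norm_sub z u (ζ / ‖ζ‖)
  have h6 := norm_sub_le_norm_sub_add_norm_sub u ζ (ζ / ‖ζ‖)
  linarith

lemma norm_exp_sub_exp_le {η x θ θ' : ℝ} (hη : η ≤ 1 / 2) (hx : |x| ≤ η) (hθ : |θ' - θ| ≤ η) :
    ‖Complex.exp (x + θ' * Complex.I) - Complex.exp (θ * Complex.I)‖ ≤ 4 * η := by
  have h1 : Complex.exp (x + θ' * Complex.I) - Complex.exp (θ * Complex.I) =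
      Complex.exp (θ * Complex.I) * (Complex.exp (x + ((θ' - θ : ℝ) : ℂ) * Complex.I) - 1) := by
    rw [mul_sub, ← Complex.exp_add, mul_one]
    congr 2
    push_cast
    ring
  have h2 : ‖(x : ℂ) + ((θ' - θ : ℝ) : ℂ) * Complex.I‖ ≤ 2 * η := by
    refine (norm_add_le _ _).trans ?_
    rw [norm_mul, Complex.norm_real, Complex.norm_real, Complex.norm_I, mul_one, Real.norm_eq_abs,
      Real.norm_eq_abs]
    linarith
  rw [h1, norm_mul, Complex.norm_exp_ofReal_mul_I, one_mul]
  have := Complex.norm_exp_sub_one_le (x := x + ((θ' - θ : ℝ) : ℂ) * Complex.I) (by linarith)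
  linarith

/-- Cauchy's theorem on a sector, in logarithmic coordinates. -/
lemma sector_integral {φ : ℂ → ℂ} {U : Set ℂ} (hφ : DifferentiableOn ℂ φ U) (hU : IsOpen U)
    (R : ℂ[X]) {x₀ x₁ θ₀ θ₁ : ℝ} (hx : x₀ ≤ x₁) (hθ : θ₀ ≤ θ₁)
    (hmem : ∀ x θ : ℝ, x₀ ≤ x → x ≤ x₁ → θ₀ ≤ θ → θ ≤ θ₁ →
      Complex.exp (x + θ * Complex.I) ∈ U) :
    ∫ θ in θ₀..θ₁, φ (Complex.exp (x₀ + θ * Complex.I)) *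
        R.eval (Complex.exp (-(x₀ + θ * Complex.I))) =
      (∫ θ in θ₀..θ₁, φ (Complex.exp (x₁ + θ * Complex.I)) *
        R.eval (Complex.exp (-(x₁ + θ * Complex.I)))) -
      Complex.I * ((∫ x in x₀..x₁, φ (Complex.exp (x + θ₀ * Complex.I)) *
        R.eval (Complex.exp (-(x + θ₀ * Complex.I)))) -
        ∫ x in x₀..x₁, φ (Complex.exp (x + θ₁ * Complex.I)) *
        R.eval (Complex.exp (-(x + θ₁ * Complex.I)))) := by
  have h := Complex.integral_boundary_rect_eq_zero_of_differentiableOn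
    (fun s => φ (Complex.exp s) * R.eval (Complex.exp (-s))) ⟨x₀, θ₀⟩ ⟨x₁, θ₁⟩ (by
      intro s hs
      rw [Complex.mem_reProdIm, Set.uIcc_of_le hx, Set.uIcc_of_le hθ] at hs
      have h1 := hmem s.re s.im hs.1.1 hs.1.2 hs.2.1 hs.2.2
      rw [Complex.re_add_im] at h1
      have h2 : DifferentiableAt ℂ φ (Complex.exp s) := hφ.differentiableAt (hU.mem_nhds h1)
      have h3 : DifferentiableAt ℂ (fun s => φ (Complex.exp s)) s :=
        DifferentiableAt.comp s h2 Complex.differentiableAt_exp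
      have h4 : DifferentiableAt ℂ (fun s => R.eval (Complex.exp (-s))) s :=
        DifferentiableAt.comp s (R.differentiable.differentiableAt) (by fun_prop)
      exact (h3.mul h4).differentiableWithinAt)
  simp only [smul_eq_mul] at h
  linear_combination Complex.I * h + ((∫ θ in θ₀..θ₁, φ (Complex.exp (x₀ + θ * Complex.I)) *
        R.eval (Complex.exp (-(x₀ + θ * Complex.I)))) -
      (∫ θ in θ₀..θ₁, φ (Complex.exp (x₁ + θ * Complex.I)) *
        R.eval (Complex.exp (-(x₁ + θ * Complex.I))))) * Complex.I_sq

lemma norm_integral_le_mul {f : ℝ → ℂ} {x y c : ℝ} (hxy : x ≤ y) (hxy1 : y - x ≤ 1) (hc : 0 ≤ c)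
    (h : ∀ t, x ≤ t → t ≤ y → ‖f t‖ ≤ c) : ‖∫ t in x..y, f t‖ ≤ c := by
  have h1 := intervalIntegral.norm_integral_le_of_norm_le_const (a := x) (b := y) (f := f) (C := c)
    (by
      intro t ht
      rw [Set.uIoc_of_le hxy] at ht
      exact h t ht.1.le ht.2)
  rw [abs_of_nonneg (by linarith)] at h1
  nlinarith

/-! ### The continued Cauchy integral -/

open Classical in
/-- The linear functional `R ↦ ∑ R.coeff n * a n` is bounded by the supremum of `|R|` on the disc
`|w| ≤ exp (-τ / 32)` and on the points of `|w| ≤ 1 + σ` at which `w ^ m` is close to `1`. By Cauchy's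
formula, the functional is an integral of `F(z) R(1 / z)` over a circle inside the unit disk. Cut this
circle into short arcs. Where the unit circle is away from the zeros of `A 0`, the arc is replaced
by an arc of radius `exp (τ / 32)`, on which `R(1 / z)` is under control, and by two radial segments.
Radial segments of adjacent arcs cancel, unless they are close to a zero of `A 0`; but there, as on
the remaining arcs, `1 / z` is close to `1` after taking `m`-th powers. -/
theorem linear_bound {a : ℕ → ℂ} {F : ℂ → ℂ} (hF : DifferentiableOn ℂ F (Metric.ball 0 1))
    (hFa : ∀ n, iteratedDeriv n F 0 = n.factorial * a n)
    {p : ℕ} {A : Fin (p + 1) → ℂ[X]} (hode : ∀ z ∈ Metric.ball (0 : ℂ) 1,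
      ∑ i : Fin (p + 1), (A i).eval z * iteratedDeriv (p - i) F z = 0)
    {m : ℕ} {τ : ℝ} (hτ : 0 < τ) (hτ1 : τ ≤ 1) (hnear : ∀ u : ℂ, ‖u‖ = 1 →
      (¬ ∀ ζ, (A 0).eval ζ = 0 → 2 * τ ≤ ‖u - ζ‖) → ∀ z, ‖z - u‖ ≤ τ / 8 →
        ‖(z⁻¹) ^ m - 1‖ ≤ 1 / 100) {σ : ℝ} (hσ : 0 < σ) :
    ∃ C : ℝ, 0 ≤ C ∧ ∀ (R : ℂ[X]) (B : ℝ), 0 ≤ B →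
      (∀ w, ‖w‖ ≤ Real.exp (-(τ / 32)) → ‖R.eval w‖ ≤ B) →
      (∀ w, ‖w‖ ≤ 1 + σ → ‖w ^ m - 1‖ ≤ 1 / 100 → ‖R.eval w‖ ≤ B) →
      ‖∑ n ∈ R.support, R.coeff n * a n‖ ≤ C * B := by
  set η := τ / 32 with hη
  have hη0 : 0 < η := by positivity
  have hext : ∀ u : ℂ, ‖u‖ = 1 → (∀ ζ, (A 0).eval ζ = 0 → τ ≤ ‖u - ζ‖) →
      ∃ φ : ℂ → ℂ, DifferentiableOn ℂ φ (Metric.ball u (τ / 4)) ∧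
      Set.EqOn φ F (Metric.ball u (τ / 4) ∩ Metric.ball 0 1) :=
    fun u hu hg => exists_extension_boundary hF hode hτ hτ1 hu hg
  choose! φ hφd hφF using hext
  set x₁ := min η (Real.log (1 + σ)) with hx₁
  have hx0 : 0 < x₁ := lt_min hη0 (Real.log_pos (by linarith))
  have hxη : x₁ ≤ η := min_le_left _ _
  have hxσ : Real.exp x₁ ≤ 1 + σ := by
    rw [← Real.le_log_iff_exp_le (by linarith)]
    exact min_le_right _ _
  obtain ⟨T, hT⟩ := exists_nat_gt (2 * Real.pi / η)
  have hT0 : (0 : ℝ) < T := lt_trans (by positivity) hT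
  set h := 2 * Real.pi / T with hh
  have hh0 : 0 < h := by positivity
  have hhη : h ≤ η := by
    rw [hh, div_le_iff₀ hT0]
    rw [div_lt_iff₀ hη0] at hT
    linarith
  set θ : ℕ → ℝ := fun j => j * h with hθ
  have hθs : ∀ j, θ (j + 1) = θ j + h := fun j => by simp only [hθ]; push_cast; ring
  set u : ℕ → ℂ := fun j => Complex.exp (θ j * Complex.I) with hu
  have hu1 : ∀ j, ‖u j‖ = 1 := fun j => Complex.norm_exp_ofReal_mul_I _
  obtain ⟨M, hM0, hMφ, hMF⟩ : ∃ M : ℝ, 0 ≤ M ∧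
      (∀ j ∈ Finset.range (T + 1), (∀ ζ, (A 0).eval ζ = 0 → τ ≤ ‖u j - ζ‖) →
        ∀ z, ‖z - u j‖ ≤ τ / 8 → ‖φ (u j) z‖ ≤ M) ∧
      ∀ z, ‖z‖ ≤ Real.exp (-x₁) → ‖F z‖ ≤ M := by
    have h1 : ∀ j, ∃ K : ℝ, (∀ ζ, (A 0).eval ζ = 0 → τ ≤ ‖u j - ζ‖) →
        ∀ z, ‖z - u j‖ ≤ τ / 8 → ‖φ (u j) z‖ ≤ K := by
      intro j
      by_cases hg : ∀ ζ, (A 0).eval ζ = 0 → τ ≤ ‖u j - ζ‖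
      · obtain ⟨K, hK⟩ := (isCompact_closedBall (u j) (τ / 8)).exists_bound_of_continuousOn
          ((hφd _ (hu1 j) hg).continuousOn.mono (Metric.closedBall_subset_ball (by linarith)))
        exact ⟨K, fun _ z hz => hK z (mem_closedBall_iff_norm.mpr hz)⟩
      · exact ⟨0, fun h => absurd h hg⟩
    choose K hK using h1
    obtain ⟨K', hK'⟩ := (isCompact_closedBall (0 : ℂ) (Real.exp (-x₁))).exists_bound_of_continuousOn
      (hF.continuousOn.mono (Metric.closedBall_subset_ball
        (by rw [Real.exp_lt_one_iff]; linarith)))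
    have hs : ∀ j ∈ Finset.range (T + 1), |K j| ≤ ∑ j ∈ Finset.range (T + 1), |K j| := fun j hj =>
      Finset.single_le_sum (f := fun j => |K j|) (fun _ _ => abs_nonneg _) hj
    refine ⟨∑ j ∈ Finset.range (T + 1), |K j| + |K'|, by positivity, ?_, ?_⟩
    · intro j hj hg z hz
      have := abs_nonneg K'
      linarith [hK j hg z hz, hs j hj, le_abs_self (K j)]
    · intro z hz
      have : 0 ≤ ∑ j ∈ Finset.range (T + 1), |K j| := by positivity
      linarith [hK' z (mem_closedBall_zero_iff.mpr hz), le_abs_self K']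
  refine ⟨T * (3 * M), by positivity, ?_⟩
  intro R B hB hR1 hR2
  have hMB : 0 ≤ M * B := by positivity
  set f : (ℂ → ℂ) → ℂ → ℂ := fun ψ s => ψ (Complex.exp s) * R.eval (Complex.exp (-s)) with hf
  -- The integral over the radial segment of angle `t`, replaced by `0` near the zeros of `A 0`.
  set V : ℝ → ℂ := fun t => if ∀ ζ, (A 0).eval ζ = 0 → 2 * τ ≤ ‖Complex.exp (t * Complex.I) - ζ‖ then
    ∫ x in -x₁..η, f (φ (Complex.exp (t * Complex.I))) (x + t * Complex.I) else 0 with hV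
  have hVper : V (2 * Real.pi) = V 0 := by
    have h1 : ∀ x : ℝ, Complex.exp (x + 2 * Real.pi * Complex.I) = Complex.exp x := fun x =>
      Complex.exp_periodic x
    simp [hV, hf, Complex.exp_neg, h1]
  -- Near a ray close to a zero of `A 0`, the second bound on `R` applies.
  have hnearR : ∀ t : ℝ, (¬ ∀ ζ, (A 0).eval ζ = 0 → 2 * τ ≤ ‖Complex.exp (t * Complex.I) - ζ‖) →
      ∀ x t' : ℝ, -x₁ ≤ x → x ≤ η → |t' - t| ≤ η →
        ‖R.eval (Complex.exp (-(x + t' * Complex.I)))‖ ≤ B := by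
    intro t ht x t' hx hx' htt
    refine hR2 _ ?_ ?_
    · rw [Complex.norm_exp]
      refine le_trans (Real.exp_le_exp.mpr ?_) hxσ
      simp
      linarith
    · rw [Complex.exp_neg]
      refine hnear _ (Complex.norm_exp_ofReal_mul_I t) ht _ ?_
      have := norm_exp_sub_exp_le (η := η) (x := x) (θ := t) (θ' := t') (by linarith)
        (abs_le.mpr ⟨by linarith, hx'⟩) htt
      linarith
  have hclose : ∀ j, ∀ x t : ℝ, -x₁ ≤ x → x ≤ η → |t - θ j| ≤ η →
      ‖Complex.exp (x + t * Complex.I) - u j‖ ≤ τ / 8 := by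
    intro j x t hx hx' htt
    have := norm_exp_sub_exp_le (η := η) (x := x) (θ := θ j) (θ' := t) (by linarith)
        (abs_le.mpr ⟨by linarith, hx'⟩) htt
    linarith
  have hin : ∀ t : ℝ, ‖Complex.exp (((-x₁ : ℝ) : ℂ) + t * Complex.I)‖ = Real.exp (-x₁) := by
    intro t
    rw [Complex.norm_exp]
    simp
  -- The terms `V` are added so as to cancel in the sum over all arcs.
  have harc : ∀ j < T, ‖(∫ t in θ j..θ (j + 1), f F (((-x₁ : ℝ) : ℂ) + t * Complex.I)) +
      Complex.I * (V (θ j) - V (θ (j + 1)))‖ ≤ 3 * M * B := by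
    intro j hj
    have hle : θ j ≤ θ (j + 1) := by rw [hθs]; linarith
    have hlen : θ (j + 1) - θ j ≤ 1 := by rw [hθs]; linarith
    have hjT : j ∈ Finset.range (T + 1) := Finset.mem_range.mpr (by omega)
    by_cases hg : ∀ ζ, (A 0).eval ζ = 0 → τ ≤ ‖u j - ζ‖
    · have hball : ∀ x t : ℝ, -x₁ ≤ x → x ≤ η → θ j ≤ t → t ≤ θ (j + 1) →
          ‖Complex.exp (x + t * Complex.I) - u j‖ ≤ τ / 8 := by
        intro x t hx hx' h1 h2
        refine hclose j x t hx hx' ?_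
        rw [hθs] at h2
        rw [abs_of_nonneg (by linarith)]
        linarith
      have hinner : ∫ t in θ j..θ (j + 1), f F (((-x₁ : ℝ) : ℂ) + t * Complex.I) =
          ∫ t in θ j..θ (j + 1), f (φ (u j)) (((-x₁ : ℝ) : ℂ) + t * Complex.I) := by
        refine intervalIntegral.integral_congr ?_
        intro t ht
        rw [Set.uIcc_of_le hle] at ht
        simp only [hf]
        rw [hφF (u j) (hu1 j) hg ⟨?_, ?_⟩]
        · rw [mem_ball_iff_norm]
          linarith [hball (-x₁) t le_rfl (by linarith) ht.1 ht.2]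
        · rw [mem_ball_zero_iff, hin, Real.exp_lt_one_iff]
          linarith
      have hsec := sector_integral (hφd _ (hu1 j) hg) Metric.isOpen_ball R (x₀ := -x₁) (x₁ := η)
        (by linarith) hle (by
          intro x t h1 h2 h3 h4
          rw [mem_ball_iff_norm]
          linarith [hball x t h1 h2 h3 h4])
      have hout : ‖∫ t in θ j..θ (j + 1), f (φ (u j)) (η + t * Complex.I)‖ ≤ M * B := by
        refine norm_integral_le_mul hle hlen hMB fun t h1 h2 => ?_
        simp only [hf]
        rw [norm_mul]
        refine mul_le_mul (hMφ j hjT hg _ (hball η t (by linarith) le_rfl h1 h2)) (hR1 _ ?_)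
          (norm_nonneg _) hM0
        rw [Complex.norm_exp]
        simp
      have hrad0 : ‖(∫ x in -x₁..η, f (φ (u j)) (x + θ j * Complex.I)) - V (θ j)‖ ≤ M * B := by
        by_cases hg2 : ∀ ζ, (A 0).eval ζ = 0 → 2 * τ ≤ ‖u j - ζ‖
        · have : V (θ j) = ∫ x in -x₁..η, f (φ (u j)) (x + θ j * Complex.I) := if_pos hg2
          rw [this, sub_self, norm_zero]
          exact hMB
        · have : V (θ j) = 0 := if_neg hg2
          rw [this, sub_zero]
          refine norm_integral_le_mul (by linarith) (by linarith) hMB fun x h1 h2 => ?_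
          simp only [hf]
          rw [norm_mul]
          refine mul_le_mul (hMφ j hjT hg _ (hball x (θ j) h1 h2 le_rfl hle))
            (hnearR (θ j) hg2 x (θ j) h1 h2 (by simpa using hη0.le)) (norm_nonneg _) hM0
      have hrad1 : ‖(∫ x in -x₁..η, f (φ (u j)) (x + θ (j + 1) * Complex.I)) - V (θ (j + 1))‖ ≤
          M * B := by
        by_cases hg2 : ∀ ζ, (A 0).eval ζ = 0 → 2 * τ ≤ ‖u (j + 1) - ζ‖
        · have : V (θ (j + 1)) = ∫ x in -x₁..η, f (φ (u (j + 1))) (x + θ (j + 1) * Complex.I) :=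
            if_pos hg2
          have hg' : ∀ ζ, (A 0).eval ζ = 0 → τ ≤ ‖u (j + 1) - ζ‖ := fun ζ hζ => by
            linarith [hg2 ζ hζ]
          have huu : ‖u (j + 1) - u j‖ ≤ τ / 8 := by
            have := hball 0 (θ (j + 1)) (by linarith) hη0.le hle le_rfl
            simpa [hu] using this
          have hag := extension_agree (hu1 (j + 1)) (hφd _ (hu1 j) hg) (hφd _ (hu1 (j + 1)) hg')
            (hφF _ (hu1 j) hg) (hφF _ (hu1 (j + 1)) hg') (by linarith) (by linarith)
          have heq : ∫ x in -x₁..η, f (φ (u j)) (x + θ (j + 1) * Complex.I) =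
              ∫ x in -x₁..η, f (φ (u (j + 1))) (x + θ (j + 1) * Complex.I) := by
            refine intervalIntegral.integral_congr ?_
            intro x hx
            rw [Set.uIcc_of_le (by linarith)] at hx
            simp only [hf]
            rw [hag ⟨?_, ?_⟩]
            · rw [mem_ball_iff_norm]
              linarith [hball x (θ (j + 1)) hx.1 hx.2 hle le_rfl]
            · rw [mem_ball_iff_norm]
              linarith [hclose (j + 1) x (θ (j + 1)) hx.1 hx.2 (by simpa using hη0.le)]
          rw [this, heq, sub_self, norm_zero]
          exact hMB
        · have : V (θ (j + 1)) = 0 := if_neg hg2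
          rw [this, sub_zero]
          refine norm_integral_le_mul (by linarith) (by linarith) hMB fun x h1 h2 => ?_
          simp only [hf]
          rw [norm_mul]
          refine mul_le_mul (hMφ j hjT hg _ (hball x (θ (j + 1)) h1 h2 hle le_rfl))
            (hnearR (θ (j + 1)) hg2 x (θ (j + 1)) h1 h2 (by simpa using hη0.le)) (norm_nonneg _) hM0
      rw [hinner]
      have hcomb : (∫ t in θ j..θ (j + 1), f (φ (u j)) (((-x₁ : ℝ) : ℂ) + t * Complex.I)) +
          Complex.I * (V (θ j) - V (θ (j + 1))) =
          (∫ t in θ j..θ (j + 1), f (φ (u j)) (η + t * Complex.I)) -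
          Complex.I * ((∫ x in -x₁..η, f (φ (u j)) (x + θ j * Complex.I)) - V (θ j)) +
          Complex.I * ((∫ x in -x₁..η, f (φ (u j)) (x + θ (j + 1) * Complex.I)) -
            V (θ (j + 1))) := by
        simp only [hf]
        rw [hsec]
        ring
      rw [hcomb]
      refine (norm_add_le _ _).trans ?_
      refine (add_le_add (norm_sub_le _ _) le_rfl).trans ?_
      rw [norm_mul, norm_mul, Complex.norm_I, one_mul, one_mul]
      linarith
    -- Here the arc is not moved, and both of its end points are close to a zero of `A 0`.
    · have hb : ∀ i, ‖u i - u j‖ ≤ τ / 8 → V (θ i) = 0 := by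
        intro i hi
        refine if_neg fun hg2 => hg fun ζ hζ => ?_
        have h1 : 2 * τ ≤ ‖u i - ζ‖ := hg2 ζ hζ
        have h2 := norm_sub_le_norm_sub_add_norm_sub (u i) (u j) ζ
        linarith
      have huu : ‖u (j + 1) - u j‖ ≤ τ / 8 := by
        have := hclose j 0 (θ (j + 1)) (by linarith) hη0.le
          (by rw [hθs, add_sub_cancel_left, abs_of_pos hh0]; exact hhη)
        simpa [hu] using this
      rw [hb j (by simpa using (by positivity : 0 ≤ τ / 8)), hb (j + 1) huu, sub_zero, mul_zero,
        add_zero]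
      refine (norm_integral_le_mul hle hlen hMB fun t h1 h2 => ?_).trans (by linarith)
      simp only [hf]
      rw [norm_mul]
      refine mul_le_mul (hMF _ (hin t).le) (hnearR (θ j) (fun hg2 => hg fun ζ hζ => ?_) _ t le_rfl
        (by linarith) ?_) (norm_nonneg _) hM0
      · have h1 : 2 * τ ≤ ‖u j - ζ‖ := hg2 ζ hζ
        linarith
      · rw [hθs] at h2
        rw [abs_of_nonneg (by linarith)]
        linarith
  have hcont : Continuous fun t : ℝ => f F (((-x₁ : ℝ) : ℂ) + t * Complex.I) := by
    have h1 : Continuous fun t : ℝ => F (Complex.exp (((-x₁ : ℝ) : ℂ) + t * Complex.I)) :=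
      hF.continuousOn.comp_continuous (by fun_prop) fun t => by
        rw [mem_ball_zero_iff, hin, Real.exp_lt_one_iff]
        linarith
    exact h1.mul (by fun_prop)
  have hsum := sum_coeff_eq_integral hF hFa hx0 R
  have hθ0 : θ 0 = 0 := by simp [hθ]
  have hθT : θ T = 2 * Real.pi := by
    simp only [hθ, hh]
    field_simp
  have hadj := intervalIntegral.sum_integral_adjacent_intervals (a := θ) (n := T)
    (μ := MeasureTheory.volume) (fun k _ => hcont.intervalIntegrable (θ k) (θ (k + 1)))
  have htel : ∑ j ∈ Finset.range T, Complex.I * (V (θ j) - V (θ (j + 1))) = 0 := by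
    rw [← Finset.mul_sum, Finset.sum_range_sub', hθ0, hθT, hVper, sub_self, mul_zero]
  have htot : 2 * Real.pi * ∑ n ∈ R.support, R.coeff n * a n =
      ∑ j ∈ Finset.range T, ((∫ t in θ j..θ (j + 1), f F (((-x₁ : ℝ) : ℂ) + t * Complex.I)) +
      Complex.I * (V (θ j) - V (θ (j + 1)))) := by
    rw [Finset.sum_add_distrib, htel, add_zero, hadj, hsum, hθ0, hθT]
    simp only [hf, Complex.ofReal_neg]
  have hn : ‖(2 * Real.pi : ℂ) * ∑ n ∈ R.support, R.coeff n * a n‖ ≤ T * (3 * M * B) := by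
    rw [htot]
    refine (norm_sum_le_of_le _ fun j hj => harc j (Finset.mem_range.mp hj)).trans ?_
    simp
  rw [norm_mul] at hn
  have h2pi : ‖(2 * Real.pi : ℂ)‖ = 2 * Real.pi := by
    rw [norm_mul, Complex.norm_real, Real.norm_eq_abs, abs_of_pos Real.pi_pos]
    simp
  rw [h2pi] at hn
  have := Real.pi_gt_three
  nlinarith [norm_nonneg (∑ n ∈ R.support, R.coeff n * a n)]

/-! ### Twisted differences as coefficients of a small polynomial -/

/-- Cauchy's estimate for the coefficients of a polynomial. -/
lemma norm_coeff_le (p : ℂ[X]) {ρ M : ℝ} (hρ : 0 < ρ) (h : ∀ x, ‖x‖ = ρ → ‖p.eval x‖ ≤ M) (d : ℕ) :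
    ‖p.coeff d‖ ≤ M / ρ ^ d := by
  have h1 := Complex.norm_iteratedDeriv_le_of_forall_mem_sphere_norm_le (c := (0 : ℂ)) d hρ
    (f := fun z => p.eval z) p.differentiable.diffContOnCl
    (fun z hz => h z (by simpa using hz))
  rw [iteratedDeriv_polynomial_zero, norm_mul, Complex.norm_natCast] at h1
  have h2 : (0 : ℝ) < d.factorial := by positivity
  rw [mul_div_assoc] at h1
  exact le_of_mul_le_mul_left h1 h2

/-- The polynomial `∑ₙ yₙ wⁿ (1 - wᵐ)ᵏ` after the substitution `w ↦ w (1 + x)`, as a polynomial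
in `x`. -/
noncomputable def twist (I : Finset ℕ) (Y : ℕ → ℤ) (m k : ℕ) (w : ℂ) : ℂ[X] :=
  ∑ n ∈ I, ∑ i ∈ Finset.range (k + 1),
    Polynomial.C ((Y n : ℂ) * altChoose k i * w ^ (n + i * m)) * (1 + Polynomial.X) ^ (n + i * m)

lemma eval_twist (I : Finset ℕ) (Y : ℕ → ℤ) (m k : ℕ) (w x : ℂ) :
    (twist I Y m k w).eval x = ∑ n ∈ I, Y n * ((w * (1 + x)) ^ n * (1 - (w * (1 + x)) ^ m) ^ k) := by
  simp only [twist, Polynomial.eval_finsetSum]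
  refine Finset.sum_congr rfl fun n _ => ?_
  rw [sub_eq_neg_add, add_pow, Finset.mul_sum, Finset.mul_sum]
  refine Finset.sum_congr rfl fun i _ => ?_
  simp only [altChoose, Polynomial.eval_mul, Polynomial.eval_C, Polynomial.eval_pow,
    Polynomial.eval_add, Polynomial.eval_one, Polynomial.eval_X]
  push_cast
  rw [neg_pow ((w * (1 + x)) ^ m), ← pow_mul, mul_comm m i, mul_pow, mul_pow, pow_add, pow_add]
  ring

/-- The coefficient of `x ^ d` in `twist I Y m k w`, as a polynomial in `w`. -/
noncomputable def twistCoeff (I : Finset ℕ) (Y : ℕ → ℤ) (m k d : ℕ) : ℂ[X] :=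
  ∑ n ∈ I, ∑ i ∈ Finset.range (k + 1),
    Polynomial.C ((Y n : ℂ) * altChoose k i * (n + i * m).choose d) * Polynomial.X ^ (n + i * m)

lemma eval_twistCoeff (I : Finset ℕ) (Y : ℕ → ℤ) (m k d : ℕ) (w : ℂ) :
    (twistCoeff I Y m k d).eval w = (twist I Y m k w).coeff d := by
  simp only [twist, twistCoeff, Polynomial.eval_finsetSum, Polynomial.finsetSum_coeff,
    Polynomial.coeff_C_mul, Polynomial.coeff_one_add_X_pow, Polynomial.eval_mul,
    Polynomial.eval_C, Polynomial.eval_pow, Polynomial.eval_X]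
  refine Finset.sum_congr rfl fun n _ => Finset.sum_congr rfl fun i _ => ?_
  ring

/-- The functional of `linear_bound`, evaluated at `twistCoeff`, is a combination of differences. -/
lemma sum_twistCoeff (a : ℕ → ℚ) (I : Finset ℕ) (Y : ℕ → ℤ) (m k d : ℕ) :
    ∑ n ∈ (twistCoeff I Y m k d).support, (twistCoeff I Y m k d).coeff n * (a n : ℂ) =
      ((∑ n ∈ I, (Y n : ℚ) * diffSeq a m k d n : ℚ) : ℂ) := by
  set Λ : ℂ[X] →ₗ[ℂ] ℂ := Polynomial.lsum fun n => LinearMap.mulRight ℂ (a n : ℂ) with hΛ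
  have h1 : ∀ R : ℂ[X], Λ R = ∑ n ∈ R.support, R.coeff n * (a n : ℂ) := fun R => rfl
  have h2 : ∀ (c : ℂ) (n : ℕ), Λ (Polynomial.C c * Polynomial.X ^ n) = c * a n := by
    intro c n
    rw [Polynomial.C_mul_X_pow_eq_monomial]
    exact Polynomial.sum_monomial_index c _ (by simp)
  rw [← h1, twistCoeff]
  simp only [map_sum, h2]
  push_cast
  refine Finset.sum_congr rfl fun n _ => ?_
  rw [diffSeq, Rat.cast_sum, Finset.mul_sum]
  refine Finset.sum_congr rfl fun i _ => ?_
  push_cast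
  ring

/-- Combinations, with integer coefficients at most `2 ^ (k + 1)`, of the `k`-th differences of
`binom(n, d) * a n` are small. Indeed, the polynomial `∑ₙ yₙ wⁿ (1 - wᵐ)ᵏ` is small where `wᵐ` is close
to `1`, because of its last factor, and on a disc of radius less than `1`, because `n ≥ ℓ * k`. This
persists when `w` is replaced by `w (1 + x)` with `|x| = ρ`. -/
lemma diffSeq_bound {a : ℕ → ℚ} {m : ℕ} {θ q ρ C : ℝ} {ℓ : ℕ}
    (hΛ : ∀ (R : ℂ[X]) (B : ℝ), 0 ≤ B → (∀ w, ‖w‖ ≤ θ → ‖R.eval w‖ ≤ B) →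
      (∀ w, ‖w‖ ≤ 1 + ρ → ‖w ^ m - 1‖ ≤ 1 / 100 → ‖R.eval w‖ ≤ B) →
      ‖∑ n ∈ R.support, R.coeff n * (a n : ℂ)‖ ≤ C * B)
    (hρ : 0 < ρ) (hq0 : 0 ≤ q) (hq1 : q ≤ 1) (hθ : θ * (1 + ρ) ≤ q) (hqℓ : q ^ ℓ ≤ 1 / 100)
    (hρm : (1 + ρ) ^ m ≤ 1 + 1 / 200) {I : Finset ℕ} {N k : ℕ}
    (hI : ∀ n ∈ I, ℓ * k ≤ n ∧ n ≤ N) {Y : ℕ → ℤ} (hY : ∀ n, |Y n| ≤ 2 ^ (k + 1)) (d : ℕ) :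
    (|∑ n ∈ I, (Y n : ℚ) * diffSeq a m k d n| : ℚ) ≤
      C * ((N + 1) * (2 ^ (k + 1) * ((1 / 50) ^ k * (1 + ρ) ^ (2 * N))) / ρ ^ d) := by
  have hcard : (I.card : ℝ) ≤ N + 1 := by
    have : I.card ≤ (Finset.range (N + 1)).card := Finset.card_le_card fun n hn =>
      Finset.mem_range.mpr (Nat.lt_succ_of_le (hI n hn).2)
    rw [Finset.card_range] at this
    exact_mod_cast this
  have hbase : ∀ w x : ℂ, ‖x‖ = ρ →
      (∀ n ∈ I, ‖(w * (1 + x)) ^ n * (1 - (w * (1 + x)) ^ m) ^ k‖ ≤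
        (1 / 50) ^ k * (1 + ρ) ^ (2 * N)) →
      ‖(twist I Y m k w).eval x‖ ≤
        (N + 1) * (2 ^ (k + 1) * ((1 / 50) ^ k * (1 + ρ) ^ (2 * N))) := by
    intro w x _ h
    rw [eval_twist]
    refine (norm_sum_le_of_le (f := fun n => (Y n : ℂ) * _)
      (n := fun _ => 2 ^ (k + 1) * ((1 / 50) ^ k * (1 + ρ) ^ (2 * N))) I fun n hn => ?_).trans ?_
    · rw [norm_mul]
      refine mul_le_mul ?_ (h n hn) (norm_nonneg _) (by positivity)
      rw [Complex.norm_intCast]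
      exact_mod_cast hY n
    · rw [Finset.sum_const, nsmul_eq_mul]
      gcongr
  have hx1 : ∀ x : ℂ, ‖x‖ = ρ → ‖1 + x‖ ≤ 1 + ρ := by
    intro x hx
    have := norm_add_le 1 x
    rwa [norm_one, hx] at this
  have h1ρ : (1 : ℝ) ≤ 1 + ρ := by linarith
  have hR := hΛ (twistCoeff I Y m k d)
    ((N + 1) * (2 ^ (k + 1) * ((1 / 50) ^ k * (1 + ρ) ^ (2 * N))) / ρ ^ d) (by positivity) ?_ ?_
  · rw [sum_twistCoeff] at hR
    refine le_trans (le_of_eq ?_) hR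
    rw [Complex.norm_ratCast]
    push_cast
    rfl
  · intro w hw
    rw [eval_twistCoeff]
    refine norm_coeff_le _ hρ (fun x hx => hbase w x hx fun n hn => ?_) d
    have hw' : ‖w * (1 + x)‖ ≤ q := by
      rw [norm_mul]
      exact (mul_le_mul hw (hx1 x hx) (norm_nonneg _) ((norm_nonneg _).trans hw)).trans hθ
    have h2 : ‖1 - (w * (1 + x)) ^ m‖ ≤ 2 := by
      refine (norm_sub_le _ _).trans ?_
      rw [norm_one, norm_pow]
      have := pow_le_one₀ (n := m) (norm_nonneg _) (hw'.trans hq1)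
      linarith
    calc ‖(w * (1 + x)) ^ n * (1 - (w * (1 + x)) ^ m) ^ k‖
        = ‖w * (1 + x)‖ ^ n * ‖1 - (w * (1 + x)) ^ m‖ ^ k := by rw [norm_mul, norm_pow, norm_pow]
      _ ≤ q ^ n * 2 ^ k := by gcongr
      _ ≤ q ^ (ℓ * k) * 2 ^ k := by
        gcongr ?_ * _
        exact pow_le_pow_of_le_one hq0 hq1 (hI n hn).1
      _ = (q ^ ℓ * 2) ^ k := by rw [pow_mul, mul_pow]
      _ ≤ (1 / 50) ^ k := by
        gcongr
        linarith
      _ ≤ (1 / 50) ^ k * (1 + ρ) ^ (2 * N) := le_mul_of_one_le_right (by positivity)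
        (one_le_pow₀ h1ρ)
  · intro w hw hwm
    rw [eval_twistCoeff]
    refine norm_coeff_le _ hρ (fun x hx => hbase w x hx fun n hn => ?_) d
    have hw' : ‖w * (1 + x)‖ ≤ (1 + ρ) ^ 2 := by
      rw [norm_mul, sq]
      exact mul_le_mul hw (hx1 x hx) (norm_nonneg _) (by linarith)
    have hxm : ‖(1 + x) ^ m - 1‖ ≤ 1 / 200 := by
      have h3 : (1 + x) ^ m - 1 = ∑ j ∈ Finset.range m, x ^ (j + 1) * m.choose (j + 1) := by
        rw [add_comm, add_pow, Finset.sum_range_succ']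
        simp
      have h4 : (1 + ρ) ^ m - 1 = ∑ j ∈ Finset.range m, ρ ^ (j + 1) * m.choose (j + 1) := by
        rw [add_comm, add_pow, Finset.sum_range_succ']
        simp
      have h5 : ‖(1 + x) ^ m - 1‖ ≤ (1 + ρ) ^ m - 1 := by
        rw [h3, h4]
        refine norm_sum_le_of_le _ fun j _ => ?_
        rw [norm_mul, norm_pow, hx, Complex.norm_natCast]
      linarith
    have hwm1 : ‖w ^ m‖ ≤ 1 + 1 / 100 := by
      have := norm_add_le (w ^ m - 1) 1
      rw [sub_add_cancel, norm_one] at this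
      linarith
    have h2 : ‖1 - (w * (1 + x)) ^ m‖ ≤ 1 / 50 := by
      have h3 : 1 - (w * (1 + x)) ^ m = -(w ^ m * ((1 + x) ^ m - 1) + (w ^ m - 1)) := by
        rw [mul_pow]
        ring
      rw [h3, norm_neg]
      refine (norm_add_le _ _).trans ?_
      rw [norm_mul]
      have := mul_le_mul hwm1 hxm (norm_nonneg _) (by norm_num)
      linarith
    calc ‖(w * (1 + x)) ^ n * (1 - (w * (1 + x)) ^ m) ^ k‖
        = ‖1 - (w * (1 + x)) ^ m‖ ^ k * ‖w * (1 + x)‖ ^ n := by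
          rw [norm_mul, norm_pow, norm_pow, mul_comm]
      _ ≤ (1 / 50) ^ k * ((1 + ρ) ^ 2) ^ n := by gcongr
      _ = (1 / 50) ^ k * (1 + ρ) ^ (2 * n) := by rw [pow_mul]
      _ ≤ (1 / 50) ^ k * (1 + ρ) ^ (2 * N) := by
        gcongr ?_ * ?_
        exact pow_le_pow_right₀ h1ρ (by have := (hI n hn).2; omega)

/-! ### Densities, least common multiples and numerical estimates -/

lemma lcmOutside_pos {d : ℕ → ℕ} (hd : ∀ n, 0 < d n) (S : Set ℕ) (N : ℕ) : 0 < lcmOutside d S N := by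
  classical
  rw [lcmOutside, Nat.pos_iff_ne_zero, Ne, Finset.lcm_eq_zero_iff]
  rintro ⟨n, _, hn⟩
  split_ifs at hn
  exact (hd n).ne' hn

lemma lcmOutside_mul_int (a : ℕ → ℚ) (S : Set ℕ) {N n : ℕ} (hn : n ≤ N) (hS : n ∉ S) :
    ∃ z : ℤ, ((lcmOutside (fun i => (a i).den) S N : ℤ) : ℚ) * a n = z := by
  classical
  have h1 : (a n).den ∣ lcmOutside (fun i => (a i).den) S N := by
    have := Finset.dvd_lcm (f := fun i => if i ∈ S then 1 else (a i).den)
      (Finset.mem_range.mpr (Nat.lt_succ_of_le hn))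
    simpa [lcmOutside, hS] using this
  obtain ⟨c, hc⟩ := h1
  refine ⟨c * (a n).num, ?_⟩
  rw [hc]
  push_cast
  have h2 := Rat.mul_den_eq_num (a n)
  rw [← h2]
  ring

open Classical in
/-- The term `E` on the right accounts for `0 ∈ S`, as densities are counted from `1`. -/
lemma eventually_card_le {S : Set ℕ} (hS : HasZeroDensity S) {E : ℕ} (hE : 0 < E) :
    ∀ᶠ N : ℕ in atTop, E * ((Finset.range (N + 1)).filter (· ∈ S)).card ≤ N + E := by
  have hE' : (0 : ℝ) < E := by exact_mod_cast hE
  have h1 : Filter.limsup (fun n : ℕ => ((S ∩ Set.Icc 1 n).ncard : ℝ) / n) atTop < 1 / E := by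
    rw [show Filter.limsup (fun n : ℕ => ((S ∩ Set.Icc 1 n).ncard : ℝ) / n) atTop = 0 from hS]
    positivity
  have hfin : ∀ N, ((Set.Icc 1 N : Set ℕ)).Finite := fun N => Set.finite_Icc 1 N
  have hbdd : IsBoundedUnder (· ≤ ·) atTop fun n : ℕ => ((S ∩ Set.Icc 1 n).ncard : ℝ) / n := by
    refine isBoundedUnder_of ⟨1, fun n => ?_⟩
    refine div_le_one_of_le₀ ?_ (by positivity)
    have := Set.ncard_le_ncard (Set.inter_subset_right (s := S) (t := Set.Icc 1 n)) (hfin n)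
    rw [Set.ncard_Icc_nat] at this
    exact_mod_cast this
  filter_upwards [eventually_lt_of_limsup_lt h1 hbdd, eventually_gt_atTop 0] with N hN hN0
  have hN0' : (0 : ℝ) < N := by exact_mod_cast hN0
  rw [div_lt_div_iff₀ hN0' hE', one_mul] at hN
  have h2 : (S ∩ Set.Icc 1 N).ncard * E ≤ N := by exact_mod_cast hN.le
  have h3 : ((Finset.range (N + 1)).filter (· ∈ S)).card ≤ (S ∩ Set.Icc 1 N).ncard + 1 := by
    have h4 : (((Finset.range (N + 1)).filter (· ∈ S) : Finset ℕ) : Set ℕ) ⊆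
        insert 0 (S ∩ Set.Icc 1 N) := by
      intro n hn
      simp only [Finset.coe_filter, Finset.mem_range, Set.mem_ofPred_eq] at hn
      rcases Nat.eq_zero_or_pos n with h0 | h0
      · exact Or.inl h0
      · exact Or.inr ⟨hn.2, h0, by omega⟩
    have h5 := Set.ncard_le_ncard h4 (((hfin N).inter_of_right S).insert 0)
    rw [Set.ncard_coe_finset] at h5
    exact h5.trans (Set.ncard_insert_le _ _)
  calc E * ((Finset.range (N + 1)).filter (· ∈ S)).card
      ≤ E * ((S ∩ Set.Icc 1 N).ncard + 1) := by gcongr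
    _ ≤ N + E := by linarith [mul_comm E (S ∩ Set.Icc 1 N).ncard]

/-- For `k = N / K`, the bound of `diffSeq_bound` multiplied by `L` decays exponentially in `k`: up to
constants, each of the five factors `L`, `N + 1`, `2 ^ (k + 1)`, `(1 + ρ) ^ (2 * N)` and `ρ ^ (-d)` is at
most `2 ^ k`, and `2 ^ 5 / 50 = 16 / 25`. -/
lemma numeric_bound {ρ C L : ℝ} {K e N s d : ℕ} (hK : 0 < K) (hC : 0 ≤ C) (hρ : 0 < ρ)
    (hρK : (1 + ρ) ^ (2 * K) ≤ 2) (he : ρ⁻¹ ≤ 2 ^ e) (hs : 2 * e * K * s ≤ N + 2 * e * K)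
    (hL : L ≤ (1 + ρ) ^ N) (hd : d ≤ 2 * s) :
    L * (C * ((N + 1) * (2 ^ (N / K + 1) * ((1 / 50) ^ (N / K) * (1 + ρ) ^ (2 * N))) / ρ ^ d)) ≤
      C * K * 2 ^ (2 * e + 4) * (16 / 25) ^ (N / K) := by
  set k := N / K with hk
  have hNK : N + 1 ≤ K * (k + 1) := Nat.lt_mul_div_succ N hK
  have h1ρ : (1 : ℝ) ≤ 1 + ρ := by linarith
  have hpow : (1 + ρ) ^ (2 * N) ≤ 2 ^ (k + 1) := by
    calc (1 + ρ) ^ (2 * N) ≤ (1 + ρ) ^ (2 * K * (k + 1)) :=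
          pow_le_pow_right₀ h1ρ (by nlinarith)
      _ = ((1 + ρ) ^ (2 * K)) ^ (k + 1) := by rw [pow_mul]
      _ ≤ 2 ^ (k + 1) := by gcongr
  have hL' : L ≤ 2 ^ (k + 1) :=
    hL.trans ((pow_le_pow_right₀ h1ρ (by omega)).trans hpow)
  have hN1 : (N : ℝ) + 1 ≤ K * 2 ^ k := by
    have h1 : k + 1 ≤ 2 ^ k := Nat.lt_two_pow_self
    have h2 : N + 1 ≤ K * 2 ^ k := hNK.trans (Nat.mul_le_mul_left K h1)
    exact_mod_cast h2
  have hes : 2 * e * s ≤ k + 1 + 2 * e := by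
    refine le_of_mul_le_mul_left (a := K) ?_ hK
    nlinarith
  have hd' : (ρ ^ d)⁻¹ ≤ 2 ^ (k + 1 + 2 * e) := by
    calc (ρ ^ d)⁻¹ = (ρ⁻¹) ^ d := (inv_pow ρ d).symm
      _ ≤ (2 ^ e) ^ d := by gcongr
      _ = 2 ^ (e * d) := by rw [pow_mul]
      _ ≤ 2 ^ (k + 1 + 2 * e) := pow_le_pow_right₀ (by norm_num) (by nlinarith)
  calc L * (C * ((N + 1) * (2 ^ (k + 1) * ((1 / 50) ^ k * (1 + ρ) ^ (2 * N))) / ρ ^ d))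
      = L * (C * ((N + 1) * (2 ^ (k + 1) * ((1 / 50) ^ k * (1 + ρ) ^ (2 * N))) * (ρ ^ d)⁻¹)) := by
        rw [div_eq_mul_inv]
    _ ≤ 2 ^ (k + 1) * (C * ((K * 2 ^ k) * (2 ^ (k + 1) * ((1 / 50) ^ k * 2 ^ (k + 1))) *
          2 ^ (k + 1 + 2 * e))) := by gcongr
    _ = C * K * 2 ^ (2 * e + 4) * (16 / 25) ^ k := by
        have : (16 / 25 : ℝ) ^ k = 2 ^ k * 2 ^ k * 2 ^ k * 2 ^ k * 2 ^ k * (1 / 50) ^ k := by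
          simp only [← mul_pow]
          norm_num
        rw [this]
        ring

lemma exists_eval_ne_zero {Q : ℚ[X]} (hQ : Q ≠ 0) : ∃ ν : ℕ, ∀ n : ℕ, ν ≤ n → Q.eval (n : ℚ) ≠ 0 := by
  have h1 : {n : ℕ | Q.eval (n : ℚ) = 0}.Finite :=
    (Polynomial.finite_setOfPred_isRoot hQ).preimage Nat.cast_injective.injOn
  obtain ⟨ν, hν⟩ := h1.bddAbove
  exact ⟨ν + 1, fun n hn h => absurd (hν h) (by omega)⟩

/-! ### The lower bound -/

/-- Let `f = ∑ aₙ zⁿ ∈ ℚ[[z]]` be D-finite, converging on the open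
unit disk, such that for every nonzero `P ∈ ℚ[z]` the series `∑ P(n) aₙ zⁿ` is not
rational. Put `dₙ = den(aₙ)`. Then there exists `β > 1` such that for every
zero-density set `S ⊆ ℕ`, `lcm{dᵢ : i ≤ n, i ∉ S} > βⁿ` for all sufficiently large
`n`. -/
theorem dfinite_irrational_lcm_growth
    (a : ℕ → ℚ) (hDF : IsDFinite (PowerSeries.mk a))
    (hconv : 1 ≤ seriesRadius fun n => (a n : ℂ))
    (hirr : ∀ P : Polynomial ℚ, P ≠ 0 →
      ¬ ∃ u v : Polynomial ℚ, v ≠ 0 ∧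
        (v : PowerSeries ℚ) * PowerSeries.mk (fun n => P.eval (n : ℚ) * a n)
          = (u : PowerSeries ℚ)) :
    ∃ β : ℝ, 1 < β ∧ ∀ S : Set ℕ, HasZeroDensity S →
      ∀ᶠ n : ℕ in Filter.atTop,
        β ^ n < (lcmOutside (fun i => (a i).den) S n : ℝ) := by
  classical
  obtain ⟨F, hF, hFa⟩ := exists_holomorphic hconv
  obtain ⟨p, A, hA0, hode⟩ := exists_ode hDF hF hFa
  obtain ⟨m, hm, τ, hτ, hτ1, hnear⟩ := exists_near hA0
  obtain ⟨r, n₀, Q, hQ0, hQr, hrec⟩ := exists_recurrence a hDF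
  obtain ⟨ν₀, hν₀⟩ := exists_eval_ne_zero hQ0
  obtain ⟨ν₁, hν₁⟩ := exists_eval_ne_zero hQr
  obtain ⟨δ, hδ⟩ : ∃ δ : ℕ, ∀ j ≤ r, (Q j).natDegree ≤ δ :=
    ⟨(Finset.range (r + 1)).sup fun j => (Q j).natDegree, fun j hj =>
      Finset.le_sup (f := fun j => (Q j).natDegree) (Finset.mem_range.mpr (by omega))⟩
  set q := Real.exp (-(τ / 64)) with hq
  have hq0 : 0 < q := Real.exp_pos _
  have hq1 : q < 1 := Real.exp_lt_one_iff.mpr (by linarith)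
  have hθq : Real.exp (-(τ / 32)) < q := Real.exp_lt_exp.mpr (by linarith)
  obtain ⟨ℓ, hℓ⟩ := exists_pow_lt_of_lt_one (show (0 : ℝ) < 1 / 100 by norm_num) hq1
  have hℓ0 : 1 ≤ ℓ := by
    rcases Nat.eq_zero_or_pos ℓ with h0 | h0
    · rw [h0, pow_zero] at hℓ
      norm_num at hℓ
    · exact h0
  -- With `k = N / K`, the interval `[ℓ * k, N]` has length at least `3 * N / 4`, while `m * k ≤ N / 4`.
  set K := 4 * (ℓ + m) with hK
  have hK0 : 0 < K := by omega
  have hsmallρ : ∀ᶠ ρ : ℝ in nhdsWithin 0 (Set.Ioi 0), Real.exp (-(τ / 32)) * (1 + ρ) < q ∧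
      (1 + ρ) ^ m < 1 + 1 / 200 ∧ (1 + ρ) ^ (2 * K) < 2 := by
    refine nhdsWithin_le_nhds ?_
    refine ((Continuous.continuousAt (by fun_prop)).eventually_lt_const (by simpa using hθq)).and
      (((Continuous.continuousAt (by fun_prop)).eventually_lt_const (by norm_num)).and
      ((Continuous.continuousAt (by fun_prop)).eventually_lt_const (by norm_num)))
  obtain ⟨ρ, ⟨hρθ, hρm, hρK⟩, hρ⟩ := (hsmallρ.and self_mem_nhdsWithin).exists
  have hρ : (0 : ℝ) < ρ := hρ
  obtain ⟨C, hC, hΛ⟩ := linear_bound hF hFa hode hτ hτ1 hnear hρ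
  obtain ⟨e₀, he₀⟩ := pow_unbounded_of_one_lt ρ⁻¹ (one_lt_two (α := ℝ))
  set e := e₀ + 1 with he
  have hee : ρ⁻¹ ≤ 2 ^ e := he₀.le.trans (pow_le_pow_right₀ (by norm_num) (by omega))
  -- None of the constants above depends on `S`.
  refine ⟨1 + ρ, by linarith, fun S hS => ?_⟩
  have hkinf : Tendsto (fun N : ℕ => N / K) atTop atTop := Nat.tendsto_div_const_atTop hK0.ne'
  have hgeo : Tendsto (fun N : ℕ => C * K * 2 ^ (2 * e + 4) * (16 / 25 : ℝ) ^ (N / K)) atTop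
      (nhds 0) := by
    have := ((tendsto_pow_atTop_nhds_zero_of_lt_one (r := (16 / 25 : ℝ)) (by norm_num)
      (by norm_num)).comp hkinf).const_mul (C * K * 2 ^ (2 * e + 4))
    simpa using this
  filter_upwards [hgeo.eventually_lt_const one_pos, hkinf.eventually_ge_atTop n₀,
    eventually_card_le hS (E := 2 * e * K) (by positivity),
    eventually_card_le hS (E := 8 * (m * r) + 8) (by positivity),
    eventually_ge_atTop (4 * (ν₀ + ν₁ + r + m * (δ + 1) + 2 * (m * r) + 2))]
    with N hN1 hN2 hN3 hN4 hN5
  set S' := (Finset.range (N + 1)).filter (· ∈ S) with hS'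
  by_contra! hL
  set L := lcmOutside (fun i => (a i).den) S N with hLdef
  have hL0 : 0 < L := lcmOutside_pos (fun n => (a n).den_pos) S N
  set k := N / K with hk
  set I := (Finset.range (N + 1)).filter fun n => ℓ * k ≤ n ∧ n + m * k ≤ N with hI
  have hLa : ∀ n ≤ N, n ∉ S' → ∃ z : ℤ, (L : ℚ) * a n = z := by
    intro n hn hnS
    refine lcmOutside_mul_int a S hn fun h => hnS ?_
    exact Finset.mem_filter.mpr ⟨Finset.mem_range.mpr (by omega), h⟩
  obtain ⟨γ, hγ0, hγ⟩ := exists_relation (m := m) (k := k) hL0 I S'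
    (fun n hn => (Finset.mem_filter.mp hn).2.2) hLa (by
      intro Y hY d hd
      have h1 := diffSeq_bound hΛ hρ hq0.le hq1.le hρθ.le hℓ.le hρm.le (I := I) (N := N) (k := k)
        (fun n hn => by
          have := Finset.mem_filter.mp hn
          exact ⟨this.2.1, by omega⟩) hY d
      have h2 := numeric_bound hK0 hC hρ hρK.le hee hN3 hL hd
      have h3 := mul_le_mul_of_nonneg_left h1 (Nat.cast_nonneg (α := ℝ) L)
      have h4 := lt_of_le_of_lt (h3.trans h2) hN1
      exact_mod_cast h4)
  obtain ⟨P, hP0, hPd, hP⟩ := exists_polynomial_of_choose hγ0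
  obtain ⟨g, hg, hgu⟩ := quasiPolynomial_of_diff (u := fun n => P.eval (n : ℚ) * a n) (k := k)
    (n₁ := ℓ * k) (N := N) hm (by
      intro n hn1 hn2
      rw [← hγ n (Finset.mem_filter.mpr ⟨Finset.mem_range.mpr (by omega), hn1, hn2⟩)]
      simp only [diffSeq, hP, Finset.mul_sum, Finset.sum_mul]
      rw [Finset.sum_comm]
      refine Finset.sum_congr rfl fun d _ => Finset.sum_congr rfl fun i _ => ?_
      ring)
  have hNk : K * k ≤ N := Nat.mul_div_le N K
  obtain ⟨P', hP'0, g', v, hv, hgv⟩ := rational_of_agree hrec (ν := ν₀ + ν₁)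
    (fun n hn => ⟨hν₀ n (by omega), hν₁ n (by omega)⟩) hm hδ hg hP0 hPd
    (hN2.trans (Nat.le_mul_of_pos_left k hℓ0)) hgu (by
      rw [hK] at hNk
      have h1 : m * (k + r * (2 * S'.card) + δ + 1) =
        m * k + 2 * (m * r * S'.card) + m * (δ + 1) := by ring
      rw [h1]
      have h2 : 4 * (ℓ + m) * k = 4 * (ℓ * k) + 4 * (m * k) := by ring
      have h3 : (8 * (m * r) + 8) * S'.card = 8 * (m * r * S'.card) + 8 * S'.card := by ring
      rw [h3] at hN4
      -- The length of the interval exceeds all degrees: `|S'|` is at most about `N / (8 * m * r)`.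
      omega)
  exact hirr P' hP'0 ⟨g', v, hv, hgv⟩
end

section
/- Let S ⊆ ℕ be a set of zero density and let f(z) = ∑_{n≥0} a_n z^n be a complex power series with radius of convergence r ∈ (0, ∞). If f(z) = ∑_{n∈S} a_n z^n + g(z), where g is a power series with radius of convergence strictly greater than r, then f admits the circle of radius r as a natural boundary. -/
/-!
The coefficients off `S` define a function analytic on a larger disk, so the question concerns
`∑ b n z ^ n` with `b` supported on `S`, rescaled so that the circle is the unit circle and the
point of alleged continuation is `1` (`eventually_coeff_decay`). The argument is Turán's proof of
Fabry's theorem, arranged to bound one coefficient at a time.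

If the series continues to `F` near `1`, then `F` is analytic on disks of a radius `ρ > 1 / 2`
around the points `e ^ (iθ) / 2`, `0 ≤ θ ≤ δ`, and Cauchy's estimates make
`∑ n, n.choose m * b n * (e ^ (iθ) / 2) ^ n` exponentially small in `m` on this arc, faster than
the trivial bound (`exists_local_bound`). The weights `n.choose m / 2 ^ n` concentrate near
`n = 2 * m`, and terms with `n ≥ 10 * m` are negligible; the remaining ones have only `o(m)`
nonzero coefficients because `S` has density zero. A combination of translations by at most `δ`
annihilates all of these frequencies but one, say `k` with `m = k / 2`, at the cost of a factor
exponential in the number of frequencies, that is `e ^ o(m)` (`exists_annihilator`). Therefore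
`b k` itself decays exponentially (`norm_coeff_le`), and the radius of convergence of the original
series exceeds `r`, a contradiction.
-/

open Filter

/-- The power series `∑ a_n z^n` (analytic on `D(0,r)`) admits the circle `|z| = r` as a
natural boundary: no point of the circle has an open neighborhood `U` together with a
function analytic on `D(0,r) ∪ U` agreeing with the series on `D(0,r)`. -/
def HasNaturalBoundary (a : ℕ → ℂ) (r : ℝ) : Prop :=
  ¬ ∃ (z₀ : ℂ) (U : Set ℂ) (g : ℂ → ℂ),
      ‖z₀‖ = r ∧ IsOpen U ∧ z₀ ∈ U ∧
      AnalyticOnNhd ℂ g (Metric.ball 0 r ∪ U) ∧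
      Set.EqOn g (fun z => ∑' n, a n * z ^ n) (Metric.ball 0 r)


/-! ### Annihilating frequencies on a short arc -/

/-- Truncating at `1` makes enlarging `T` harmless, so the worst case is `T ⊇ {1, …, L}`, where
the product is `L! / L ^ L ≥ e ^ (-L)`. -/
lemma exp_neg_le_prod_min (T : Finset ℕ) (hT : 0 ∉ T) (L : ℕ) (hL : 0 < L) :
    Real.exp (-L) ≤ ∏ i ∈ T, min 1 ((i : ℝ) / L) := by
  have hL' : (0 : ℝ) < L := by exact_mod_cast hL
  have h1 : ∏ i ∈ T ∪ Finset.Icc 1 L, min 1 ((i : ℝ) / L) ≤ ∏ i ∈ T, min 1 ((i : ℝ) / L) :=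
    Finset.prod_le_prod_of_subset_of_le_one Finset.subset_union_left
      (fun i _ => by positivity) (fun i _ _ => min_le_left _ _)
  have h2 : ∏ i ∈ T ∪ Finset.Icc 1 L, min 1 ((i : ℝ) / L)
      = ∏ i ∈ Finset.Icc 1 L, ((i : ℝ) / L) := by
    rw [← Finset.prod_subset (Finset.subset_union_right (s₁ := T))]
    · refine Finset.prod_congr rfl fun i hi => min_eq_right ?_
      rw [div_le_one hL']
      exact_mod_cast (Finset.mem_Icc.1 hi).2
    · intro i hi hi'
      refine min_eq_left ?_
      rw [one_le_div hL']
      have : i ≠ 0 := by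
        rintro rfl
        simp at hi
        exact hT hi
      rw [Finset.mem_Icc] at hi'
      have : L ≤ i := by omega
      exact_mod_cast this
  have h3 : ∏ i ∈ Finset.Icc 1 L, ((i : ℝ) / L) = (L.factorial : ℝ) / (L : ℝ) ^ L := by
    rw [Finset.prod_div_distrib, Finset.prod_const, Nat.card_Icc, Nat.add_sub_cancel,
      ← Finset.prod_range_add_one_eq_factorial, Finset.range_eq_Ico,
      Finset.prod_Ico_add' (fun i => i) 0 L 1, Nat.cast_prod]
    rfl
  have h4 := Real.pow_div_factorial_le_exp (x := (L : ℝ)) hL'.le L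
  refine le_trans ?_ h1
  rw [h2, h3, Real.exp_neg, ← inv_div]
  exact inv_anti₀ (by positivity) h4

/-- The distances from `k` to the points of `J` on either side of `k` are distinct positive
integers, so `exp_neg_le_prod_min` applies to each side separately. -/
lemma exp_neg_le_prod_dist (J : Finset ℕ) (k : ℕ) (hk : k ∉ J) (L : ℕ) (hL : 0 < L) :
    Real.exp (-(2 * L)) ≤ ∏ j ∈ J, min 1 (|(k : ℝ) - j| / L) := by
  rw [← Finset.prod_filter_mul_prod_filter_not J (fun j => j < k)]
  have e : Real.exp (-(2 * L : ℝ)) = Real.exp (-L) * Real.exp (-L) := by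
    rw [← Real.exp_add]; ring_nf
  rw [e]
  have key : ∀ (T : Finset ℕ) (g : ℕ → ℕ), Set.InjOn g T →
      (∀ j ∈ T, g j ≠ 0 ∧ (g j : ℝ) = |(k : ℝ) - j|) →
      Real.exp (-L) ≤ ∏ j ∈ T, min 1 (|(k : ℝ) - j| / L) := by
    intro T g hg hT
    have := exp_neg_le_prod_min (T.image g) (by
      intro h
      obtain ⟨j, hj, hj'⟩ := Finset.mem_image.1 h
      exact (hT j hj).1 hj') L hL
    rw [Finset.prod_image hg] at this
    refine this.trans_eq (Finset.prod_congr rfl fun j hj => ?_)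
    rw [(hT j hj).2]
  refine mul_le_mul (key _ (fun j => k - j) ?_ ?_) (key _ (fun j => j - k) ?_ ?_)
    (Real.exp_pos _).le (Finset.prod_nonneg fun i _ => by positivity)
  · intro i hi j hj h
    simp at hi hj h
    omega
  · intro j hj
    have h := (Finset.mem_filter.1 hj).2
    refine ⟨by omega, ?_⟩
    have h' : (j : ℝ) < k := by exact_mod_cast h
    rw [abs_of_pos (by linarith), Nat.cast_sub h.le]
  · intro i hi j hj h
    simp at hi hj h
    omega
  · intro j hj
    have h := Finset.mem_filter.1 hj
    have hne : j ≠ k := by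
      rintro rfl
      exact hk h.1
    have h2 : k < j := by omega
    refine ⟨by omega, ?_⟩
    have h' : (k : ℝ) < j := by exact_mod_cast h2
    rw [abs_of_neg (by linarith), Nat.cast_sub h2.le]
    ring

lemma norm_exp_pow_sub (h : ℝ) (k j : ℕ) :
    ‖Complex.exp (Complex.I * h) ^ k - Complex.exp (Complex.I * h) ^ j‖
      = 2 * |Real.sin (((k : ℝ) - j) * h / 2)| := by
  have e : Complex.exp (Complex.I * h) ^ k - Complex.exp (Complex.I * h) ^ j =
      Complex.exp (Complex.I * ((j * h : ℝ) : ℂ)) *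
        (Complex.exp (Complex.I * ((((k : ℝ) - j) * h : ℝ) : ℂ)) - 1) := by
    rw [mul_sub, ← Complex.exp_add, ← Complex.exp_nat_mul, ← Complex.exp_nat_mul, mul_one]
    push_cast
    ring_nf
  rw [e, norm_mul, Complex.norm_exp_I_mul_ofReal, Complex.norm_exp_I_mul_ofReal_sub_one]
  simp

/-- The step `h` is the largest one that is at most `δ / L` and keeps `|k - j| * h ≤ π`; the second
condition prevents resonance, so that Jordan's inequality bounds the sine from below. -/
lemma le_norm_exp_pow_sub {δ : ℝ} (hδ : 0 < δ) (hδ1 : δ ≤ 1) (k j L : ℕ) (hkj : j ≠ k)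
    (hL : 0 < L) (h : ℝ) (hh : h = min (Real.pi / |(k : ℝ) - j|) (δ / L)) :
    (2 * δ / Real.pi) * min 1 (|(k : ℝ) - j| / L) ≤
      ‖Complex.exp (Complex.I * h) ^ k - Complex.exp (Complex.I * h) ^ j‖ := by
  have hL' : (0 : ℝ) < L := by exact_mod_cast hL
  have hpi := Real.pi_pos
  have hd : 0 < |(k : ℝ) - j| := by
    rw [abs_pos, sub_ne_zero]
    exact_mod_cast hkj.symm
  rw [norm_exp_pow_sub]
  set d := |(k : ℝ) - j| with hdd
  have h0 : 0 < h := by rw [hh]; positivity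
  have hs : |Real.sin (((k : ℝ) - j) * h / 2)| = |Real.sin (d * h / 2)| := by
    rcases abs_cases ((k : ℝ) - j) with ⟨h1, _⟩ | ⟨h1, _⟩
    · rw [hdd, h1]
    · rw [hdd, h1, show -((k : ℝ) - j) * h / 2 = -(((k : ℝ) - j) * h / 2) by ring,
        Real.sin_neg, abs_neg]
  rw [hs]
  have h1 : d * h ≤ Real.pi := by
    calc d * h ≤ d * (Real.pi / d) := by
          gcongr
          rw [hh]; exact min_le_left _ _
      _ = Real.pi := by field_simp
  have h2 := Real.mul_le_sin (x := d * h / 2) (by positivity) (by linarith)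
  have h3 : δ * min 1 (d / L) ≤ d * h := by
    rw [hh]
    rcases min_cases (Real.pi / d) (δ / L) with ⟨h4, _⟩ | ⟨h4, _⟩ <;> rw [h4]
    · rw [mul_div_cancel₀ _ hd.ne']
      calc δ * min 1 (d / L) ≤ 1 * 1 := by
            gcongr
            exact min_le_left _ _
        _ ≤ Real.pi := by linarith [Real.pi_gt_three]
    · calc δ * min 1 (d / L) ≤ δ * (d / L) := by
            gcongr
            exact min_le_right _ _
        _ = d * (δ / L) := by ring
  calc (2 * δ / Real.pi) * min 1 (d / L) = 2 / Real.pi * (δ * min 1 (d / L)) := by ring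
    _ ≤ 2 / Real.pi * (d * h) := by gcongr
    _ = 2 * (2 / Real.pi * (d * h / 2)) := by ring
    _ ≤ 2 * |Real.sin (d * h / 2)| := by
      gcongr
      exact h2.trans (le_abs_self _)

/-- A weak form of Turán's lemma, in dual form. The function `P` is the symbol of a combination
of `2 ^ |J|` unimodular multiples of translations by amounts `τ t ∈ [0, δ]`. It annihilates the
frequencies `j ∈ J`, while at the frequency `k` it is only exponentially small in `L ≥ |J|`.
It is the composition over `j ∈ J` of the operators "translate by `h j` and subtract
`e ^ (i j h j)`", with `h j` as in `le_norm_exp_pow_sub`, expanded over the subsets `t` of `J`. -/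
lemma exists_annihilator {δ : ℝ} (hδ : 0 < δ) (hδ1 : δ ≤ 1) (J : Finset ℕ) (k : ℕ) (hk : k ∉ J)
    (L : ℕ) (hL : 0 < L) (hJ : J.card ≤ L) :
    ∃ (P : ℕ → ℂ) (w : Finset ℕ → ℂ) (τ : Finset ℕ → ℝ),
      (∀ t ∈ J.powerset, ‖w t‖ = 1 ∧ 0 ≤ τ t ∧ τ t ≤ δ) ∧
      (∀ n, P n = ∑ t ∈ J.powerset, w t * Complex.exp (Complex.I * τ t) ^ n) ∧
      (∀ j ∈ J, P j = 0) ∧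
      (2 * δ / Real.pi * Real.exp (-2)) ^ L ≤ ‖P k‖ := by
  classical
  have hL' : (0 : ℝ) < L := by exact_mod_cast hL
  have hpi := Real.pi_pos
  set h : ℕ → ℝ := fun j => min (Real.pi / |(k : ℝ) - j|) (δ / L) with hh
  have h0 : ∀ j, 0 ≤ h j := fun j => by rw [hh]; positivity
  refine ⟨fun n => ∏ j ∈ J, (Complex.exp (Complex.I * h j) ^ n - Complex.exp (Complex.I * h j) ^ j),
    fun t => ∏ j ∈ J \ t, -Complex.exp (Complex.I * h j) ^ j, fun t => ∑ j ∈ t, h j, ?_, ?_, ?_, ?_⟩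
  · intro t ht
    refine ⟨?_, Finset.sum_nonneg fun j _ => h0 j, ?_⟩
    · simp [norm_prod, Complex.norm_exp_I_mul_ofReal]
    · have htJ := Finset.card_le_card (Finset.mem_powerset.1 ht)
      have : (t.card : ℝ) ≤ L := by exact_mod_cast htJ.trans hJ
      calc ∑ j ∈ t, h j ≤ ∑ j ∈ t, δ / L := Finset.sum_le_sum fun j _ => min_le_right _ _
        _ = t.card * (δ / L) := by simp
        _ ≤ L * (δ / L) := by gcongr
        _ = δ := by field_simp
  · intro n
    simp only [sub_eq_add_neg]
    rw [Finset.prod_add]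
    refine Finset.sum_congr rfl fun t _ => ?_
    rw [mul_comm, Finset.prod_pow, ← Complex.exp_sum]
    push_cast
    rw [Finset.mul_sum]
  · intro j hj
    exact Finset.prod_eq_zero hj (sub_self _)
  · dsimp only
    rw [norm_prod]
    have hc0 : 0 ≤ 2 * δ / Real.pi := by positivity
    have hc1 : 2 * δ / Real.pi ≤ 1 := by
      rw [div_le_one hpi]; linarith [Real.pi_gt_three]
    calc (2 * δ / Real.pi * Real.exp (-2)) ^ L
        = (2 * δ / Real.pi) ^ L * Real.exp (-(2 * L)) := by
          rw [mul_pow, ← Real.exp_nat_mul]; ring_nf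
      _ ≤ (2 * δ / Real.pi) ^ J.card * ∏ j ∈ J, min 1 (|(k : ℝ) - j| / L) :=
          mul_le_mul (pow_le_pow_of_le_one hc0 hc1 hJ) (exp_neg_le_prod_dist J k hk L hL)
            (Real.exp_pos _).le (by positivity)
      _ = ∏ j ∈ J, (2 * δ / Real.pi * min 1 (|(k : ℝ) - j| / L)) := by
          rw [Finset.prod_mul_distrib, Finset.prod_const]
      _ ≤ _ := by
          refine Finset.prod_le_prod (fun j _ => by positivity) fun j hj => ?_
          exact le_norm_exp_pow_sub hδ hδ1 k j L (by rintro rfl; exact hk hj) hL _ rfl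

/-! ### Bounding a single coefficient -/

lemma choose_le_five_pow (n m : ℕ) : (n.choose m : ℝ) ≤ 5 ^ m * (6 / 5 : ℝ) ^ n := by
  rcases lt_or_ge n m with h | h
  · rw [Nat.choose_eq_zero_of_lt h, Nat.cast_zero]; positivity
  · have h1 := Finset.single_le_sum (f := fun i => (1 / 5 : ℝ) ^ i * 1 ^ (n - i) * (n.choose i))
      (s := Finset.range (n + 1)) (fun i _ => by positivity)
      (Finset.mem_range.2 (Nat.lt_succ_of_le h))
    rw [← add_pow] at h1
    simp only [one_pow, mul_one] at h1
    norm_num at h1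
    -- `h1` is one term of the binomial expansion of `(1 / 5 + 1) ^ n`.
    calc (n.choose m : ℝ) = 5 ^ m * ((1 / 5) ^ m * n.choose m) := by
          rw [← mul_assoc, ← mul_pow]; norm_num
      _ ≤ _ := by gcongr

lemma two_pow_le_choose_half (k : ℕ) : (2 : ℝ) ^ k ≤ (k + 1) * k.choose (k / 2) := by
  have h : 2 ^ k ≤ (k + 1) * k.choose (k / 2) := by
    rw [← Nat.sum_range_choose]
    calc _ ≤ ∑ _m ∈ Finset.range (k + 1), k.choose (k / 2) :=
          Finset.sum_le_sum fun i _ => Nat.choose_le_middle _ _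
      _ = _ := by simp
  exact_mod_cast h

/-- The central estimate. The hypothesis `hF` says that the `m`-th derivatives of `∑ b n z ^ n`,
normalised by `z ^ m / m!`, are at most `M * q ^ m` on the arc `{e ^ (iθ) / 2 : 0 ≤ θ ≤ δ}`.
Applying the operator of `exists_annihilator` to `∑ n, n.choose m * b n * z ^ n` on this arc
removes every frequency below `10 * m` except `k`, and the frequencies beyond `10 * m` contribute
a geometric tail. As `m = k / 2`, the weight `k.choose m / 2 ^ k` is at least `1 / (k + 1)`, so the
surviving term controls `b k`. -/
lemma norm_coeff_le_s13 {δ A M q : ℝ} (hδ : 0 < δ) (hδ1 : δ ≤ 1) (hq : 1 / 2 ≤ q)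
    (hM : 0 ≤ M) (b : ℕ → ℂ) (hb : ∀ n, ‖b n‖ ≤ A * (5 / 4) ^ n) (k m L : ℕ) (hm : m = k / 2)
    (hL : 0 < L)
    (hF : ∀ θ : ℝ, 0 ≤ θ → θ ≤ δ → ∃ v : ℂ, ‖v‖ ≤ M * q ^ m ∧
      Tendsto (fun N => ∑ n ∈ Finset.range N,
        (n.choose m : ℂ) * b n * (Complex.exp (Complex.I * θ) / 2) ^ n) atTop (nhds v))
    (J : Finset ℕ) (hkJ : k ∉ J) (hJL : J.card ≤ L)
    (hJ : ∀ n, m ≤ n → n < 10 * m → n ≠ k → n ∉ J → b n = 0) :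
    ‖b k‖ ≤ (k + 1) * (M + 4 * A) * q ^ m * (Real.pi * Real.exp 2 / δ) ^ L := by
  obtain ⟨P, w, τ, hw, hP, hP0, hPk⟩ := exists_annihilator hδ hδ1 J k hkJ L hL hJL
  have hA : 0 ≤ A := by simpa using (norm_nonneg _).trans (hb 0)
  have hq0 : 0 < q := by linarith
  have hpi := Real.pi_pos
  choose! v hv hvt using hF
  set c : ℕ → ℂ := fun n => (n.choose m : ℂ) * b n * (1 / 2) ^ n with hc
  set V : ℂ := ∑ t ∈ J.powerset, w t * v (τ t) with hV
  have hVn : ‖V‖ ≤ 2 ^ J.card * (M * q ^ m) := by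
    calc ‖V‖ ≤ ∑ t ∈ J.powerset, ‖w t * v (τ t)‖ := norm_sum_le _ _
      _ ≤ ∑ _t ∈ J.powerset, M * q ^ m := by
          refine Finset.sum_le_sum fun t ht => ?_
          obtain ⟨h1, h2, h3⟩ := hw t ht
          rw [norm_mul, h1, one_mul]
          exact hv _ h2 h3
      _ = _ := by simp
  have hPn : ∀ n, ‖P n‖ ≤ 2 ^ J.card := by
    intro n
    rw [hP]
    calc _ ≤ ∑ t ∈ J.powerset, ‖w t * Complex.exp (Complex.I * τ t) ^ n‖ := norm_sum_le _ _
      _ ≤ ∑ _t ∈ J.powerset, (1 : ℝ) := by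
          refine Finset.sum_le_sum fun t ht => ?_
          rw [norm_mul, (hw t ht).1, norm_pow, Complex.norm_exp_I_mul_ofReal]
          simp
      _ = _ := by simp
  have hlim : Tendsto (fun N => ∑ n ∈ Finset.range N, c n * P n) atTop (nhds V) := by
    have h1 : Tendsto (fun N => ∑ t ∈ J.powerset, w t * ∑ n ∈ Finset.range N,
        (n.choose m : ℂ) * b n * (Complex.exp (Complex.I * τ t) / 2) ^ n) atTop (nhds V) :=
      tendsto_finsetSum _ fun t ht =>
        (hvt _ (hw t ht).2.1 (hw t ht).2.2).const_mul _
    refine h1.congr fun N => ?_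
    simp_rw [hP, Finset.mul_sum]
    rw [Finset.sum_comm]
    refine Finset.sum_congr rfl fun n _ => Finset.sum_congr rfl fun t _ => ?_
    simp only [hc]
    rw [div_pow, div_pow, one_pow]
    ring
  -- `(6 / 5) * (5 / 4) * (1 / 2) = 3 / 4`: the weighted coefficients decay geometrically.
  have hck : ∀ n, ‖c n‖ ≤ A * 5 ^ m * (3 / 4) ^ n := by
    intro n
    rw [hc, norm_mul, norm_mul, norm_pow, Complex.norm_natCast]
    calc _ ≤ (5 ^ m * (6 / 5 : ℝ) ^ n) * (A * (5 / 4) ^ n) * (1 / 2) ^ n := by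
          gcongr
          · exact choose_le_five_pow n m
          · exact hb n
          · simp
      _ = A * 5 ^ m * ((6 / 5) * (5 / 4) * (1 / 2)) ^ n := by rw [mul_pow, mul_pow]; ring
      _ = _ := by norm_num
  have htail : ∀ N, k < N → ‖(∑ n ∈ Finset.range N, c n * P n) - c k * P k‖
      ≤ 2 ^ J.card * (4 * A * q ^ m) := by
    intro N hN
    rw [← Finset.sum_erase_eq_sub (Finset.mem_range.2 hN)]
    have h1 : ∑ n ∈ (Finset.range N).erase k, c n * P n
        = ∑ n ∈ ((Finset.range N).erase k).filter (fun n => 10 * m ≤ n), c n * P n := by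
      symm
      refine Finset.sum_filter_of_ne fun n hn hne => ?_
      by_contra! hlt
      apply hne
      rcases lt_or_ge n m with h | h
      · simp [hc, Nat.choose_eq_zero_of_lt h]
      by_cases hnJ : n ∈ J
      · rw [hP0 n hnJ, mul_zero]
      · simp [hc, hJ n h hlt (Finset.ne_of_mem_erase hn) hnJ]
    rw [h1]
    calc _ ≤ ∑ n ∈ ((Finset.range N).erase k).filter (fun n => 10 * m ≤ n), ‖c n * P n‖ :=
          norm_sum_le _ _
      _ ≤ ∑ n ∈ Finset.Ico (10 * m) N, ‖c n * P n‖ := by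
          refine Finset.sum_le_sum_of_subset_of_nonneg ?_ fun _ _ _ => norm_nonneg _
          intro n hn
          simp at hn ⊢
          omega
      _ ≤ ∑ n ∈ Finset.Ico (10 * m) N, (A * 5 ^ m * 2 ^ J.card) * (3 / 4) ^ n := by
          refine Finset.sum_le_sum fun n _ => ?_
          rw [norm_mul]
          calc _ ≤ (A * 5 ^ m * (3 / 4) ^ n) * 2 ^ J.card :=
                mul_le_mul (hck n) (hPn n) (norm_nonneg _) (by positivity)
            _ = _ := by ring
      _ ≤ (A * 5 ^ m * 2 ^ J.card) * ((3 / 4) ^ (10 * m) / (1 - 3 / 4)) := by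
          rw [← Finset.mul_sum]
          gcongr
          exact geom_sum_Ico_le_of_lt_one (by norm_num) (by norm_num)
      _ = 2 ^ J.card * (4 * A * (5 * (3 / 4) ^ 10) ^ m) := by
          rw [mul_pow, pow_mul]; ring
      -- The cutoff `10 * m` is large enough for `5 * (3 / 4) ^ 10 ≤ 1 / 2 ≤ q`.
      _ ≤ 2 ^ J.card * (4 * A * q ^ m) := by
          gcongr
          exact le_trans (by norm_num) hq
  have h2 : ‖V - c k * P k‖ ≤ 2 ^ J.card * (4 * A * q ^ m) :=
    le_of_tendsto (hlim.sub_const _).norm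
      ((eventually_gt_atTop k).mono htail)
  have h3 : ‖c k‖ * ‖P k‖ ≤ 2 ^ L * ((M + 4 * A) * q ^ m) := by
    have h4 : ‖c k * P k‖ ≤ ‖V‖ + ‖V - c k * P k‖ := by
      have := norm_sub_le V (V - c k * P k)
      simpa using this
    rw [← norm_mul]
    calc _ ≤ 2 ^ J.card * ((M + 4 * A) * q ^ m) := by linarith
      _ ≤ _ := by
        gcongr
        norm_num
  have h5 : ‖b k‖ ≤ (k + 1) * ‖c k‖ := by
    have h6 := two_pow_le_choose_half k
    rw [← hm] at h6
    rw [hc, norm_mul, norm_mul, norm_pow, Complex.norm_natCast]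
    have h7 : ‖(1 / 2 : ℂ)‖ = 1 / 2 := by simp
    rw [h7]
    calc ‖b k‖ = 2 ^ k * ‖b k‖ * (1 / 2) ^ k := by
          rw [mul_right_comm, ← mul_pow]; norm_num
      _ ≤ ((k + 1) * k.choose m) * ‖b k‖ * (1 / 2) ^ k := by gcongr
      _ = _ := by ring
  set G := 2 * δ / Real.pi * Real.exp (-2) with hG
  have hG0 : 0 < G := by positivity
  have h8 : ‖c k‖ ≤ 2 ^ L * ((M + 4 * A) * q ^ m) / G ^ L := by
    rw [le_div_iff₀ (by positivity)]
    exact (mul_le_mul_of_nonneg_left hPk (norm_nonneg _)).trans h3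
  calc ‖b k‖ ≤ (k + 1) * (2 ^ L * ((M + 4 * A) * q ^ m) / G ^ L) := by
        refine h5.trans ?_
        gcongr
    _ = (k + 1) * (M + 4 * A) * q ^ m * (2 / G) ^ L := by rw [div_pow]; ring
    _ = _ := by
        congr 2
        rw [hG, Real.exp_neg]
        field_simp

/-! ### Derivatives near the point of continuation -/

/-- Termwise differentiation of the power series, normalised by `c ^ m / m!`. -/
lemma tendsto_sum_choose_mul {A : ℝ} (b : ℕ → ℂ) (hb : ∀ n, ‖b n‖ ≤ A * (5 / 4) ^ n) (F : ℂ → ℂ)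
    (hF : Set.EqOn F (fun z => ∑' n, b n * z ^ n) (Metric.ball 0 (7 / 10))) (m : ℕ) (c : ℂ)
    (hc : c ∈ Metric.ball (0 : ℂ) (7 / 10)) :
    Tendsto (fun N => ∑ n ∈ Finset.range N, (n.choose m : ℂ) * b n * c ^ n) atTop
      (nhds (c ^ m / m.factorial * iteratedDeriv m F c)) := by
  have hA : 0 ≤ A := by simpa using (norm_nonneg _).trans (hb 0)
  have h0 : TendstoLocallyUniformlyOn (fun N z => ∑ n ∈ Finset.range N, b n * z ^ n) F atTop
      (Metric.ball 0 (7 / 10)) := by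
    have hs : Summable (fun n : ℕ => A * (7 / 8 : ℝ) ^ n) :=
      (summable_geometric_of_lt_one (by norm_num) (by norm_num)).mul_left _
    have := tendstoUniformlyOn_tsum_nat (f := fun n (z : ℂ) => b n * z ^ n) hs
      (s := Metric.ball 0 (7 / 10)) (by
        intro n z hz
        rw [mem_ball_zero_iff] at hz
        rw [norm_mul, norm_pow]
        calc _ ≤ (A * (5 / 4) ^ n) * (7 / 10) ^ n := by
              gcongr
              exact hb n
          _ = A * ((5 / 4) * (7 / 10)) ^ n := by rw [mul_pow]; ring
          _ = _ := by norm_num)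
    exact (this.congr_right fun z hz => (hF hz).symm).tendstoLocallyUniformlyOn
  have h1 : ∀ m : ℕ, TendstoLocallyUniformlyOn
      (fun N => iteratedDeriv m (fun z : ℂ => ∑ n ∈ Finset.range N, b n * z ^ n))
      (iteratedDeriv m F) atTop (Metric.ball 0 (7 / 10)) := by
    intro m
    induction m with
    | zero => simpa using h0
    | succ m ih =>
      have := ih.deriv (Eventually.of_forall fun N => ?_) Metric.isOpen_ball
      · simp only [iteratedDeriv_succ]
        exact this
      · have hcd : ContDiff ℂ ⊤ (fun z : ℂ => ∑ n ∈ Finset.range N, b n * z ^ n) := by fun_prop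
        exact (hcd.differentiable_iteratedDeriv m (by exact_mod_cast WithTop.coe_lt_top _)).differentiableOn
  have h2 := ((h1 m).tendsto_at hc).const_mul (c ^ m / m.factorial)
  refine h2.congr fun N => ?_
  rw [iteratedDeriv_fun_sum (fun n _ => by fun_prop), Finset.mul_sum]
  refine Finset.sum_congr rfl fun n _ => ?_
  rw [iteratedDeriv_const_mul_field, iteratedDeriv_pow, Nat.descFactorial_eq_factorial_mul_choose]
  rcases lt_or_ge n m with h | h
  · simp [Nat.choose_eq_zero_of_lt h]
  · have : (m.factorial : ℂ) ≠ 0 := by exact_mod_cast m.factorial_ne_zero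
    rw [show c ^ n = c ^ m * c ^ (n - m) by rw [← pow_add]; congr 1; omega]
    push_cast
    field_simp

lemma closedBall_half_subset {V : Set ℂ} (hV1 : Metric.ball 0 1 ⊆ V) (h1 : (1 : ℂ) ∈ V) :
    Metric.closedBall (1 / 2 : ℂ) (1 / 2) ⊆ V := by
  intro z hz
  rw [mem_closedBall_iff_norm] at hz
  by_cases h : ‖z‖ < 1
  · exact hV1 (mem_ball_zero_iff.2 h)
  · have e1 : ‖z - 1 / 2‖ ^ 2 ≤ (1 / 2) ^ 2 := by gcongr
    have e2 : 1 ≤ ‖z‖ ^ 2 := by nlinarith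
    rw [← Complex.normSq_eq_norm_sq, Complex.normSq_apply] at e1 e2
    norm_num at e1
    have e3 : z.im = 0 := by nlinarith [sq_nonneg (z.re - 1), sq_nonneg z.im]
    have e4 : z.re = 1 := by nlinarith [sq_nonneg (z.re - 1), sq_nonneg z.im]
    have : z = 1 := Complex.ext (by simpa using e4) (by simpa using e3)
    rwa [this]

/-- Cauchy's estimate on an arc. The closed disk with centre and radius `1 / 2` touches the unit
circle only at `1`, so it has a closed neighbourhood inside `V`. Hence, for `θ` small, `F` is
bounded on disks about `e ^ (iθ) / 2` of a fixed radius `ρ > 1 / 2`, which makes its normalised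
derivatives there decay like `(1 / (2 * ρ)) ^ m`. -/
lemma exists_local_bound {A : ℝ} (b : ℕ → ℂ) (hb : ∀ n, ‖b n‖ ≤ A * (5 / 4) ^ n) (F : ℂ → ℂ)
    (V : Set ℂ) (hVo : IsOpen V) (hV1 : Metric.ball 0 1 ⊆ V) (h1 : (1 : ℂ) ∈ V)
    (hFV : DifferentiableOn ℂ F V)
    (hF : Set.EqOn F (fun z => ∑' n, b n * z ^ n) (Metric.ball 0 (7 / 10))) :
    ∃ δ M q : ℝ, 0 < δ ∧ δ ≤ 1 ∧ 0 ≤ M ∧ 1 / 2 ≤ q ∧ q < 1 ∧ ∀ (m : ℕ) (θ : ℝ), 0 ≤ θ → θ ≤ δ →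
      ∃ v : ℂ, ‖v‖ ≤ M * q ^ m ∧
      Tendsto (fun N => ∑ n ∈ Finset.range N,
        (n.choose m : ℂ) * b n * (Complex.exp (Complex.I * θ) / 2) ^ n) atTop (nhds v) := by
  obtain ⟨κ, hκ, hκV⟩ := (isCompact_closedBall (1 / 2 : ℂ) (1 / 2)).exists_cthickening_subset_open
    hVo (closedBall_half_subset hV1 h1)
  rw [cthickening_closedBall hκ.le (by norm_num)] at hκV
  obtain ⟨M, hM⟩ := (isCompact_closedBall (1 / 2 : ℂ) (κ + 1 / 2)).exists_bound_of_continuousOn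
    (hFV.continuousOn.mono hκV)
  have hM0 : 0 ≤ M := (norm_nonneg _).trans (hM (1 / 2) (Metric.mem_closedBall_self (by positivity)))
  set ρ : ℝ := 1 / 2 + κ / 2 with hρ
  have hρ0 : 0 < ρ := by positivity
  refine ⟨min κ 1, M, max (1 / (2 * ρ)) (1 / 2), by positivity, min_le_right _ _, hM0,
    le_max_right _ _, max_lt ?_ (by norm_num), ?_⟩
  · rw [div_lt_one (by positivity)]; linarith
  intro m θ hθ0 hθ
  set c : ℂ := Complex.exp (Complex.I * θ) / 2 with hc
  have hcn : ‖c‖ = 1 / 2 := by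
    rw [hc, norm_div, Complex.norm_exp_I_mul_ofReal]; simp
  refine ⟨_, ?_, tendsto_sum_choose_mul b hb F hF m c (by
    rw [mem_ball_zero_iff, hcn]; norm_num)⟩
  have hsub : Metric.closedBall c ρ ⊆ Metric.closedBall (1 / 2 : ℂ) (κ + 1 / 2) := by
    apply Metric.closedBall_subset_closedBall'
    have h2 : dist c (1 / 2) ≤ κ / 2 := by
      rw [dist_eq_norm, hc, ← sub_div, norm_div]
      have h3 := Real.norm_exp_I_mul_ofReal_sub_one_le (x := θ)
      rw [Real.norm_of_nonneg hθ0] at h3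
      have h4 : θ ≤ κ := hθ.trans (min_le_left _ _)
      simp only [Complex.norm_ofNat]
      linarith
    linarith
  have hd : DiffContOnCl ℂ F (Metric.ball c ρ) := by
    apply DifferentiableOn.diffContOnCl
    rw [closure_ball _ hρ0.ne']
    exact hFV.mono (hsub.trans hκV)
  have h5 := Complex.norm_iteratedDeriv_le_of_forall_mem_sphere_norm_le m hρ0 hd
    (fun z hz => hM z (hsub (Metric.sphere_subset_closedBall hz)))
  have hfac : (0 : ℝ) < m.factorial := by exact_mod_cast m.factorial_pos
  rw [norm_mul, norm_div, norm_pow, hcn, Complex.norm_natCast]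
  calc _ ≤ (1 / 2) ^ m / m.factorial * (m.factorial * M / ρ ^ m) := by gcongr
    _ = M * (1 / (2 * ρ)) ^ m := by
      rw [one_div_pow, one_div_pow, mul_pow]
      field_simp
    _ ≤ _ := by
      gcongr
      exact le_max_left _ _

/-! ### Density zero and the radius of convergence -/

lemma HasZeroDensity.eventually_le {S : Set ℕ} (hS : HasZeroDensity S) {η : ℝ} (hη : 0 < η) :
    ∀ᶠ n : ℕ in atTop, ((S ∩ Set.Icc 1 n).ncard : ℝ) ≤ η * n := by
  have hb : IsBoundedUnder (· ≤ ·) atTop (fun n : ℕ => ((S ∩ Set.Icc 1 n).ncard : ℝ) / n) := by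
    refine isBoundedUnder_of ⟨1, fun n => div_le_one_of_le₀ ?_ (Nat.cast_nonneg _)⟩
    have h := Set.ncard_le_ncard (Set.inter_subset_right (s := S)) (Set.finite_Icc 1 n)
    rw [← Finset.coe_Icc, Set.ncard_coe_finset, Nat.card_Icc, Nat.add_sub_cancel,
      Finset.coe_Icc] at h
    exact_mod_cast h
  have h := eventually_lt_of_limsup_lt (b := η) (lt_of_eq_of_lt hS hη) hb
  filter_upwards [h, eventually_gt_atTop 0] with n hn hn0
  have : (0 : ℝ) < n := by exact_mod_cast hn0
  exact ((div_lt_iff₀ this).1 hn).le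

/-- Fabry's gap theorem, normalised: a series supported on a set of density zero that continues
analytically past the point `1` of the unit circle has radius of convergence greater than `1`. The
assumption on `b` holds as soon as the radius of convergence exceeds `4 / 5`. -/
lemma eventually_coeff_decay {A : ℝ} (b : ℕ → ℂ) (hb : ∀ n, ‖b n‖ ≤ A * (5 / 4) ^ n) (S : Set ℕ)
    (hS : HasZeroDensity S) (hbS : ∀ n, n ∉ S → b n = 0) (F : ℂ → ℂ)
    (V : Set ℂ) (hVo : IsOpen V) (hV1 : Metric.ball 0 1 ⊆ V) (h1 : (1 : ℂ) ∈ V)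
    (hFV : DifferentiableOn ℂ F V)
    (hF : Set.EqOn F (fun z => ∑' n, b n * z ^ n) (Metric.ball 0 (7 / 10))) :
    ∃ s B : ℝ, 0 < s ∧ s < 1 ∧ ∀ᶠ k : ℕ in atTop, ‖b k‖ ≤ B * (k + 1) * s ^ k := by
  classical
  obtain ⟨δ, M, q, hδ, hδ1, hM, hq, hq1, hloc⟩ :=
    exists_local_bound b hb F V hVo hV1 h1 hFV hF
  have hA : 0 ≤ A := by simpa using (norm_nonneg _).trans (hb 0)
  have hq0 : 0 < q := by linarith
  -- The final decay rate is `s = q ^ (1 / 4)`: one factor `2` in the exponent is lost by `m = k / 2`,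
  -- another by absorbing the constant `E ^ (j + 1)` of `norm_coeff_le` into half of `q ^ m`.
  set s := √(√q) with hs
  have hs0 : 0 < s := Real.sqrt_pos.2 (Real.sqrt_pos.2 hq0)
  have hs1 : s < 1 := by
    rw [hs, Real.sqrt_lt' one_pos, one_pow, Real.sqrt_lt' one_pos, one_pow]
    exact hq1
  have hs4 : s ^ 4 = q := by
    rw [show 4 = 2 * 2 from rfl, pow_mul, hs, Real.sq_sqrt (Real.sqrt_nonneg _),
      Real.sq_sqrt hq0.le]
  set E := Real.pi * Real.exp 2 / δ with hE
  have hE0 : 0 < E := by have := Real.pi_pos; positivity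
  obtain ⟨T', hT'⟩ := exists_pow_lt_of_lt_one (inv_pos.2 hE0) hq1
  set T := T' + 1 with hT
  have hET : E * q ^ T ≤ 1 := by
    calc E * q ^ T ≤ E * q ^ T' := by
          gcongr ?_ * ?_
          exact pow_le_pow_of_le_one hq0.le hq1.le (Nat.le_succ _)
      _ ≤ E * E⁻¹ := by gcongr
      _ = 1 := mul_inv_cancel₀ hE0.ne'
  have hT0 : (0 : ℝ) < T := by rw [hT]; positivity
  have htend : Tendsto (fun k : ℕ => 10 * (k / 2)) atTop atTop := by
    refine tendsto_atTop.2 fun N => ?_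
    filter_upwards [eventually_ge_atTop (2 * N)] with k hk
    omega
  refine ⟨s, (M + 4 * A) * E / s, hs0, hs1, ?_⟩
  filter_upwards [htend.eventually (hS.eventually_le (η := 1 / (20 * T)) (by positivity)),
    eventually_ge_atTop 2] with k hk hk2
  -- The density hypothesis bounds the number of frequencies below `10 * m` by `j`, and `E ^ j` is
  -- compensated by `q ^ (T * j)`, where `T * j ≤ m / 2`.
  set m := k / 2 with hm
  set j := m / (2 * T) with hj
  set J : Finset ℕ := ((Finset.Icc 1 (10 * m)).filter (· ∈ S)).erase k with hJ
  have hcard : J.card ≤ j + 1 := by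
    have e1 : S ∩ Set.Icc 1 (10 * m) = ((Finset.Icc 1 (10 * m)).filter (· ∈ S) : Finset ℕ) := by
      ext x
      simp
      tauto
    rw [e1, Set.ncard_coe_finset] at hk
    have e2 : J.card ≤ ((Finset.Icc 1 (10 * m)).filter (· ∈ S)).card := Finset.card_erase_le
    refine e2.trans (le_trans ?_ (Nat.le_succ _))
    rw [hj, Nat.le_div_iff_mul_le (by omega)]
    have e3 : (((Finset.Icc 1 (10 * m)).filter (· ∈ S)).card : ℝ) * (2 * T) ≤ m := by
      calc _ ≤ (1 / (20 * T) * (10 * m : ℕ) : ℝ) * (2 * T) := by gcongr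
        _ = m := by push_cast; field_simp; ring
    exact_mod_cast e3
  have h2 := norm_coeff_le_s13 hδ hδ1 hq hM b hb k m (j + 1) hm (Nat.succ_pos _) (hloc m) J
    (Finset.notMem_erase _ _) hcard (by
      intro n hn1 hn2 hnk hnJ
      apply hbS
      intro hnS
      apply hnJ
      rw [hJ, Finset.mem_erase, Finset.mem_filter, Finset.mem_Icc]
      exact ⟨hnk, ⟨by omega, hn2.le⟩, hnS⟩)
  have hTj : 2 * (T * j) ≤ m := by
    have := Nat.mul_div_le m (2 * T)
    rw [← hj] at this
    linarith
  set u := m - T * j with hu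
  have hmu : m = T * j + u := by omega
  have h3 : q ^ m * E ^ (j + 1) ≤ E / s * s ^ k := by
    have h4 : q ^ m * E ^ (j + 1) = E * (E * q ^ T) ^ j * q ^ u := by
      rw [hmu, pow_add, pow_mul, mul_pow]
      ring
    rw [h4]
    have h5 : s * q ^ u ≤ s ^ k := by
      rw [← hs4, ← pow_mul, ← pow_succ']
      exact pow_le_pow_of_le_one hs0.le hs1.le (by omega)
    calc E * (E * q ^ T) ^ j * q ^ u ≤ E * 1 * q ^ u := by
          gcongr
          exact pow_le_one₀ (by positivity) hET
      _ = E / s * (s * q ^ u) := by field_simp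
      _ ≤ _ := by gcongr
  calc ‖b k‖ ≤ (k + 1) * (M + 4 * A) * (q ^ m * E ^ (j + 1)) := by rw [← mul_assoc]; exact h2
    _ ≤ (k + 1) * (M + 4 * A) * (E / s * s ^ k) := by gcongr
    _ = _ := by ring

lemma exists_bound_of_lt_seriesRadius {a : ℕ → ℂ} {x : ℝ} (hx : 0 ≤ x)
    (h : ENNReal.ofReal x < seriesRadius a) :
    ∃ ρ C : ℝ, x < ρ ∧ 0 ≤ C ∧ ∀ n, ‖a n‖ * ρ ^ n ≤ C := by
  unfold seriesRadius at h
  simp only [lt_iSup_iff] at h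
  obtain ⟨ρ, ⟨C, hC⟩, hρ⟩ := h
  refine ⟨ρ, C, ?_, ?_, hC⟩
  · rw [← ENNReal.ofReal_coe_nnreal] at hρ
    exact (ENNReal.ofReal_lt_ofReal_iff_of_nonneg hx).1 hρ
  · exact (by positivity : 0 ≤ ‖a 0‖ * (ρ : ℝ) ^ 0).trans (hC 0)

lemma le_of_seriesRadius_le {a : ℕ → ℂ} {x r : ℝ} (hx : 0 ≤ x) (hr : 0 ≤ r)
    (h : seriesRadius a = ENNReal.ofReal r) (hb : ∀ᶠ n in atTop, ‖a n‖ * x ^ n ≤ 1) : x ≤ r := by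
  have hbdd : BddAbove (Set.range fun n => ‖a n‖ * x ^ n) :=
    (isBoundedUnder_of_eventually_le hb).bddAbove_range
  obtain ⟨C, hC⟩ := hbdd
  rw [← ENNReal.ofReal_le_ofReal_iff hr, ← h]
  exact le_iSup₂_of_le (f := fun (r : NNReal) (_ : ∃ C : ℝ, ∀ n, ‖a n‖ * (r : ℝ) ^ n ≤ C) =>
    (r : ENNReal)) ⟨x, hx⟩ ⟨C, fun n => hC ⟨n, rfl⟩⟩
    (by rw [ENNReal.ofReal, Real.toNNReal_of_nonneg hx]; exact le_rfl)

/-- **Fabry gap argument.** Let `S ⊆ ℕ` have zero density and let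
`f = ∑ aₙ zⁿ` have radius of convergence `r ∈ (0, ∞)`. If `f = ∑_{n ∈ S} aₙ zⁿ + g`
where `g` has radius of convergence strictly greater than `r` (equivalently, the series
with the coefficients of `f` outside `S` has radius `> r`), then `f` admits the circle
of radius `r` as a natural boundary. -/
theorem fabry_gap_natural_boundary
    (a : ℕ → ℂ) (S : Set ℕ) (hS : HasZeroDensity S) (r : ℝ) (hr : 0 < r)
    (hrad : seriesRadius a = ENNReal.ofReal r)
    (hg : ENNReal.ofReal r < seriesRadius (Sᶜ.indicator a)) :
    HasNaturalBoundary a r := by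
  rintro ⟨z₀, U, g, hz₀, hUo, hzU, hgan, hgeq⟩
  obtain ⟨ρ, C, hρ, hC0, hC⟩ := exists_bound_of_lt_seriesRadius (a := a) (x := 4 / 5 * r)
    (by positivity) (by
      rw [hrad]
      exact (ENNReal.ofReal_lt_ofReal_iff hr).2 (by linarith))
  obtain ⟨R, C', hR, hC'0, hC'⟩ := exists_bound_of_lt_seriesRadius hr.le hg
  have hρ0 : 0 < ρ := by linarith [(by positivity : 0 < 4 / 5 * r)]
  have hR0 : 0 < R := by linarith
  set a' := Sᶜ.indicator a with ha'
  set b : ℕ → ℂ := fun n => S.indicator a n * z₀ ^ n with hbdef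
  have hbS : ∀ n, n ∉ S → b n = 0 := fun n hn => by simp [hbdef, hn]
  have hind : ∀ n, ‖S.indicator a n‖ ≤ ‖a n‖ := fun n => norm_indicator_le_norm_self _ _
  have hb : ∀ n, ‖b n‖ ≤ C * (5 / 4) ^ n := by
    intro n
    rw [hbdef, norm_mul, norm_pow, hz₀]
    calc _ ≤ ‖a n‖ * (5 / 4 * ρ) ^ n := by
          gcongr
          · exact hind n
          · linarith
      _ = ‖a n‖ * ρ ^ n * (5 / 4) ^ n := by rw [mul_pow]; ring
      _ ≤ _ := by gcongr; exact hC n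
  -- The part of the series off `S` converges beyond the circle, so it is harmless: it
  -- is analytic on the disk of radius `R'`, where `r < R' < R`.
  obtain ⟨R', hrR, hR'R⟩ := exists_between hR
  have hR'0 : 0 < R' := by linarith
  have hsum' : ∀ n, ∀ z ∈ Metric.ball (0 : ℂ) R', ‖a' n * z ^ n‖ ≤ C' * (R' / R) ^ n := by
    intro n z hz
    rw [mem_ball_zero_iff] at hz
    rw [norm_mul, norm_pow]
    calc _ ≤ ‖a' n‖ * R' ^ n := by gcongr
      _ = ‖a' n‖ * R ^ n * (R' / R) ^ n := by rw [div_pow]; field_simp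
      _ ≤ _ := by gcongr; exact hC' n
  have hu : Summable (fun n : ℕ => C' * (R' / R) ^ n) :=
    (summable_geometric_of_lt_one (by positivity)
      (by rwa [div_lt_one hR0])).mul_left _
  have hdiff' : DifferentiableOn ℂ (fun z => ∑' n, a' n * z ^ n) (Metric.ball 0 R') :=
    Complex.differentiableOn_tsum_of_summable_norm hu (fun n => by fun_prop)
      Metric.isOpen_ball hsum'
  set V : Set ℂ := (fun z => z₀ * z) ⁻¹' ((Metric.ball 0 r ∪ U) ∩ Metric.ball 0 R') with hV
  have hball : ∀ z : ℂ, ‖z‖ < 1 → z₀ * z ∈ Metric.ball (0 : ℂ) r := by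
    intro z hz
    rw [mem_ball_zero_iff, norm_mul, hz₀]
    exact mul_lt_of_lt_one_right hr hz
  have hrR' : Metric.ball (0 : ℂ) r ⊆ Metric.ball 0 R' :=
    Metric.ball_subset_ball hrR.le
  -- Rotate and rescale so that the point `z₀` becomes `1`, and subtract the part off `S`.
  obtain ⟨s, B, hs0, hs1, hdecay⟩ := eventually_coeff_decay b hb S hS hbS
    (fun z => g (z₀ * z) - ∑' n, a' n * (z₀ * z) ^ n) V
    (((Metric.isOpen_ball.union hUo).inter Metric.isOpen_ball).preimage (by fun_prop))
    (fun z hz => by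
      rw [mem_ball_zero_iff] at hz
      exact ⟨Or.inl (hball z hz), hrR' (hball z hz)⟩)
    (by
      refine ⟨Or.inr (by simpa using hzU), ?_⟩
      simpa [hz₀] using hrR)
    (by
      have hmul : DifferentiableOn ℂ (fun z : ℂ => z₀ * z) V := by fun_prop
      exact (hgan.differentiableOn.comp hmul fun z hz => hz.1).sub
        (hdiff'.comp hmul fun z hz => hz.2))
    (by
      intro z hz
      rw [mem_ball_zero_iff] at hz
      have hz1 : ‖z‖ < 1 := by linarith
      have hsa : Summable (fun n => a n * (z₀ * z) ^ n) := by
        refine Summable.of_norm_bounded (g := fun n => C * (7 / 8 : ℝ) ^ n)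
          ((summable_geometric_of_lt_one (by norm_num) (by norm_num)).mul_left _) fun n => ?_
        rw [norm_mul, norm_pow, norm_mul, hz₀]
        calc _ ≤ ‖a n‖ * (ρ * (7 / 8)) ^ n := by
              have : r * ‖z‖ ≤ r * (7 / 10) := by gcongr
              have : r * ‖z‖ ≤ ρ * (7 / 8) := by linarith
              gcongr
          _ = ‖a n‖ * ρ ^ n * (7 / 8) ^ n := by rw [mul_pow]; ring
          _ ≤ _ := by gcongr; exact hC n
      have hsa' : Summable (fun n => a' n * (z₀ * z) ^ n) :=
        Summable.of_norm_bounded hu fun n => hsum' n _ (hrR' (hball z hz1))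
      dsimp only
      rw [hgeq (hball z hz1), ← hsa.tsum_sub hsa']
      refine tsum_congr fun n => ?_
      by_cases hn : n ∈ S <;> simp [hbdef, ha', hn, mul_pow, mul_assoc])
  -- The radius `r * t` exceeds `r`, and `‖a n‖ * (r * t) ^ n` stays bounded: on `S` because
  -- `s * t < 1`, off `S` because `r * t ≤ R' < R`. This contradicts `hrad`.
  set t := min (R' / r) (2 / (1 + s)) with ht
  have ht1 : 1 < t := lt_min (by rwa [one_lt_div hr])
    (by rw [one_lt_div (by linarith)]; linarith)
  have ht0 : 0 < t := by linarith
  have hst : s * t < 1 := by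
    calc s * t ≤ s * (2 / (1 + s)) := by gcongr; exact min_le_right _ _
      _ = 2 * s / (1 + s) := by ring
      _ < 1 := by rw [div_lt_one (by linarith)]; linarith
  have htR : r * t ≤ R' := by
    calc r * t ≤ r * (R' / r) := by gcongr; exact min_le_left _ _
      _ = R' := by field_simp
  have hlim1 : Tendsto (fun n : ℕ => B * (n * (s * t) ^ n + (s * t) ^ n)) atTop (nhds 0) := by
    have h0 := tendsto_self_mul_const_pow_of_lt_one (by positivity : 0 ≤ s * t) hst
    have h1 := tendsto_pow_atTop_nhds_zero_of_lt_one (by positivity : 0 ≤ s * t) hst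
    simpa using (h0.add h1).const_mul B
  have hlim2 : Tendsto (fun n : ℕ => C' * (R' / R) ^ n) atTop (nhds 0) := hu.tendsto_atTop_zero
  have hfin : r * t ≤ r := by
    refine le_of_seriesRadius_le (by positivity) hr.le hrad ?_
    filter_upwards [hdecay, hlim1.eventually_le_const one_pos,
      hlim2.eventually_le_const one_pos] with n h1 h2 h3
    by_cases hn : n ∈ S
    · have h4 : ‖b n‖ = ‖a n‖ * r ^ n := by simp [hbdef, hn, hz₀]
      calc ‖a n‖ * (r * t) ^ n = ‖b n‖ * t ^ n := by rw [h4, mul_pow]; ring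
        _ ≤ (B * (n + 1) * s ^ n) * t ^ n := by gcongr
        _ = B * (n * (s * t) ^ n + (s * t) ^ n) := by rw [mul_pow]; ring
        _ ≤ 1 := h2
    · have h4 : a' n = a n := by simp [ha', hn]
      calc ‖a n‖ * (r * t) ^ n ≤ ‖a n‖ * R' ^ n := by gcongr
        _ = ‖a' n‖ * R ^ n * (R' / R) ^ n := by rw [h4, div_pow]; field_simp
        _ ≤ C' * (R' / R) ^ n := by gcongr; exact hC' n
        _ ≤ 1 := h3
  nlinarith
end
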